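/- arXiv:1211.1450 — 3 statements merged into one kernel-verified Lean document; each statement's English description precedes it below -/
import Mathlib

section
/- Let R₀ > 0 and let F(x,y) = Σ_{m,n≥0} a_{m,n} x^m y^n be given by a power series converging absolutely on the polydisc {(x,y) ∈ ℂ² : |x| < R₀, |y| < R₀}. Suppose there are positive integers k, l with a_{k,0} ≠ 0, a_{0,l} ≠ 0, and a_{m,n} = 0 whenever l·m + k·n < k·l (i.e. the Newton polygon of F consists of the single segment joining (k,0) and (0,l); by a classical lemma this holds whenever F is irreducible in the ring of convergent power series). Then for every real c with 0 < c < 1/max(k,l) there exists R ∈ (0, R₀] such that K_0(R) < ∞ and lim_{t→0} K_t(R) = K_0(R). -/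
open MeasureTheory
open scoped ENNReal

/-- The integral `K_t(R)` of `|F|^{-2c}` over the fiber
`U_t = {(x,y) : xy = t, |x| < R, |y| < R}` of `π(x,y) = xy`, with respect to the
volume induced by the Euclidean metric.  For `t ≠ 0` it equals
`∫_{|t|/R < |x| < R} (1 + |t|²/|x|⁴)·|F(x,t/x)|^{-2c} dλ(x)`, and for `t = 0` it is
`∫_{0 < |x| < R} |F(x,0)|^{-2c} dλ(x) + ∫_{0 < |y| < R} |F(0,y)|^{-2c} dλ(y)`. -/
noncomputable def fiberIntegral (F : ℂ → ℂ → ℂ) (c R : ℝ) (t : ℂ) : ℝ≥0∞ :=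
  if t = 0 then
    (∫⁻ x in {x : ℂ | 0 < ‖x‖ ∧ ‖x‖ < R}, ENNReal.ofReal (‖F x 0‖ ^ (-(2 * c)))) +
      (∫⁻ y in {y : ℂ | 0 < ‖y‖ ∧ ‖y‖ < R}, ENNReal.ofReal (‖F 0 y‖ ^ (-(2 * c))))
  else
    ∫⁻ x in {x : ℂ | ‖t‖ / R < ‖x‖ ∧ ‖x‖ < R},
      ENNReal.ofReal ((1 + ‖t‖ ^ 2 / ‖x‖ ^ 4) * ‖F x (t / x)‖ ^ (-(2 * c)))

section


open Set Filter Topology Metric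

lemma cov_complex {s : Set ℂ} (hs : MeasurableSet s) {f f' : ℂ → ℂ}
    (hf' : ∀ x ∈ s, HasDerivAt f (f' x) x) (hf : InjOn f s) (g : ℂ → ℝ≥0∞) :
    ∫⁻ x in f '' s, g x = ∫⁻ x in s, ENNReal.ofReal (‖f' x‖ ^ 2) * g (f x) := by
  rw [lintegral_image_eq_lintegral_abs_det_fderiv_mul volume hs
    (f' := fun x => (ContinuousLinearMap.toSpanSingleton ℂ (f' x)).restrictScalars ℝ)
    (fun x hx => ((hf' x hx).hasFDerivAt.restrictScalars ℝ).hasFDerivWithinAt) hf]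
  refine lintegral_congr fun x => ?_
  congr 2
  have : ((ContinuousLinearMap.toSpanSingleton ℂ (f' x)).restrictScalars ℝ).det
      = ‖f' x‖ ^ 2 := by
    rw [ContinuousLinearMap.det]
    simp [LinearMap.det_restrictScalars, Algebra.norm_complex_apply, Complex.normSq_eq_norm_sq]
  rw [this, abs_of_nonneg (by positivity)]

lemma layer (c : ℝ) (hc : 0 < c) (g : ℕ) (hg : c * g < 1) (κ : ℝ) (hκ : 0 < κ)
    (V N : ℝ≥0∞) (hV : V ≠ ⊤) (hN : N ≠ ⊤) :
    ∃ M : ℝ≥0∞, M ≠ ⊤ ∧ ∀ (h : ℂ → ℂ) (B : Set ℂ), MeasurableSet B → volume B ≤ V →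
      (∀ s : ℝ, 0 < s → s ≤ 1 →
        volume (B ∩ {z | ‖h z‖ < κ * s ^ g}) ≤ N * ENNReal.ofReal (s ^ 2)) →
      ∫⁻ z in B, ENNReal.ofReal (‖h z‖ ^ (-(2 * c))) ≤ M := by
  set q : ℝ := (1 / 2 : ℝ) ^ g with hq
  have hq0 : 0 < q := by positivity
  have hq1 : q ≤ 1 := pow_le_one₀ (by norm_num) (by norm_num)
  set C : ℕ → ℝ := fun n => (κ * q ^ (n + 1)) ^ (-(2 * c)) with hC
  have hC0 : ∀ n, 0 ≤ C n := fun n => by positivity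
  have hsum : Summable fun n => C n * ((1 / 2 : ℝ) ^ n) ^ 2 := by
    have hr : q ^ (-(2 * c)) * (1 / 4) < 1 := by
      have : q ^ (-(2 * c)) = (2 : ℝ) ^ (2 * (c * g)) := by
        rw [hq, one_div, inv_pow, Real.inv_rpow (by positivity), Real.rpow_neg (by positivity),
          inv_inv, ← Real.rpow_natCast, ← Real.rpow_mul (by norm_num)]
        congr 1; ring
      rw [this]
      have : (2 : ℝ) ^ (2 * (c * g)) < 2 ^ (2 : ℝ) :=
        Real.rpow_lt_rpow_of_exponent_lt (by norm_num) (by linarith)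
      have h4 : (2 : ℝ) ^ (2 : ℝ) = 4 := by norm_num
      linarith
    have := (summable_geometric_of_lt_one (by positivity) hr).mul_left
      (κ ^ (-(2 * c)) * q ^ (-(2 * c)))
    refine this.congr fun n => ?_
    simp only [hC]
    rw [Real.mul_rpow hκ.le (by positivity), pow_succ, Real.mul_rpow (by positivity) hq0.le,
      ← Real.rpow_natCast q n, ← Real.rpow_mul hq0.le, mul_comm (n : ℝ), Real.rpow_mul hq0.le,
      Real.rpow_natCast, mul_pow, ← pow_mul, mul_comm n 2, pow_mul]
    norm_num
    ring
  refine ⟨ENNReal.ofReal (κ ^ (-(2 * c))) * V +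
    ∑' n, ENNReal.ofReal (C n * ((1 / 2 : ℝ) ^ n) ^ 2) * N, ?_, ?_⟩
  · refine ENNReal.add_ne_top.2 ⟨ENNReal.mul_ne_top ENNReal.ofReal_ne_top hV, ?_⟩
    rw [ENNReal.tsum_mul_right]
    refine ENNReal.mul_ne_top ?_ hN
    rw [← ENNReal.ofReal_tsum_of_nonneg (fun n => mul_nonneg (hC0 n) (by positivity)) hsum]
    exact ENNReal.ofReal_ne_top
  intro h B hB hBV hsub
  set E : ℕ → Set ℂ := fun n => toMeasurable volume (B ∩ {z | ‖h z‖ < κ * ((1 / 2 : ℝ) ^ n) ^ g})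
    with hE
  have hEm : ∀ n, MeasurableSet (E n) := fun n => measurableSet_toMeasurable _ _
  have key : ∀ z ∈ B, ENNReal.ofReal (‖h z‖ ^ (-(2 * c))) ≤ ENNReal.ofReal (κ ^ (-(2 * c))) +
      ∑' n, (E n).indicator (fun _ => ENNReal.ofReal (C n)) z := by
    intro z hz
    rcases eq_or_ne (h z) 0 with h0 | h0
    · rw [h0, norm_zero, Real.zero_rpow (by linarith)]; simp
    have hpos : 0 < ‖h z‖ := norm_pos_iff.2 h0
    by_cases hk : κ ≤ ‖h z‖
    · refine le_trans (ENNReal.ofReal_le_ofReal ?_) le_self_add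
      exact Real.rpow_le_rpow_of_nonpos hκ hk (by linarith)
    push Not at hk
    have hg0 : g ≠ 0 ∨ g = 0 := ne_or_eq g 0
    by_cases hex : ∃ n, κ * q ^ (n + 1) ≤ ‖h z‖
    · classical
      let n := Nat.find hex
      have hn : κ * q ^ (n + 1) ≤ ‖h z‖ := Nat.find_spec hex
      have hn' : ‖h z‖ < κ * q ^ n := by
        rcases Nat.eq_zero_or_pos n with h1 | h1
        · rw [h1]; simpa using hk
        · have := Nat.find_min hex (m := n - 1) (by omega)
          rw [Nat.sub_add_cancel h1] at this
          exact not_le.1 this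
      refine le_trans ?_ le_add_self
      refine le_trans ?_ (ENNReal.le_tsum n)
      have hmem : z ∈ E n := subset_toMeasurable _ _ ⟨hz, by
        show ‖h z‖ < κ * ((1 / 2 : ℝ) ^ n) ^ g
        rw [← pow_mul, mul_comm n g, pow_mul]; exact hn'⟩
      rw [indicator_of_mem hmem]
      exact ENNReal.ofReal_le_ofReal (Real.rpow_le_rpow_of_nonpos (by positivity) hn (by linarith))
    · push Not at hex
      have hmem : ∀ n, z ∈ E (n + 1) := fun n => subset_toMeasurable _ _ ⟨hz, by
        show ‖h z‖ < κ * ((1 / 2 : ℝ) ^ (n + 1)) ^ g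
        rw [← pow_mul, mul_comm (n + 1) g, pow_mul]; exact hex n⟩
      have hmem' : ∀ n, z ∈ E n := fun n => by
        refine subset_toMeasurable _ _ ⟨hz, ?_⟩
        show ‖h z‖ < κ * ((1 / 2 : ℝ) ^ n) ^ g
        rw [← pow_mul, mul_comm n g, pow_mul]
        rcases n with _ | n
        · simpa using hk
        · exact hex n
      have : ∑' n, (E n).indicator (fun _ => ENNReal.ofReal (C n)) z = ⊤ := by
        have hge : ∀ n, ENNReal.ofReal (κ ^ (-(2 * c))) ≤
            (E n).indicator (fun _ => ENNReal.ofReal (C n)) z := by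
          intro n
          rw [indicator_of_mem (hmem' n)]
          refine ENNReal.ofReal_le_ofReal (Real.rpow_le_rpow_of_nonpos (by positivity) ?_
            (by linarith))
          exact mul_le_of_le_one_right hκ.le (pow_le_one₀ hq0.le hq1)
        refine top_le_iff.1 (le_trans ?_ (ENNReal.tsum_le_tsum hge))
        rw [ENNReal.tsum_const_eq_top_of_ne_zero]
        simp; positivity
      rw [this]; simp
  calc ∫⁻ z in B, ENNReal.ofReal (‖h z‖ ^ (-(2 * c)))
      ≤ ∫⁻ z in B, (ENNReal.ofReal (κ ^ (-(2 * c))) +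
      ∑' n, (E n).indicator (fun _ => ENNReal.ofReal (C n)) z) := setLIntegral_mono' hB key
    _ = ENNReal.ofReal (κ ^ (-(2 * c))) * volume B +
        ∑' n, ∫⁻ z in B, (E n).indicator (fun _ => ENNReal.ofReal (C n)) z := by
        rw [lintegral_add_left measurable_const, setLIntegral_const, lintegral_tsum]
        exact fun n => (measurable_const.indicator (hEm n)).aemeasurable
    _ ≤ _ := by
        gcongr with n
        calc ∫⁻ z in B, (E n).indicator (fun _ => ENNReal.ofReal (C n)) z
            ≤ ∫⁻ z, (E n).indicator (fun _ => ENNReal.ofReal (C n)) z := setLIntegral_le_lintegral _ _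
          _ = ENNReal.ofReal (C n) * volume (E n) := lintegral_indicator_const (hEm n) _
          _ ≤ ENNReal.ofReal (C n) * (N * ENNReal.ofReal (((1 / 2 : ℝ) ^ n) ^ 2)) := by
              gcongr
              simp only [hE, measure_toMeasurable]
              exact hsub _ (by positivity) (pow_le_one₀ (by norm_num) (by norm_num))
          _ = _ := by
              rw [ENNReal.ofReal_mul (hC0 n)]; ring

lemma sep_or_cover (E : Set ℂ) (s : ℝ) (n : ℕ) :
    (∃ z : Fin (n + 1) → ℂ, (∀ i, z i ∈ E) ∧ ∀ i j, i ≠ j → s ≤ dist (z i) (z j)) ∨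
    volume E ≤ n * (ENNReal.ofReal s ^ 2 * NNReal.pi) := by
  induction n with
  | zero =>
    rcases E.eq_empty_or_nonempty with h | ⟨x, hx⟩
    · right; simp [h]
    · left; exact ⟨fun _ => x, fun _ => hx, fun i j hij => absurd (by omega) hij⟩
  | succ n ih =>
    rcases ih with ⟨z, hz, hs⟩ | h
    · by_cases hx : ∃ x ∈ E, ∀ i, s ≤ dist x (z i)
      · obtain ⟨x, hx, hxs⟩ := hx
        left
        refine ⟨Fin.cons x z, fun i => ?_, fun i j => ?_⟩
        · refine Fin.cases ?_ (fun i => ?_) i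
          · simpa using hx
          · simpa using hz i
        · refine Fin.cases ?_ (fun i => ?_) i <;> refine Fin.cases ?_ (fun j => ?_) j
          · simp
          · intro _; simpa using hxs j
          · intro _; simpa [dist_comm] using hxs i
          · intro hij; simpa using hs i j (fun h => hij (by rw [h]))
      · right
        push Not at hx
        have : E ⊆ ⋃ i, ball (z i) s := fun x hxE => by
          obtain ⟨i, hi⟩ := hx x hxE
          exact mem_iUnion.2 ⟨i, hi⟩
        refine (measure_mono this).trans ((measure_iUnion_le _).trans ?_)
        simp [Complex.volume_ball]
    · right
      refine h.trans ?_
      gcongr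
      simp

lemma sublevel (j g : ℕ) (hjg : j ≤ g) (δ : ℝ) (hδ : 0 < δ) (h : ℂ → ℂ) (B : Set ℂ)
    (hB : ∀ z : Fin (j + 1) → ℂ, (∀ i, z i ∈ B) → Function.Injective z →
      δ ≤ ‖∑ i, Lagrange.nodalWeight Finset.univ z i * h (z i)‖) (s : ℝ) (hs : 0 < s)
    (hs1 : s ≤ 1) :
    volume (B ∩ {z | ‖h z‖ < (δ / (j + 1)) * s ^ g}) ≤
      (j * NNReal.pi : ℝ≥0∞) * ENNReal.ofReal (s ^ 2) := by
  rcases sep_or_cover (B ∩ {z | ‖h z‖ < (δ / (j + 1)) * s ^ g}) s j with ⟨z, hz, hsep⟩ | h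
  · exfalso
    have hinj : Function.Injective z := by
      intro a b hab
      by_contra hne
      have := hsep a b hne
      rw [hab, dist_self] at this
      linarith
    have h1 := hB z (fun i => (hz i).1) hinj
    have hw : ∀ i, ‖Lagrange.nodalWeight Finset.univ z i‖ ≤ (s ^ j)⁻¹ := by
      intro i
      rw [Lagrange.nodalWeight, norm_prod]
      refine (Finset.prod_le_prod (g := fun _ => s⁻¹) (fun _ _ => norm_nonneg _) ?_).trans ?_
      · intro b hb
        rw [norm_inv]
        gcongr
        rw [← dist_eq_norm]
        exact hsep _ _ (Finset.ne_of_mem_erase hb).symm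
      · simp
    have h2 : ‖∑ i, Lagrange.nodalWeight Finset.univ z i * h (z i)‖ < δ := by
      refine (norm_sum_le _ _).trans_lt ?_
      have : ∀ i ∈ (Finset.univ : Finset (Fin (j + 1))),
          ‖Lagrange.nodalWeight Finset.univ z i * h (z i)‖ < δ / (j + 1) := by
        intro i _
        rw [norm_mul]
        calc _ ≤ (s ^ j)⁻¹ * ‖h (z i)‖ := by gcongr; exact hw i
          _ < (s ^ j)⁻¹ * ((δ / (j + 1)) * s ^ g) := by
            have := (hz i).2
            gcongr
            exact this
          _ ≤ (s ^ j)⁻¹ * ((δ / (j + 1)) * s ^ j) := by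
            gcongr _ * (_ * ?_)
            exact pow_le_pow_of_le_one hs.le hs1 hjg
          _ = _ := by field_simp
      refine (Finset.sum_lt_sum_of_nonempty Finset.univ_nonempty this).trans_le ?_
      simp
      field_simp
      exact le_rfl
    linarith
  · refine h.trans (le_of_eq ?_)
    rw [ENNReal.ofReal_pow hs.le]; ring

lemma divdiff_eq (j : ℕ) (z0 : ℂ) (r : ℝ) (h : ℂ → ℂ)
    (hd : DifferentiableOn ℂ h (closedBall z0 r)) (z : Fin (j + 1) → ℂ) (hz : ∀ i, z i ∈ ball z0 r)
    (hinj : Function.Injective z) :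
    (2 * Real.pi * Complex.I : ℂ) * ∑ i, Lagrange.nodalWeight Finset.univ z i * h (z i) =
      ∮ ζ in C(z0, r), h ζ * (∏ i, (ζ - z i))⁻¹ := by
  have hr : 0 < r := dist_nonneg.trans_lt (hz 0)
  have hne : ∀ ζ ∈ sphere z0 r, ∀ i, ζ - z i ≠ 0 := by
    intro ζ hζ i h0
    have := hz i
    rw [← sub_eq_zero.1 h0, mem_ball, mem_sphere.1 hζ] at this
    exact lt_irrefl _ this
  have h1 : ∀ i, (2 * Real.pi * Complex.I : ℂ) * (Lagrange.nodalWeight Finset.univ z i * h (z i)) =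
      ∮ ζ in C(z0, r), Lagrange.nodalWeight Finset.univ z i * ((ζ - z i)⁻¹ * h ζ) := by
    intro i
    have := hd.circleIntegral_sub_inv_smul (hz i)
    simp only [smul_eq_mul] at this
    rw [circleIntegral.integral_const_mul, this]; ring
  have hcont : ∀ i, ContinuousOn
      (fun ζ => Lagrange.nodalWeight Finset.univ z i * ((ζ - z i)⁻¹ * h ζ)) (sphere z0 r) := by
    intro i
    refine continuousOn_const.mul (ContinuousOn.mul ?_ (hd.continuousOn.mono sphere_subset_closedBall))
    exact (continuousOn_id.sub continuousOn_const).inv₀ fun ζ hζ => hne ζ hζ i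
  rw [Finset.mul_sum, Finset.sum_congr rfl fun i _ => h1 i, ← circleIntegral.integral_fun_sum]
  · refine circleIntegral.integral_congr hr.le fun ζ hζ => ?_
    have hx : ∀ i ∈ (Finset.univ : Finset (Fin (j + 1))), ζ ≠ z i :=
      fun i _ => sub_ne_zero.1 (hne ζ hζ i)
    have := Lagrange.eval_interpolate_not_at_node (s := Finset.univ) (v := z) (x := ζ) 1 hx
    rw [Lagrange.interpolate_one hinj.injOn Finset.univ_nonempty, Polynomial.eval_one,
      Lagrange.eval_nodal] at this
    have h2 : (∏ i, (ζ - z i))⁻¹ = ∑ i, Lagrange.nodalWeight Finset.univ z i * (ζ - z i)⁻¹ := by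
      refine inv_eq_of_mul_eq_one_right ?_
      simpa using this.symm
    show _ = h ζ * _
    rw [h2, Finset.mul_sum]
    exact Finset.sum_congr rfl fun i _ => by ring
  · intro i _
    exact (hcont i).circleIntegrable hr.le


noncomputable def TT (a : ℕ → ℕ → ℂ) (k l : ℕ) (u p q : ℂ) : ℂ :=
  ∑' mn : ℕ × ℕ, a mn.1 mn.2 * u ^ (l * mn.1 + k * mn.2 - k * l) * p ^ mn.1 * q ^ mn.2

lemma TT_bound (R₀ : ℝ) (hR₀ : 0 < R₀) (a : ℕ → ℕ → ℂ)
    (hconv : ∀ x y : ℂ, ‖x‖ < R₀ → ‖y‖ < R₀ →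
      Summable (fun mn : ℕ × ℕ => ‖a mn.1 mn.2‖ * ‖x‖ ^ mn.1 * ‖y‖ ^ mn.2))
    (k l : ℕ) (hk : 0 < k) (hl : 0 < l)
    (hNewton : ∀ m n : ℕ, l * m + k * n < k * l → a m n = 0) (P : ℝ) (hP : 0 < P) :
    ∃ u₀ : ℝ, 0 < u₀ ∧ u₀ ^ l * P < R₀ ∧ u₀ ^ k * P < R₀ ∧ ∃ w : ℕ × ℕ → ℝ, Summable w ∧
      ∀ (u p q : ℂ), ‖u‖ ≤ u₀ → ‖p‖ ≤ P → ‖q‖ ≤ P → ∀ mn : ℕ × ℕ,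
        ‖a mn.1 mn.2 * u ^ (l * mn.1 + k * mn.2 - k * l) * p ^ mn.1 * q ^ mn.2‖ ≤ w mn := by
  set u₀ := min 1 (R₀ / (2 * P)) with hu
  have h0 : 0 < u₀ := lt_min one_pos (by positivity)
  have h1 : u₀ ≤ 1 := min_le_left _ _
  have h2 : u₀ * P < R₀ := by
    have : u₀ ≤ R₀ / (2 * P) := min_le_right _ _
    calc u₀ * P ≤ R₀ / (2 * P) * P := by gcongr
      _ = R₀ / 2 := by field_simp
      _ < R₀ := by linarith
  have h3 : ∀ n, 0 < n → u₀ ^ n * P < R₀ := fun n hn =>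
    (mul_le_mul_of_nonneg_right (pow_le_of_le_one h0.le h1 hn.ne') hP.le).trans_lt h2
  refine ⟨u₀, h0, h3 l hl, h3 k hk,
    fun mn => ‖a mn.1 mn.2‖ * u₀ ^ (l * mn.1 + k * mn.2 - k * l) * P ^ mn.1 * P ^ mn.2, ?_, ?_⟩
  · have hl' := h3 l hl
    have hk' := h3 k hk
    have := (hconv ((u₀ ^ l * P : ℝ) : ℂ) ((u₀ ^ k * P : ℝ) : ℂ)
      (by rw [Complex.norm_real, Real.norm_of_nonneg (by positivity)]; exact hl')
      (by rw [Complex.norm_real, Real.norm_of_nonneg (by positivity)]; exact hk')).mul_left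
      ((u₀ ^ (k * l))⁻¹)
    refine this.congr fun mn => ?_
    rw [Complex.norm_real, Real.norm_of_nonneg (by positivity), Complex.norm_real,
      Real.norm_of_nonneg (by positivity)]
    by_cases hlt : l * mn.1 + k * mn.2 < k * l
    · simp [hNewton _ _ hlt]
    · push Not at hlt
      obtain ⟨e, he⟩ := Nat.exists_eq_add_of_le hlt
      have : u₀ ^ (l * mn.1) * u₀ ^ (k * mn.2) = u₀ ^ (k * l) * u₀ ^ e := by
        rw [← pow_add, he, pow_add]
      rw [he, Nat.add_sub_cancel_left, mul_pow, mul_pow, ← pow_mul, ← pow_mul]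
      calc (u₀ ^ (k * l))⁻¹ * (‖a mn.1 mn.2‖ * (u₀ ^ (l * mn.1) * P ^ mn.1)
            * (u₀ ^ (k * mn.2) * P ^ mn.2))
          = (u₀ ^ (k * l))⁻¹ * (u₀ ^ (l * mn.1) * u₀ ^ (k * mn.2)) *
            (‖a mn.1 mn.2‖ * P ^ mn.1 * P ^ mn.2) := by ring
        _ = _ := by rw [this]; field_simp
  · intro u p q hu hp hq mn
    rw [norm_mul, norm_mul, norm_mul, norm_pow, norm_pow, norm_pow]
    show _ ≤ ‖a mn.1 mn.2‖ * u₀ ^ (l * mn.1 + k * mn.2 - k * l) * P ^ mn.1 * P ^ mn.2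
    gcongr

lemma TT_hom (R₀ : ℝ) (a : ℕ → ℕ → ℂ) (F : ℂ → ℂ → ℂ)
    (hF : ∀ x y : ℂ, ‖x‖ < R₀ → ‖y‖ < R₀ →
      F x y = ∑' mn : ℕ × ℕ, a mn.1 mn.2 * x ^ mn.1 * y ^ mn.2)
    (k l : ℕ) (hNewton : ∀ m n : ℕ, l * m + k * n < k * l → a m n = 0) (u p q : ℂ)
    (h1 : ‖u ^ l * p‖ < R₀) (h2 : ‖u ^ k * q‖ < R₀) :
    F (u ^ l * p) (u ^ k * q) = u ^ (k * l) * TT a k l u p q := by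
  rw [hF _ _ h1 h2, TT, ← tsum_mul_left]
  refine tsum_congr fun mn => ?_
  by_cases hlt : l * mn.1 + k * mn.2 < k * l
  · simp [hNewton _ _ hlt]
  · push Not at hlt
    obtain ⟨e, he⟩ := Nat.exists_eq_add_of_le hlt
    have : u ^ (l * mn.1) * u ^ (k * mn.2) = u ^ (k * l) * u ^ e := by
      rw [← pow_add, he, pow_add]
    rw [he, Nat.add_sub_cancel_left, mul_pow, mul_pow, ← pow_mul, ← pow_mul]
    linear_combination (a mn.1 mn.2 * p ^ mn.1 * q ^ mn.2) * this

lemma TT_cont (a : ℕ → ℕ → ℂ) (k l : ℕ) (P u₀ : ℝ) (w : ℕ × ℕ → ℝ) (hw : Summable w)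
    (hb : ∀ (u p q : ℂ), ‖u‖ ≤ u₀ → ‖p‖ ≤ P → ‖q‖ ≤ P → ∀ mn : ℕ × ℕ,
        ‖a mn.1 mn.2 * u ^ (l * mn.1 + k * mn.2 - k * l) * p ^ mn.1 * q ^ mn.2‖ ≤ w mn) :
    ContinuousOn (fun v : ℂ × ℂ × ℂ => TT a k l v.1 v.2.1 v.2.2)
      {v | ‖v.1‖ ≤ u₀ ∧ ‖v.2.1‖ ≤ P ∧ ‖v.2.2‖ ≤ P} := by
  refine continuousOn_tsum (fun mn => ?_) hw fun mn v hv => hb _ _ _ hv.1 hv.2.1 hv.2.2 mn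
  fun_prop

lemma TT_contAt (a : ℕ → ℕ → ℂ) (k l : ℕ) (P u₀ : ℝ) (w : ℕ × ℕ → ℝ) (hw : Summable w)
    (hb : ∀ (u p q : ℂ), ‖u‖ ≤ u₀ → ‖p‖ ≤ P → ‖q‖ ≤ P → ∀ mn : ℕ × ℕ,
        ‖a mn.1 mn.2 * u ^ (l * mn.1 + k * mn.2 - k * l) * p ^ mn.1 * q ^ mn.2‖ ≤ w mn)
    (u p q : ℂ) (hu : ‖u‖ < u₀) (hp : ‖p‖ < P) (hq : ‖q‖ < P) :
    ContinuousAt (fun v : ℂ × ℂ × ℂ => TT a k l v.1 v.2.1 v.2.2) (u, p, q) := by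
  refine (TT_cont a k l P u₀ w hw hb).continuousAt ?_
  have : IsOpen {v : ℂ × ℂ × ℂ | ‖v.1‖ < u₀ ∧ ‖v.2.1‖ < P ∧ ‖v.2.2‖ < P} := by
    have h1 : IsOpen {v : ℂ × ℂ × ℂ | ‖v.1‖ < u₀} := isOpen_lt (by fun_prop) (by fun_prop)
    have h2 : IsOpen {v : ℂ × ℂ × ℂ | ‖v.2.1‖ < P} := isOpen_lt (by fun_prop) (by fun_prop)
    have h3 : IsOpen {v : ℂ × ℂ × ℂ | ‖v.2.2‖ < P} := isOpen_lt (by fun_prop) (by fun_prop)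
    exact h1.inter (h2.inter h3)
  exact mem_of_superset (this.mem_nhds ⟨hu, hp, hq⟩) fun v hv => ⟨hv.1.le, hv.2.1.le, hv.2.2.le⟩

lemma TT_diff (a : ℕ → ℕ → ℂ) (k l : ℕ) (P u₀ : ℝ) (hP : 0 < P) (w : ℕ × ℕ → ℝ) (hw : Summable w)
    (hb : ∀ (u p q : ℂ), ‖u‖ ≤ u₀ → ‖p‖ ≤ P → ‖q‖ ≤ P → ∀ mn : ℕ × ℕ,
        ‖a mn.1 mn.2 * u ^ (l * mn.1 + k * mn.2 - k * l) * p ^ mn.1 * q ^ mn.2‖ ≤ w mn)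
    (u : ℂ) (hu : ‖u‖ ≤ u₀) :
    DifferentiableOn ℂ (fun ξ => TT a k l u ξ ξ⁻¹) {ξ | P⁻¹ < ‖ξ‖ ∧ ‖ξ‖ < P} := by
  have h0 : ∀ ξ : ℂ, P⁻¹ < ‖ξ‖ → ξ ≠ 0 := fun ξ hξ =>
    norm_pos_iff.1 (lt_trans (by positivity) hξ)
  refine Complex.differentiableOn_tsum_of_summable_norm hw (fun mn => ?_) ?_ ?_
  · intro ξ hξ
    have := h0 ξ hξ.1
    fun_prop (disch := assumption)
  · have h1 : IsOpen {ξ : ℂ | P⁻¹ < ‖ξ‖} := isOpen_lt (by fun_prop) (by fun_prop)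
    have h2 : IsOpen {ξ : ℂ | ‖ξ‖ < P} := isOpen_lt (by fun_prop) (by fun_prop)
    exact h1.inter h2
  · intro mn ξ hξ
    refine hb _ _ _ hu hξ.2.le ?_ mn
    rw [norm_inv]
    exact inv_le_of_inv_le₀ hP hξ.1.le

lemma TT_zero_A (a : ℕ → ℕ → ℂ) (k l : ℕ) (hl : 0 < l)
    (hNewton : ∀ m n : ℕ, l * m + k * n < k * l → a m n = 0) :
    TT a k l 0 1 0 = a k 0 := by
  rw [TT, tsum_eq_single (k, 0)]
  · simp [mul_comm]
  · rintro ⟨m, n⟩ hmn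
    rcases Nat.eq_zero_or_pos n with rfl | hn
    · rcases lt_trichotomy m k with h | h | h
      · have : l * m + k * 0 < k * l := by nlinarith
        simp [hNewton _ _ this]
      · exact absurd (by rw [h]) hmn
      · have : l * m + k * 0 - k * l ≠ 0 := by
          have : k * l < l * m := by nlinarith
          omega
        simp only [zero_pow this]; simp
    · simp [hn.ne']

lemma TT_fac (a : ℕ → ℕ → ℂ) (k l : ℕ) (hk : 0 < k) (hl : 0 < l) (hak : a k 0 ≠ 0)
    (hNewton : ∀ m n : ℕ, l * m + k * n < k * l → a m n = 0) (ξ₀ : ℂ) (hξ₀ : ξ₀ ≠ 0) :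
    ∃ j ≤ max k l, ∃ G : ℂ → ℂ, DifferentiableOn ℂ G {0}ᶜ ∧ G ξ₀ ≠ 0 ∧
      ∀ ξ ≠ 0, TT a k l 0 ξ ξ⁻¹ = (ξ - ξ₀) ^ j * G ξ := by
  obtain ⟨g, p, q, hg, hcop, rfl, rfl⟩ := Nat.exists_coprime' (Nat.gcd_pos_of_pos_left l hk)
  have hp : 0 < p := Nat.pos_of_mul_pos_right hk
  have hq : 0 < q := Nat.pos_of_mul_pos_right hl
  set Q : Polynomial ℂ := ∑ i ∈ Finset.range (g + 1), Polynomial.monomial i (a (p * i) (q * (g - i)))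
    with hQ
  have hdeg : Q.natDegree ≤ g := by
    refine Polynomial.natDegree_sum_le_of_forall_le _ _ fun i hi => ?_
    refine (Polynomial.natDegree_monomial_le _).trans ?_
    have := Finset.mem_range.1 hi
    omega
  have hQ0 : Q ≠ 0 := by
    intro h
    have : Q.coeff g = a (p * g) 0 := by
      rw [hQ, Polynomial.finsetSum_coeff, Finset.sum_eq_single g]
      · simp
      · intro b _ hb; rw [Polynomial.coeff_monomial, if_neg hb]
      · simp
    rw [h] at this
    exact hak (by simpa using this.symm)
  have hT : ∀ ξ : ℂ, ξ ≠ 0 → TT a (p * g) (q * g) 0 ξ ξ⁻¹ =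
      (ξ ^ (q * g))⁻¹ * Q.eval (ξ ^ (p + q)) := by
    intro ξ hξ
    rw [TT, tsum_eq_sum (s := (Finset.range (g + 1)).image fun i => (p * i, q * (g - i)))]
    · rw [Finset.sum_image]
      · rw [hQ, Polynomial.eval_finsetSum, Finset.mul_sum]
        refine Finset.sum_congr rfl fun i hi => ?_
        have hi' : i ≤ g := by have := Finset.mem_range.1 hi; omega
        obtain ⟨e, rfl⟩ := Nat.exists_eq_add_of_le hi'
        have : q * (i + e) * (p * i) + p * (i + e) * (q * (i + e - i)) -
          p * (i + e) * (q * (i + e)) = 0 := by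
          rw [Nat.add_sub_cancel_left]
          apply Nat.sub_eq_zero_of_le
          apply le_of_eq; ring
        simp only [this]
        simp only [Nat.add_sub_cancel_left, pow_zero, Polynomial.eval_monomial, inv_pow]
        field_simp
        ring
      · intro i _ i' _ h
        have := (Prod.mk.inj h).1
        exact Nat.eq_of_mul_eq_mul_left hp this
    · rintro ⟨m, n⟩ hmn
      rcases lt_trichotomy (q * g * m + p * g * n) (p * g * (q * g)) with h | h | h
      · simp [hNewton _ _ h]
      · exfalso
        apply hmn
        have h1 : q * m + p * n = p * q * g := by
          refine Nat.eq_of_mul_eq_mul_left hg ?_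
          linarith
        have h2 : p ∣ m := by
          have h3 : p ∣ q * m := by
            have : p ∣ q * m + p * n := by rw [h1, mul_assoc]; exact dvd_mul_right _ _
            exact (Nat.dvd_add_left (dvd_mul_right _ _)).1 this
          exact hcop.dvd_of_dvd_mul_left h3
        obtain ⟨i, rfl⟩ := h2
        have h3 : q * i + n = q * g := by
          refine Nat.eq_of_mul_eq_mul_left hp ?_
          linarith
        have h4 : i ≤ g := by
          refine Nat.le_of_mul_le_mul_left (c := q) ?_ hq
          omega
        refine Finset.mem_image.2 ⟨i, Finset.mem_range.2 (by omega), ?_⟩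
        rw [Nat.mul_sub]
        exact Prod.ext rfl (by simp only; omega)
      · have : q * g * m + p * g * n - p * g * (q * g) ≠ 0 := by omega
        simp only [zero_pow this]; simp
  set z₀ := ξ₀ ^ (p + q) with hz₀
  obtain ⟨Q', hQ', hnd⟩ := Polynomial.exists_eq_pow_rootMultiplicity_mul_and_not_dvd Q hQ0 z₀
  set j := Q.rootMultiplicity z₀ with hj
  have hjg : j ≤ g := by
    refine le_trans ?_ hdeg
    rw [hj, ← Polynomial.count_roots]
    exact (Multiset.count_le_card _ _).trans (Polynomial.card_roots' Q)
  refine ⟨j, ?_, fun ξ => (ξ ^ (q * g))⁻¹ *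
    ((∑ i ∈ Finset.range (p + q), ξ ^ i * ξ₀ ^ (p + q - 1 - i)) ^ j * Q'.eval (ξ ^ (p + q))),
    ?_, ?_, ?_⟩
  · refine hjg.trans (le_trans ?_ (le_max_left _ _))
    exact Nat.le_mul_of_pos_left _ hp
  · intro ξ hξ
    have h0 : ξ ^ (q * g) ≠ 0 := pow_ne_zero _ hξ
    have h1 : DifferentiableAt ℂ (fun ξ : ℂ => Q'.eval (ξ ^ (p + q))) ξ :=
      (Q'.differentiable _).comp ξ (by fun_prop)
    refine DifferentiableAt.differentiableWithinAt ?_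
    refine DifferentiableAt.mul (by fun_prop (disch := assumption)) (DifferentiableAt.mul ?_ h1)
    fun_prop
  · refine mul_ne_zero (inv_ne_zero (pow_ne_zero _ hξ₀)) (mul_ne_zero (pow_ne_zero _ ?_) ?_)
    · have : ∀ i ∈ Finset.range (p + q), ξ₀ ^ i * ξ₀ ^ (p + q - 1 - i) = ξ₀ ^ (p + q - 1) := by
        intro i hi
        have := Finset.mem_range.1 hi
        rw [← pow_add]; congr 1; omega
      rw [Finset.sum_congr rfl this, Finset.sum_const, Finset.card_range, nsmul_eq_mul]
      refine mul_ne_zero ?_ (pow_ne_zero _ hξ₀)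
      exact_mod_cast (by omega : p + q ≠ 0)
    · intro h
      exact hnd (Polynomial.dvd_iff_isRoot.2 h)
  · intro ξ hξ
    rw [hT ξ hξ]
    have hgs : (∑ i ∈ Finset.range (p + q), ξ ^ i * ξ₀ ^ (p + q - 1 - i)) * (ξ - ξ₀) =
      ξ ^ (p + q) - z₀ := Commute.geom_sum₂_mul (Commute.all _ _) _
    conv_lhs => rw [hQ']
    rw [Polynomial.eval_mul, Polynomial.eval_pow, Polynomial.eval_sub, Polynomial.eval_X,
      Polynomial.eval_C, ← hgs, mul_pow]
    ring


set_option maxHeartbeats 1000000 in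
lemma TT_local (R₀ : ℝ) (hR₀ : 0 < R₀) (a : ℕ → ℕ → ℂ)
    (hconv : ∀ x y : ℂ, ‖x‖ < R₀ → ‖y‖ < R₀ →
      Summable (fun mn : ℕ × ℕ => ‖a mn.1 mn.2‖ * ‖x‖ ^ mn.1 * ‖y‖ ^ mn.2))
    (k l : ℕ) (hk : 0 < k) (hl : 0 < l) (hak : a k 0 ≠ 0)
    (hNewton : ∀ m n : ℕ, l * m + k * n < k * l → a m n = 0)
    (c : ℝ) (hc0 : 0 < c) (hc1 : c * (max k l : ℕ) < 1) (ξ₀ : ℂ) (hξ₀ : ξ₀ ≠ 0) :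
    ∃ ρ > 0, ∃ M : ℝ≥0∞, M ≠ ⊤ ∧ ∀ᶠ u in 𝓝 (0 : ℂ),
      ∫⁻ ξ in ball ξ₀ ρ, ENNReal.ofReal (‖TT a k l u ξ ξ⁻¹‖ ^ (-(2 * c))) ≤ M := by
  have hn0 : 0 < ‖ξ₀‖ := norm_pos_iff.2 hξ₀
  set P : ℝ := 2 * ‖ξ₀‖ + 3 / ‖ξ₀‖ with hPdef
  have hP : 0 < P := by positivity
  obtain ⟨u₀, hu₀, -, -, w, hw, hb⟩ := TT_bound R₀ hR₀ a hconv k l hk hl hNewton P hP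
  obtain ⟨j, hj, G, hGd, hG0, hG⟩ := TT_fac a k l hk hl hak hNewton ξ₀ hξ₀
  set r : ℝ := ‖ξ₀‖ / 2 with hr
  have hr0 : 0 < r := by positivity
  have hin : closedBall ξ₀ r ⊆ {ξ : ℂ | P⁻¹ < ‖ξ‖ ∧ ‖ξ‖ < P} := by
    intro ξ hξ
    rw [mem_closedBall, dist_eq_norm] at hξ
    have h1 : ‖ξ‖ ≤ ‖ξ₀‖ + r := by
      have := norm_add_le ξ₀ (ξ - ξ₀)
      rw [add_sub_cancel] at this; linarith
    have h2 : ‖ξ₀‖ - r ≤ ‖ξ‖ := by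
      have := norm_sub_norm_le ξ₀ ξ
      rw [norm_sub_rev] at this; linarith
    have h3 : 0 < 3 / ‖ξ₀‖ := by positivity
    refine ⟨?_, by linarith⟩
    refine lt_of_lt_of_le ?_ h2
    rw [inv_lt_comm₀ hP (by linarith)]
    have : (‖ξ₀‖ - r)⁻¹ = 2 / ‖ξ₀‖ := by rw [hr]; field_simp; norm_num
    rw [this]
    have : 2 / ‖ξ₀‖ ≤ 3 / ‖ξ₀‖ := by gcongr; norm_num
    linarith
  have hne0 : ∀ ξ ∈ closedBall ξ₀ r, ξ ≠ 0 := fun ξ hξ =>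
    norm_pos_iff.1 (lt_trans (by positivity) (hin hξ).1)
  set H : (ℂ × (Fin (j + 1) → ℂ)) → ℂ → ℂ := fun v ζ =>
    TT a k l v.1 ζ ζ⁻¹ * (∏ i, (ζ - v.2 i))⁻¹ with hH
  set v₀ : ℂ × (Fin (j + 1) → ℂ) := (0, fun _ => ξ₀) with hv₀
  have hprod0 : ∀ ζ ∈ sphere ξ₀ r, ∏ i : Fin (j + 1), (ζ - v₀.2 i) ≠ 0 := by
    intro ζ hζ
    simp only [hv₀, Finset.prod_const]
    refine pow_ne_zero _ (sub_ne_zero.2 ?_)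
    rintro rfl
    rw [mem_sphere, dist_self] at hζ
    linarith
  have hHc : ∀ ζ ∈ sphere ξ₀ r, ContinuousAt (fun z : (ℂ × (Fin (j + 1) → ℂ)) × ℂ => H z.1 z.2)
      (v₀, ζ) := by
    intro ζ hζ
    have hζ' := hin (sphere_subset_closedBall hζ)
    have hζ0 := hne0 ζ (sphere_subset_closedBall hζ)
    refine ContinuousAt.mul ?_ (ContinuousAt.inv₀ (by fun_prop) (hprod0 ζ hζ))
    have h1 := TT_contAt a k l P u₀ w hw hb 0 ζ ζ⁻¹ (by simpa using hu₀) hζ'.2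
      (by rw [norm_inv]; exact inv_lt_of_inv_lt₀ hP hζ'.1)
    have h2 : ContinuousAt (fun z : (ℂ × (Fin (j + 1) → ℂ)) × ℂ => (z.1.1, z.2, z.2⁻¹)) (v₀, ζ) := by
      refine ContinuousAt.prodMk (by fun_prop) (ContinuousAt.prodMk (by fun_prop) ?_)
      exact ContinuousAt.inv₀ (by fun_prop) hζ0
    exact ContinuousAt.comp (f := fun z : (ℂ × (Fin (j + 1) → ℂ)) × ℂ => (z.1.1, z.2, z.2⁻¹))
      (g := fun v : ℂ × ℂ × ℂ => TT a k l v.1 v.2.1 v.2.2) h1 h2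
  set η : ℝ := ‖G ξ₀‖ / (2 * r) with hη
  have hGpos : 0 < ‖G ξ₀‖ := norm_pos_iff.2 hG0
  have hη0 : 0 < η := by positivity
  have hev : ∀ᶠ v in 𝓝 v₀, ∀ ζ ∈ sphere ξ₀ r, dist (H v ζ) (H v₀ ζ) < η := by
    refine (isCompact_sphere ξ₀ r).eventually_forall_of_forall_eventually
      (P := fun v ζ => dist (H v ζ) (H v₀ ζ) < η) fun ζ hζ => ?_
    have hc2 : ContinuousAt (fun z : (ℂ × (Fin (j + 1) → ℂ)) × ℂ => H v₀ z.2) (v₀, ζ) :=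
      ContinuousAt.comp (f := fun z : (ℂ × (Fin (j + 1) → ℂ)) × ℂ => (v₀, z.2))
        (g := fun z : (ℂ × (Fin (j + 1) → ℂ)) × ℂ => H z.1 z.2) (hHc ζ hζ) (by fun_prop)
    have := (hHc ζ hζ).dist hc2
    have h0 : dist (H v₀ ζ) (H v₀ ζ) < η := by simpa using hη0
    exact this.eventually_lt continuousAt_const h0
  obtain ⟨ε, hε, hεv⟩ := Metric.eventually_nhds_iff.1 hev
  set ρ := min ε r with hρ
  have hρ0 : 0 < ρ := lt_min hε hr0
  have hI0 : (∮ ζ in C(ξ₀, r), H v₀ ζ) = (2 * Real.pi * Complex.I : ℂ) * G ξ₀ := by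
    have hGd' : DifferentiableOn ℂ G (closedBall ξ₀ r) := hGd.mono fun ξ hξ => hne0 ξ hξ
    have := hGd'.circleIntegral_sub_inv_smul (mem_ball_self hr0)
    simp only [smul_eq_mul] at this
    rw [← this]
    refine circleIntegral.integral_congr hr0.le fun ζ hζ => ?_
    have hp := hprod0 ζ hζ
    simp only [hH, hv₀, Finset.prod_const, Finset.card_univ, Fintype.card_fin] at hp ⊢
    rw [hG ζ (hne0 ζ (sphere_subset_closedBall hζ))]
    have : ζ - ξ₀ ≠ 0 := fun h => hp (by rw [h]; simp)
    field_simp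
    ring
  have hlow : ∀ u : ℂ, ‖u‖ < min ε u₀ → ∀ z : Fin (j + 1) → ℂ, (∀ i, z i ∈ ball ξ₀ ρ) →
      Function.Injective z → ‖G ξ₀‖ / 2 ≤
        ‖∑ i, Lagrange.nodalWeight Finset.univ z i * TT a k l u (z i) (z i)⁻¹‖ := by
    intro u hu z hz hinj
    have hdd := divdiff_eq j ξ₀ r (fun ξ => TT a k l u ξ ξ⁻¹)
      ((TT_diff a k l P u₀ hP w hw hb u (hu.le.trans (min_le_right _ _))).mono hin) z
      (fun i => ball_subset_ball (min_le_right _ _) (hz i)) hinj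
    have hnear := @hεv (u, z) (by
      rw [Prod.dist_eq, max_lt_iff]
      refine ⟨by simpa [hv₀] using hu.trans_le (min_le_left _ _), ?_⟩
      rw [dist_pi_lt_iff hε]
      exact fun i => lt_of_lt_of_le (mem_ball.1 (hz i)) (min_le_left _ _))
    have hcH : CircleIntegrable (H v₀) ξ₀ r := by
      refine ContinuousOn.circleIntegrable hr0.le fun ζ hζ => ContinuousAt.continuousWithinAt ?_
      exact ContinuousAt.comp (f := fun z : ℂ => (v₀, z))
        (g := fun z : (ℂ × (Fin (j + 1) → ℂ)) × ℂ => H z.1 z.2) (hHc ζ hζ) (by fun_prop)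
    have hcH' : CircleIntegrable (H (u, z)) ξ₀ r := by
      refine ContinuousOn.circleIntegrable hr0.le (ContinuousOn.mul ?_ ?_)
      · exact ((TT_diff a k l P u₀ hP w hw hb u (hu.le.trans (min_le_right _ _))).mono
          (sphere_subset_closedBall.trans hin)).continuousOn
      · refine ContinuousOn.inv₀ (by fun_prop) fun ζ hζ => ?_
        refine Finset.prod_ne_zero_iff.2 fun i _ => sub_ne_zero.2 ?_
        rintro rfl
        have h1 := lt_of_lt_of_le (mem_ball.1 (hz i)) (min_le_right _ _)
        rw [mem_sphere.1 hζ] at h1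
        exact lt_irrefl _ h1
    have hdiff : ‖(∮ ζ in C(ξ₀, r), H (u, z) ζ) - ∮ ζ in C(ξ₀, r), H v₀ ζ‖ ≤
        2 * Real.pi * r * η := by
      rw [← circleIntegral.integral_sub hcH' hcH]
      refine circleIntegral.norm_integral_le_of_norm_le_const hr0.le fun ζ hζ => ?_
      rw [← dist_eq_norm]; exact (hnear ζ hζ).le
    have hdd' : (∮ ζ in C(ξ₀, r), H (u, z) ζ) = (2 * Real.pi * Complex.I : ℂ) *
      ∑ i, Lagrange.nodalWeight Finset.univ z i * TT a k l u (z i) (z i)⁻¹ := hdd.symm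
    rw [hdd', hI0, ← mul_sub, norm_mul] at hdiff
    have h2pi : ‖(2 * Real.pi * Complex.I : ℂ)‖ = 2 * Real.pi := by
      simp [abs_of_pos Real.pi_pos]
    rw [h2pi, mul_assoc (2 * Real.pi) r η] at hdiff
    have h3 := le_of_mul_le_mul_left hdiff (by positivity)
    have h4 : r * η = ‖G ξ₀‖ / 2 := by rw [hη]; field_simp
    rw [h4, norm_sub_rev] at h3
    have := norm_sub_norm_le (G ξ₀)
      (∑ i, Lagrange.nodalWeight Finset.univ z i * TT a k l u (z i) (z i)⁻¹)
    linarith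
  obtain ⟨M, hM, hMb⟩ := layer c hc0 (max k l) hc1 (‖G ξ₀‖ / 2 / (j + 1)) (by positivity)
    (volume (ball ξ₀ ρ)) (j * NNReal.pi) measure_ball_lt_top.ne
    (ENNReal.mul_ne_top (by simp) (by simp))
  refine ⟨ρ, hρ0, M, hM, ?_⟩
  filter_upwards [Metric.ball_mem_nhds (0 : ℂ) (lt_min hε hu₀)] with u hu
  rw [mem_ball_zero_iff] at hu
  exact hMb _ _ measurableSet_ball le_rfl fun s hs hs1 =>
    sublevel j (max k l) hj _ (by positivity) _ _ (hlow u hu) s hs hs1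

lemma TT_compact (R₀ : ℝ) (hR₀ : 0 < R₀) (a : ℕ → ℕ → ℂ)
    (hconv : ∀ x y : ℂ, ‖x‖ < R₀ → ‖y‖ < R₀ →
      Summable (fun mn : ℕ × ℕ => ‖a mn.1 mn.2‖ * ‖x‖ ^ mn.1 * ‖y‖ ^ mn.2))
    (k l : ℕ) (hk : 0 < k) (hl : 0 < l) (hak : a k 0 ≠ 0)
    (hNewton : ∀ m n : ℕ, l * m + k * n < k * l → a m n = 0)
    (c : ℝ) (hc0 : 0 < c) (hc1 : c * (max k l : ℕ) < 1) (K : Set ℂ) (hK : IsCompact K)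
    (hK0 : ∀ ξ ∈ K, ξ ≠ 0) :
    ∃ M : ℝ≥0∞, M ≠ ⊤ ∧ ∀ᶠ u in 𝓝 (0 : ℂ),
      ∫⁻ ξ in K, ENNReal.ofReal (‖TT a k l u ξ ξ⁻¹‖ ^ (-(2 * c))) ≤ M := by
  refine hK.induction_on (p := fun S => ∃ M : ℝ≥0∞, M ≠ ⊤ ∧ ∀ᶠ u in 𝓝 (0 : ℂ),
      ∫⁻ ξ in S, ENNReal.ofReal (‖TT a k l u ξ ξ⁻¹‖ ^ (-(2 * c))) ≤ M) ?_ ?_ ?_ ?_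
  · exact ⟨0, by simp, by simp⟩
  · rintro s t hst ⟨M, hM, h⟩
    exact ⟨M, hM, h.mono fun u hu => (lintegral_mono_set hst).trans hu⟩
  · rintro s t ⟨M, hM, h⟩ ⟨M', hM', h'⟩
    refine ⟨M + M', ENNReal.add_ne_top.2 ⟨hM, hM'⟩, ?_⟩
    filter_upwards [h, h'] with u hu hu'
    exact (lintegral_union_le _ _ _).trans (add_le_add hu hu')
  · intro ξ hξ
    obtain ⟨ρ, hρ, M, hM, h⟩ := TT_local R₀ hR₀ a hconv k l hk hl hak hNewton c hc0 hc1 ξ (hK0 ξ hξ)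
    exact ⟨ball ξ ρ, mem_nhdsWithin_of_mem_nhds (ball_mem_nhds ξ hρ), M, hM, h⟩


structure Hyp (R₀ : ℝ) (a : ℕ → ℕ → ℂ) (F : ℂ → ℂ → ℂ) (k l : ℕ) : Prop where
  hR₀ : 0 < R₀
  hconv : ∀ x y : ℂ, ‖x‖ < R₀ → ‖y‖ < R₀ →
      Summable (fun mn : ℕ × ℕ => ‖a mn.1 mn.2‖ * ‖x‖ ^ mn.1 * ‖y‖ ^ mn.2)
  hF : ∀ x y : ℂ, ‖x‖ < R₀ → ‖y‖ < R₀ →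
      F x y = ∑' mn : ℕ × ℕ, a mn.1 mn.2 * x ^ mn.1 * y ^ mn.2
  hk : 0 < k
  hl : 0 < l
  hak : a k 0 ≠ 0
  hal : a 0 l ≠ 0
  hNewton : ∀ m n : ℕ, l * m + k * n < k * l → a m n = 0

lemma Hyp.swap {R₀ : ℝ} {a : ℕ → ℕ → ℂ} {F : ℂ → ℂ → ℂ} {k l : ℕ} (h : Hyp R₀ a F k l) :
    Hyp R₀ (fun m n => a n m) (fun x y => F y x) l k where
  hR₀ := h.hR₀
  hconv x y hx hy := by
    have := (Equiv.prodComm ℕ ℕ).summable_iff.2 (h.hconv y x hy hx)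
    refine this.congr fun mn => ?_
    simp only [Function.comp, Equiv.prodComm_apply, Prod.fst_swap, Prod.snd_swap]
    ring
  hF x y hx hy := by
    rw [h.hF y x hy hx, ← (Equiv.prodComm ℕ ℕ).tsum_eq]
    refine tsum_congr fun mn => ?_
    simp only [Equiv.prodComm_apply, Prod.fst_swap, Prod.snd_swap]
    ring
  hk := h.hl
  hl := h.hk
  hak := h.hal
  hal := h.hak
  hNewton m n hmn := h.hNewton n m (by linarith [mul_comm k l])

lemma Hyp.regionA {R₀ : ℝ} {a : ℕ → ℕ → ℂ} {F : ℂ → ℂ → ℂ} {k l : ℕ} (h : Hyp R₀ a F k l) :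
    ∃ ρ > 0, ∃ δ > 0, ∀ x y : ℂ, x ≠ 0 → ‖x‖ < ρ → ‖y‖ ^ l < ρ * ‖x‖ ^ k →
      δ * ‖x‖ ^ k ≤ ‖F x y‖ := by
  obtain ⟨u₀, hu₀, hul, huk, w, hw, hb⟩ :=
    TT_bound R₀ h.hR₀ a h.hconv k l h.hk h.hl h.hNewton 2 two_pos
  have hc := TT_contAt a k l 2 u₀ w hw hb 0 1 0 (by simpa using hu₀) (by simp) (by simp)
  have hpos : 0 < ‖a k 0‖ := norm_pos_iff.2 h.hak
  have hev : ∀ᶠ v : ℂ × ℂ × ℂ in 𝓝 (0, 1, 0), ‖a k 0‖ / 2 < ‖TT a k l v.1 v.2.1 v.2.2‖ := by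
    refine continuousAt_const.eventually_lt hc.norm ?_
    simp only [TT_zero_A a k l h.hl h.hNewton]
    linarith
  obtain ⟨ε, hε, hεv⟩ := Metric.eventually_nhds_iff.1 hev
  set e := min ε (min u₀ 1) with he
  have he0 : 0 < e := lt_min hε (lt_min hu₀ one_pos)
  have heε : e ≤ ε := min_le_left _ _
  have heu : e ≤ u₀ := (min_le_right _ _).trans (min_le_left _ _)
  have he1 : e ≤ 1 := (min_le_right _ _).trans (min_le_right _ _)
  refine ⟨e ^ l, by positivity, ‖a k 0‖ / 2, by positivity, fun x y hx hxρ hy => ?_⟩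
  obtain ⟨X, rfl⟩ := IsAlgClosed.exists_pow_nat_eq x h.hl
  have hX : X ≠ 0 := fun h0 => hx (by rw [h0, zero_pow h.hl.ne'])
  have hXp : 0 < ‖X‖ := norm_pos_iff.2 hX
  have hXe : ‖X‖ < e := by
    rw [norm_pow] at hxρ
    exact lt_of_pow_lt_pow_left₀ l he0.le hxρ
  set q := y / X ^ k with hq
  have hqe : ‖q‖ < e := by
    refine lt_of_pow_lt_pow_left₀ l he0.le ?_
    rw [hq, norm_div, div_pow, div_lt_iff₀ (pow_pos (norm_pos_iff.2 (pow_ne_zero _ hX)) _), norm_pow, ← pow_mul, mul_comm k l,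
      pow_mul, ← norm_pow X l]
    exact hy
  have hyq : y = X ^ k * q := by rw [hq]; field_simp
  have h1 : ‖X ^ l * 1‖ < R₀ := by
    rw [norm_mul, norm_pow]
    refine lt_of_le_of_lt ?_ hul
    have := hXe.le.trans heu
    gcongr; simp
  have h2 : ‖X ^ k * q‖ < R₀ := by
    rw [norm_mul, norm_pow]
    refine lt_of_le_of_lt ?_ huk
    have := hXe.le.trans heu
    gcongr; linarith
  have hhom := TT_hom R₀ a F h.hF k l h.hNewton X 1 q h1 h2
  rw [mul_one, ← hyq] at hhom
  rw [hhom, norm_mul, norm_pow, norm_pow, ← pow_mul, mul_comm l k, mul_comm (‖a k 0‖ / 2)]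
  gcongr
  refine (@hεv (X, 1, q) ?_).le
  simp only [Prod.dist_eq, dist_self, dist_zero_right]
  rw [max_lt_iff, max_lt_iff]
  exact ⟨hXe.trans_le heε, hε, hqe.trans_le heε⟩

lemma Hyp.cont {R₀ : ℝ} {a : ℕ → ℕ → ℂ} {F : ℂ → ℂ → ℂ} {k l : ℕ} (h : Hyp R₀ a F k l)
    (R : ℝ) (hR : 0 < R) (hRR : R < R₀) :
    ContinuousOn (fun v : ℂ × ℂ => F v.1 v.2) {v | ‖v.1‖ ≤ R ∧ ‖v.2‖ ≤ R} := by
  have hn : ‖(R : ℂ)‖ = R := by rw [Complex.norm_real, Real.norm_of_nonneg hR.le]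
  have hs := h.hconv R R (by rwa [hn]) (by rwa [hn])
  have : ContinuousOn (fun v : ℂ × ℂ => ∑' mn : ℕ × ℕ, a mn.1 mn.2 * v.1 ^ mn.1 * v.2 ^ mn.2)
      {v | ‖v.1‖ ≤ R ∧ ‖v.2‖ ≤ R} := by
    refine continuousOn_tsum (fun mn => by fun_prop) hs fun mn v hv => ?_
    rw [norm_mul, norm_mul, norm_pow, norm_pow, hn]
    have := hv.1
    have := hv.2
    gcongr
  exact this.congr fun v hv => h.hF _ _ (hv.1.trans_lt hRR) (hv.2.trans_lt hRR)

lemma Hyp.regionC {R₀ : ℝ} {a : ℕ → ℕ → ℂ} {F : ℂ → ℂ → ℂ} {k l : ℕ} (h : Hyp R₀ a F k l)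
    (c : ℝ) (hc0 : 0 < c) (hc1 : c * (max k l : ℕ) < 1) (σ : ℝ) (hσ : 0 < σ) :
    ∃ M : ℝ≥0∞, M ≠ ⊤ ∧ ∃ ε > 0, ∀ u : ℂ, u ≠ 0 → ‖u‖ < ε →
      ∫⁻ x in (fun ξ => u ^ l * ξ) '' {ξ | σ ≤ ‖ξ‖ ∧ ‖ξ‖ ≤ σ⁻¹},
        ENNReal.ofReal (‖F x (u ^ (k + l) / x)‖ ^ (-(2 * c))) ≤
      ENNReal.ofReal (‖u‖ ^ (2 * l * (1 - c * k))) * M := by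
  set K : Set ℂ := {ξ | σ ≤ ‖ξ‖ ∧ ‖ξ‖ ≤ σ⁻¹} with hKdef
  have hKc : IsClosed K :=
    (isClosed_le continuous_const continuous_norm).inter (isClosed_le continuous_norm continuous_const)
  have hK : IsCompact K := by
    refine (isCompact_closedBall (0 : ℂ) σ⁻¹).of_isClosed_subset hKc fun ξ hξ => ?_
    rw [mem_closedBall_zero_iff]; exact hξ.2
  have hK0 : ∀ ξ ∈ K, ξ ≠ 0 := fun ξ hξ => norm_pos_iff.1 (hσ.trans_le hξ.1)
  obtain ⟨M, hM, hev⟩ := TT_compact R₀ h.hR₀ a h.hconv k l h.hk h.hl h.hak h.hNewton c hc0 hc1 K hK hK0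
  obtain ⟨ε, hε, hεu⟩ := Metric.eventually_nhds_iff.1 hev
  obtain ⟨u₀, hu₀, hul, huk, -⟩ :=
    TT_bound R₀ h.hR₀ a h.hconv k l h.hk h.hl h.hNewton σ⁻¹ (by positivity)
  refine ⟨M, hM, min ε u₀, lt_min hε hu₀, fun u hu huε => ?_⟩
  have hup : 0 < ‖u‖ := norm_pos_iff.2 hu
  have huu : ‖u‖ ≤ u₀ := huε.le.trans (min_le_right _ _)
  rw [cov_complex hKc.measurableSet (f' := fun _ => u ^ l)
    (fun x _ => by simpa using (hasDerivAt_id x).const_mul (u ^ l))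
    (fun x _ y _ hxy => mul_left_cancel₀ (pow_ne_zero _ hu) hxy)]
  calc ∫⁻ ξ in K, ENNReal.ofReal (‖u ^ l‖ ^ 2) *
        ENNReal.ofReal (‖F (u ^ l * ξ) (u ^ (k + l) / (u ^ l * ξ))‖ ^ (-(2 * c)))
      = ∫⁻ ξ in K, ENNReal.ofReal (‖u‖ ^ (2 * l * (1 - c * k))) *
        ENNReal.ofReal (‖TT a k l u ξ ξ⁻¹‖ ^ (-(2 * c))) := by
        refine setLIntegral_congr_fun hKc.measurableSet fun ξ hξ => ?_
        have hξ0 := hK0 ξ hξ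
        have e1 : u ^ (k + l) / (u ^ l * ξ) = u ^ k * ξ⁻¹ := by
          rw [pow_add]; field_simp
        have h1 : ‖u ^ l * ξ‖ < R₀ := by
          rw [norm_mul, norm_pow]
          refine lt_of_le_of_lt ?_ hul
          gcongr; exact hξ.2
        have h2 : ‖u ^ k * ξ⁻¹‖ < R₀ := by
          rw [norm_mul, norm_pow, norm_inv]
          refine lt_of_le_of_lt ?_ huk
          gcongr; exact hξ.1
        rw [e1, TT_hom R₀ a F h.hF k l h.hNewton u ξ ξ⁻¹ h1 h2, norm_mul,
          Real.mul_rpow (norm_nonneg _) (norm_nonneg _), ENNReal.ofReal_mul (by positivity),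
          ← mul_assoc, ← ENNReal.ofReal_mul (by positivity)]
        congr 2
        rw [norm_pow, norm_pow, ← pow_mul, ← Real.rpow_natCast, ← Real.rpow_natCast,
          ← Real.rpow_mul hup.le, ← Real.rpow_add hup]
        congr 1
        push_cast; ring
    _ = ENNReal.ofReal (‖u‖ ^ (2 * l * (1 - c * k))) *
        ∫⁻ ξ in K, ENNReal.ofReal (‖TT a k l u ξ ξ⁻¹‖ ^ (-(2 * c))) :=
        lintegral_const_mul' _ _ ENNReal.ofReal_ne_top
    _ ≤ _ := by
        gcongr
        exact @hεu u (by simpa using huε.trans_le (min_le_left _ _))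

lemma pow_int (c : ℝ) (hc0 : 0 < c) (k : ℕ) (hck : c * k < 1) (R : ℝ) :
    ∫⁻ x in ball (0 : ℂ) R, ENNReal.ofReal ((‖x‖ ^ k) ^ (-(2 * c))) ≠ ⊤ := by
  obtain ⟨M, hM, h⟩ := layer c hc0 k hck 1 one_pos (volume (ball (0 : ℂ) R)) NNReal.pi
    measure_ball_lt_top.ne (by simp)
  have := h (fun x => x ^ k) (ball 0 R) measurableSet_ball le_rfl fun s hs hs1 => by
    have hsub : ball (0 : ℂ) R ∩ {z | ‖z ^ k‖ < 1 * s ^ k} ⊆ ball 0 s := by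
      rintro z ⟨-, hz⟩
      rw [mem_ball_zero_iff]
      rw [mem_ofPred_eq, one_mul, norm_pow] at hz
      exact lt_of_pow_lt_pow_left₀ k hs.le hz
    refine (measure_mono hsub).trans (le_of_eq ?_)
    rw [Complex.volume_ball, ENNReal.ofReal_pow hs.le, mul_comm]
  simp only [norm_pow] at this
  exact ne_top_of_le_ne_top hM this


lemma Hyp.half {R₀ : ℝ} {a : ℕ → ℕ → ℂ} {F : ℂ → ℂ → ℂ} {k l : ℕ} (h : Hyp R₀ a F k l)
    (c : ℝ) (hc0 : 0 < c) (hc1 : c * (max k l : ℕ) < 1) :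
    ∃ r > 0, ∀ R : ℝ, 0 < R → R ≤ r →
      (∫⁻ x in {x : ℂ | 0 < ‖x‖ ∧ ‖x‖ < R}, ENNReal.ofReal (‖F x 0‖ ^ (-(2 * c)))) ≠ ⊤ ∧
      Tendsto (fun t : ℂ => ∫⁻ x in {x : ℂ | ‖t‖ / R < ‖x‖ ∧ ‖x‖ < R},
        ENNReal.ofReal (‖F x (t / x)‖ ^ (-(2 * c)))) (𝓝[≠] 0)
        (𝓝 (∫⁻ x in {x : ℂ | 0 < ‖x‖ ∧ ‖x‖ < R}, ENNReal.ofReal (‖F x 0‖ ^ (-(2 * c))))) := by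
  have hk := h.hk
  have hl := h.hl
  have hck : c * k < 1 := by
    refine lt_of_le_of_lt ?_ hc1
    have : (k : ℝ) ≤ (max k l : ℕ) := by exact_mod_cast le_max_left k l
    gcongr
  obtain ⟨ρ₁, hρ₁, δ₁, hδ₁, hA⟩ := h.regionA
  obtain ⟨ρ₂, hρ₂, δ₂, hδ₂, hB⟩ := h.swap.regionA
  set σ := min (min ρ₁ ρ₂) 1 with hσdef
  have hσ : 0 < σ := lt_min (lt_min hρ₁ hρ₂) one_pos
  have hσ1 : σ ≤ 1 := min_le_right _ _
  have hσρ₁ : σ ≤ ρ₁ := (min_le_left _ _).trans (min_le_left _ _)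
  have hσρ₂ : σ ≤ ρ₂ := (min_le_left _ _).trans (min_le_right _ _)
  set δ := min δ₁ δ₂ with hδdef
  have hδ : 0 < δ := lt_min hδ₁ hδ₂
  refine ⟨min (min ρ₁ ρ₂) (R₀ / 2), lt_min (lt_min hρ₁ hρ₂) (half_pos h.hR₀), fun R hR hRr => ?_⟩
  have hRρ₁ : R ≤ ρ₁ := hRr.trans ((min_le_left _ _).trans (min_le_left _ _))
  have hRρ₂ : R ≤ ρ₂ := hRr.trans ((min_le_left _ _).trans (min_le_right _ _))
  have hRR₀ : R < R₀ := lt_of_le_of_lt (hRr.trans (min_le_right _ _)) (half_lt_self h.hR₀)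
  have hgood : ∀ x y : ℂ, x ≠ 0 → ‖x‖ < R → ‖y‖ < R →
      (‖y‖ ^ l < σ * ‖x‖ ^ k ∨ ‖x‖ ^ k < σ * ‖y‖ ^ l) → δ * ‖x‖ ^ k ≤ ‖F x y‖ := by
    intro x y hx hxR hyR hor
    rcases hor with h1 | h1
    · refine le_trans ?_ (hA x y hx (hxR.trans_le hRρ₁) (h1.trans_le (by gcongr)))
      gcongr; exact min_le_left _ _
    · have hy : y ≠ 0 := by
        rintro rfl
        rw [norm_zero, zero_pow hl.ne', mul_zero] at h1
        exact absurd h1 (not_lt.2 (by positivity))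
      refine le_trans ?_ (hB y x hy (hyR.trans_le hRρ₂) (h1.trans_le (by gcongr)))
      have h2 : ‖x‖ ^ k ≤ ‖y‖ ^ l :=
        h1.le.trans (mul_le_of_le_one_left (by positivity) hσ1)
      gcongr
      exact min_le_right _ _
  set D₀ : Set ℂ := {x : ℂ | 0 < ‖x‖ ∧ ‖x‖ < R} with hD₀
  have hD₀m : MeasurableSet D₀ :=
    (measurableSet_lt measurable_const measurable_norm).inter
      (measurableSet_lt measurable_norm measurable_const)
  set bound : ℂ → ℝ≥0∞ := fun x => ENNReal.ofReal (δ ^ (-(2 * c))) *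
    ENNReal.ofReal ((‖x‖ ^ k) ^ (-(2 * c))) with hbound
  have hbfin : ∫⁻ x in D₀, bound x ≠ ⊤ := by
    rw [hbound, lintegral_const_mul' _ _ ENNReal.ofReal_ne_top]
    refine ENNReal.mul_ne_top ENNReal.ofReal_ne_top (ne_top_of_le_ne_top (pow_int c hc0 k hck R) ?_)
    exact lintegral_mono_set fun x hx => mem_ball_zero_iff.2 hx.2
  have hbd : ∀ x y : ℂ, x ≠ 0 → ‖x‖ < R → ‖y‖ < R →
      (‖y‖ ^ l < σ * ‖x‖ ^ k ∨ ‖x‖ ^ k < σ * ‖y‖ ^ l) →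
      ENNReal.ofReal (‖F x y‖ ^ (-(2 * c))) ≤ bound x := by
    intro x y hx hxR hyR hor
    have hxp : 0 < ‖x‖ := norm_pos_iff.2 hx
    rw [hbound]
    simp only
    rw [← ENNReal.ofReal_mul (by positivity), ← Real.mul_rpow hδ.le (by positivity)]
    exact ENNReal.ofReal_le_ofReal (Real.rpow_le_rpow_of_nonpos (by positivity)
      (hgood x y hx hxR hyR hor) (by linarith))
  have hzero : ∀ x : ℂ, x ≠ 0 → ‖(0 : ℂ)‖ ^ l < σ * ‖x‖ ^ k := by
    intro x hx
    have hxp : 0 < ‖x‖ := norm_pos_iff.2 hx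
    rw [norm_zero, zero_pow hl.ne']; positivity
  refine ⟨?_, ?_⟩
  · refine ne_top_of_le_ne_top hbfin (setLIntegral_mono' hD₀m fun x hx => ?_)
    exact hbd x 0 (norm_pos_iff.1 hx.1) hx.2 (by simpa using hR) (Or.inl (hzero x (norm_pos_iff.1 hx.1)))
  set D : ℂ → Set ℂ := fun t => {x : ℂ | ‖t‖ / R < ‖x‖ ∧ ‖x‖ < R} with hD
  have hDm : ∀ t, MeasurableSet (D t) := fun t =>
    (measurableSet_lt measurable_const measurable_norm).inter
      (measurableSet_lt measurable_norm measurable_const)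
  have hDx : ∀ t, ∀ x ∈ D t, x ≠ 0 ∧ ‖x‖ < R ∧ ‖t / x‖ < R := by
    intro t x hx
    have hxp : 0 < ‖x‖ := lt_of_le_of_lt (by positivity) hx.1
    refine ⟨norm_pos_iff.1 hxp, hx.2, ?_⟩
    rw [norm_div, div_lt_iff₀ hxp, mul_comm]
    exact (div_lt_iff₀ hR).1 hx.1 |>.trans_eq (by ring)
  set Gd : ℂ → Set ℂ := fun t =>
    {x : ℂ | ‖t / x‖ ^ l < σ * ‖x‖ ^ k ∨ ‖x‖ ^ k < σ * ‖t / x‖ ^ l} with hGd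
  have hGm : ∀ t, MeasurableSet (Gd t) := fun t => by
    have h1 : Measurable fun x : ℂ => ‖t / x‖ ^ l := by fun_prop
    have h2 : Measurable fun x : ℂ => ‖x‖ ^ k := by fun_prop
    exact (measurableSet_lt h1 (h2.const_mul σ)).union (measurableSet_lt h2 (h1.const_mul σ))
  set f : ℂ → ℂ → ℝ≥0∞ := fun t x => ENNReal.ofReal (‖F x (t / x)‖ ^ (-(2 * c))) with hf
  have hfm : ∀ t, AEMeasurable (f t) (volume.restrict (D t)) := by
    intro t
    have hc : ContinuousOn (fun x => F x (t / x)) (D t) := by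
      refine (h.cont R hR hRR₀).comp (f := fun x => (x, t / x)) ?_ ?_
      · refine continuousOn_id.prodMk (continuousOn_const.div continuousOn_id fun x hx => ?_)
        exact (hDx t x hx).1
      · intro x hx
        exact ⟨(hDx t x hx).2.1.le, (hDx t x hx).2.2.le⟩
    exact ((hc.aemeasurable (hDm t)).norm.pow_const _).ennreal_ofReal
  have hmain : Tendsto (fun t => ∫⁻ x in D₀, (D t ∩ Gd t).indicator (f t) x) (𝓝[≠] 0)
      (𝓝 (∫⁻ x in D₀, ENNReal.ofReal (‖F x 0‖ ^ (-(2 * c))))) := by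
    refine tendsto_lintegral_filter_of_dominated_convergence' bound ?_ ?_ hbfin ?_
    · refine Eventually.of_forall fun t => ?_
      have : AEMeasurable (f t) (volume.restrict (D t ∩ Gd t)) :=
        (hfm t).mono_measure (Measure.restrict_mono inter_subset_left le_rfl)
      exact ((aemeasurable_indicator_iff ((hDm t).inter (hGm t))).2 this).restrict
    · refine Eventually.of_forall fun t => Eventually.of_forall fun x => ?_
      by_cases hx : x ∈ D t ∩ Gd t
      · rw [indicator_of_mem hx]
        obtain ⟨h1, h2, h3⟩ := hDx t x hx.1
        exact hbd x (t / x) h1 h2 h3 hx.2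
      · rw [indicator_of_notMem hx]; exact zero_le
    · refine (ae_restrict_iff' hD₀m).2 (Eventually.of_forall fun x hx => ?_)
      have hx0 : x ≠ 0 := norm_pos_iff.1 hx.1
      have ht0 : Tendsto (fun t : ℂ => t / x) (𝓝 0) (𝓝 0) := by
        have : ContinuousAt (fun t : ℂ => t / x) 0 := by fun_prop
        simpa [ContinuousAt] using this
      have hev : ∀ᶠ t in 𝓝[≠] (0 : ℂ), x ∈ D t ∩ Gd t := by
        refine Filter.Eventually.filter_mono nhdsWithin_le_nhds ?_
        have e1 : ∀ᶠ t in 𝓝 (0 : ℂ), ‖t‖ / R < ‖x‖ := by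
          have : ContinuousAt (fun t : ℂ => ‖t‖ / R) 0 := by fun_prop
          refine this.eventually_lt continuousAt_const ?_
          simpa using hx0
        have e2 : ∀ᶠ t in 𝓝 (0 : ℂ), ‖t / x‖ ^ l < σ * ‖x‖ ^ k := by
          have : ContinuousAt (fun t : ℂ => ‖t / x‖ ^ l) 0 := by fun_prop
          refine this.eventually_lt continuousAt_const ?_
          simpa only [zero_div] using hzero x hx0
        filter_upwards [e1, e2] with t h1 h2
        exact ⟨⟨h1, hx.2⟩, Or.inl h2⟩
      have hFt : Tendsto (fun t : ℂ => F x (t / x)) (𝓝[≠] 0) (𝓝 (F x 0)) := by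
        have hca : ContinuousWithinAt (fun v : ℂ × ℂ => F v.1 v.2) {v | ‖v.1‖ ≤ R ∧ ‖v.2‖ ≤ R} (x, 0) :=
          h.cont R hR hRR₀ (x, 0) ⟨hx.2.le, by simpa using hR.le⟩
        refine hca.tendsto.comp (f := fun t : ℂ => (x, t / x)) (tendsto_nhdsWithin_iff.2 ⟨?_, ?_⟩)
        · exact (tendsto_const_nhds.prodMk_nhds ht0).mono_left nhdsWithin_le_nhds
        · filter_upwards [hev] with t ht
          exact ⟨hx.2.le, (hDx t x ht.1).2.2.le⟩
      have hFne : ‖F x 0‖ ≠ 0 := by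
        have h1 := hgood x 0 hx0 hx.2 (by simpa using hR) (Or.inl (hzero x hx0))
        have hxp := hx.1
        have : 0 < δ * ‖x‖ ^ k := by positivity
        linarith
      have hlim : Tendsto (fun t => f t x) (𝓝[≠] 0) (𝓝 (ENNReal.ofReal (‖F x 0‖ ^ (-(2 * c))))) :=
        ENNReal.tendsto_ofReal (hFt.norm.rpow_const (Or.inl hFne))
      refine hlim.congr' ?_
      filter_upwards [hev] with t ht
      rw [indicator_of_mem ht]
  obtain ⟨M, hM, ε, hε, hC⟩ := h.regionC c hc0 hc1 σ hσ
  set e : ℝ := 2 * l * (1 - c * k) / (k + l) with he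
  have hkl : (0 : ℝ) < (k : ℝ) + l := by positivity
  have he0 : 0 < e := by
    have : 0 < 1 - c * k := by linarith
    have : (0 : ℝ) < l := by exact_mod_cast hl
    positivity
  have hrest : Tendsto (fun t => ∫⁻ x in D t \ Gd t, f t x) (𝓝[≠] 0) (𝓝 0) := by
    have hb0 : Tendsto (fun t : ℂ => ENNReal.ofReal (‖t‖ ^ e) * M) (𝓝[≠] 0) (𝓝 0) := by
      have h1 : Tendsto (fun t : ℂ => ‖t‖ ^ e) (𝓝 0) (𝓝 0) := by
        have : ContinuousAt (fun t : ℂ => ‖t‖ ^ e) 0 :=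
          continuousAt_id.norm.rpow_const (Or.inr he0.le)
        simpa [ContinuousAt, Real.zero_rpow he0.ne'] using this
      have h2 := ENNReal.Tendsto.mul_const (ENNReal.tendsto_ofReal h1) (Or.inr hM)
      simp only [ENNReal.ofReal_zero, zero_mul] at h2
      exact h2.mono_left nhdsWithin_le_nhds
    refine tendsto_of_tendsto_of_tendsto_of_le_of_le' tendsto_const_nhds hb0
      (Eventually.of_forall fun _ => zero_le) ?_
    have hsmall : ∀ᶠ t in 𝓝[≠] (0 : ℂ), ‖t‖ < ε ^ (k + l) := by
      refine Filter.Eventually.filter_mono nhdsWithin_le_nhds ?_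
      filter_upwards [ball_mem_nhds (0 : ℂ) (pow_pos hε (k + l))] with t ht
      exact mem_ball_zero_iff.1 ht
    filter_upwards [hsmall, self_mem_nhdsWithin] with t ht ht0
    obtain ⟨u, rfl⟩ := IsAlgClosed.exists_pow_nat_eq t (show 0 < k + l by omega)
    have hu : u ≠ 0 := by
      rintro rfl
      exact ht0 (by simp [hk.ne'])
    have hup : 0 < ‖u‖ := norm_pos_iff.2 hu
    have huε : ‖u‖ < ε := by
      rw [norm_pow] at ht
      exact lt_of_pow_lt_pow_left₀ _ hε.le ht
    have hpow : ‖u ^ (k + l)‖ ^ e = ‖u‖ ^ (2 * l * (1 - c * k)) := by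
      rw [norm_pow, ← Real.rpow_natCast, ← Real.rpow_mul hup.le]
      congr 1
      rw [he]; push_cast; field_simp
    rw [hpow]
    refine le_trans (lintegral_mono_set ?_) (hC u hu huε)
    rintro x ⟨hxD, hxG⟩
    obtain ⟨hx0, -, -⟩ := hDx _ x hxD
    have hxG' : ¬ (‖u ^ (k + l) / x‖ ^ l < σ * ‖x‖ ^ k ∨ ‖x‖ ^ k < σ * ‖u ^ (k + l) / x‖ ^ l) := hxG
    push Not at hxG'
    set ξ := x / u ^ l with hξ
    have hxξ : x = u ^ l * ξ := by rw [hξ]; field_simp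
    have hξ0 : ξ ≠ 0 := div_ne_zero hx0 (pow_ne_zero _ hu)
    have hξp : 0 < ‖ξ‖ := norm_pos_iff.2 hξ0
    have e1 : ‖x‖ ^ k = ‖u‖ ^ (k * l) * ‖ξ‖ ^ k := by
      rw [hxξ, norm_mul, norm_pow, mul_pow, ← pow_mul, mul_comm l k]
    have e2 : ‖u ^ (k + l) / x‖ ^ l = ‖u‖ ^ (k * l) * (‖ξ‖ ^ l)⁻¹ := by
      have : u ^ (k + l) / x = u ^ k * ξ⁻¹ := by rw [hxξ, pow_add]; field_simp
      rw [this, norm_mul, norm_pow, norm_inv, mul_pow, ← pow_mul, inv_pow]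
    rw [e1, e2] at hxG'
    have hupow : 0 < ‖u‖ ^ (k * l) := by positivity
    have hlp : 0 < ‖ξ‖ ^ l := by positivity
    have f1 : σ * ‖ξ‖ ^ (k + l) ≤ 1 := by
      have : ‖u‖ ^ (k * l) * (σ * ‖ξ‖ ^ k) ≤ ‖u‖ ^ (k * l) * (‖ξ‖ ^ l)⁻¹ := by linarith [hxG'.1]
      have := le_of_mul_le_mul_left this hupow
      rw [← one_div, le_div_iff₀ hlp] at this
      rw [pow_add]; linarith
    have f2 : σ ≤ ‖ξ‖ ^ (k + l) := by
      have : ‖u‖ ^ (k * l) * (σ * (‖ξ‖ ^ l)⁻¹) ≤ ‖u‖ ^ (k * l) * ‖ξ‖ ^ k := by linarith [hxG'.2]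
      have := le_of_mul_le_mul_left this hupow
      rw [← div_eq_mul_inv, div_le_iff₀ hlp] at this
      rw [pow_add]; linarith
    refine ⟨ξ, ⟨?_, ?_⟩, hxξ.symm⟩
    · by_contra hlt
      push Not at hlt
      have := pow_le_of_le_one hξp.le (hlt.le.trans hσ1) (show k + l ≠ 0 by omega)
      linarith
    · rw [le_inv_comm₀ hξp hσ, ← one_div, le_div_iff₀ hξp]
      rcases le_total ‖ξ‖ 1 with hle | hle
      · nlinarith
      · have := le_self_pow₀ hle (show k + l ≠ 0 by omega)
        nlinarith
  have hsum := hmain.add hrest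
  rw [add_zero] at hsum
  refine hsum.congr fun t => ?_
  have hsub : D t ∩ Gd t ⊆ D₀ := fun x hx => ⟨norm_pos_iff.2 (hDx t x hx.1).1, hx.1.2⟩
  rw [setLIntegral_indicator ((hDm t).inter (hGm t)), inter_eq_left.2 hsub,
    lintegral_inter_add_sdiff _ _ (hGm t)]


lemma flip_integral (F : ℂ → ℂ → ℂ) (c R : ℝ) (hR : 0 < R) (t : ℂ) (ht : t ≠ 0) :
    ∫⁻ x in {x : ℂ | ‖t‖ / R < ‖x‖ ∧ ‖x‖ < R},
      ENNReal.ofReal (‖t‖ ^ 2 / ‖x‖ ^ 4) * ENNReal.ofReal (‖F x (t / x)‖ ^ (-(2 * c))) =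
    ∫⁻ y in {x : ℂ | ‖t‖ / R < ‖x‖ ∧ ‖x‖ < R}, ENNReal.ofReal (‖F (t / y) y‖ ^ (-(2 * c))) := by
  set D : Set ℂ := {x : ℂ | ‖t‖ / R < ‖x‖ ∧ ‖x‖ < R} with hD
  have htp : 0 < ‖t‖ := norm_pos_iff.2 ht
  have hDm : MeasurableSet D :=
    (measurableSet_lt measurable_const measurable_norm).inter
      (measurableSet_lt measurable_norm measurable_const)
  have hp : ∀ x ∈ D, 0 < ‖x‖ := fun x hx => lt_of_le_of_lt (by positivity) hx.1
  have h0 : ∀ x ∈ D, x ≠ 0 := fun x hx => norm_pos_iff.1 (hp x hx)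
  have hmaps : ∀ x ∈ D, t / x ∈ D := by
    intro x hx
    have := hp x hx
    refine ⟨?_, ?_⟩
    · rw [norm_div]
      exact div_lt_div_of_pos_left htp this hx.2
    · rw [norm_div, div_lt_iff₀ this, mul_comm]
      exact (div_lt_iff₀ hR).1 hx.1
  have himg : (fun x => t / x) '' D = D := by
    refine Subset.antisymm (image_subset_iff.2 hmaps) fun y hy => ⟨t / y, hmaps y hy, ?_⟩
    have := h0 y hy
    field_simp
  conv_rhs => rw [← himg]
  rw [cov_complex hDm (f' := fun x => -(t / x ^ 2))]
  · refine setLIntegral_congr_fun hDm fun x hx => ?_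
    have hx0 := h0 x hx
    have e1 : t / (t / x) = x := by field_simp
    simp only [e1]
    congr 2
    rw [norm_neg, norm_div, norm_pow, div_pow, ← pow_mul]
  · intro x hx
    have := (hasDerivAt_inv (h0 x hx)).const_mul t
    have e : t * -(x ^ 2)⁻¹ = -(t / x ^ 2) := by rw [div_eq_mul_inv, mul_neg]
    rw [e] at this
    simpa only [div_eq_mul_inv] using this
  · intro x hx y hy hxy
    have hx0 := h0 x hx
    have hy0 := h0 y hy
    simp only at hxy
    field_simp at hxy
    exact hxy.symm

lemma Hyp.main {R₀ : ℝ} {a : ℕ → ℕ → ℂ} {F : ℂ → ℂ → ℂ} {k l : ℕ} (h : Hyp R₀ a F k l)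
    (c : ℝ) (hc0 : 0 < c) (hc1 : c < 1 / (max k l : ℕ)) :
    ∃ R : ℝ, 0 < R ∧ R ≤ R₀ ∧ fiberIntegral F c R 0 < ⊤ ∧
      Filter.Tendsto (fun t : ℂ => fiberIntegral F c R t)
        (nhdsWithin 0 {0}ᶜ) (nhds (fiberIntegral F c R 0)) := by
  have hmax : (0 : ℝ) < (max k l : ℕ) := by exact_mod_cast lt_max_of_lt_left h.hk
  have hc2 : c * (max k l : ℕ) < 1 := (lt_div_iff₀ hmax).1 hc1
  obtain ⟨r₁, hr₁, h1⟩ := h.half c hc0 hc2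
  obtain ⟨r₂, hr₂, h2⟩ := h.swap.half c hc0 (by rwa [max_comm])
  set R := min (min r₁ r₂) (R₀ / 2) with hRdef
  have hR : 0 < R := lt_min (lt_min hr₁ hr₂) (half_pos h.hR₀)
  have hRR₀ : R < R₀ := lt_of_le_of_lt (min_le_right _ _) (half_lt_self h.hR₀)
  obtain ⟨f1, t1⟩ := h1 R hR ((min_le_left _ _).trans (min_le_left _ _))
  obtain ⟨f2, t2⟩ := h2 R hR ((min_le_left _ _).trans (min_le_right _ _))
  have hz : fiberIntegral F c R 0 =
      (∫⁻ x in {x : ℂ | 0 < ‖x‖ ∧ ‖x‖ < R}, ENNReal.ofReal (‖F x 0‖ ^ (-(2 * c)))) +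
      (∫⁻ y in {y : ℂ | 0 < ‖y‖ ∧ ‖y‖ < R}, ENNReal.ofReal (‖F 0 y‖ ^ (-(2 * c)))) := by
    rw [fiberIntegral, if_pos rfl]
  refine ⟨R, hR, hRR₀.le, ?_, ?_⟩
  · rw [hz]
    exact ENNReal.add_lt_top.2 ⟨f1.lt_top, f2.lt_top⟩
  · rw [hz]
    refine (t1.add t2).congr' ?_
    filter_upwards [self_mem_nhdsWithin] with t ht
    have ht0 : t ≠ 0 := ht
    rw [fiberIntegral, if_neg ht0, ← flip_integral F c R hR t ht0, add_comm]
    have hm : Measurable fun x : ℂ => ENNReal.ofReal (‖t‖ ^ 2 / ‖x‖ ^ 4) := by fun_prop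
    have hDm : MeasurableSet {x : ℂ | ‖t‖ / R < ‖x‖ ∧ ‖x‖ < R} :=
      (measurableSet_lt measurable_const measurable_norm).inter
        (measurableSet_lt measurable_norm measurable_const)
    have hc : ContinuousOn (fun x : ℂ => F x (t / x)) {x : ℂ | ‖t‖ / R < ‖x‖ ∧ ‖x‖ < R} := by
      refine (h.cont R hR hRR₀).comp (f := fun x : ℂ => (x, t / x)) ?_ ?_
      · refine continuousOn_id.prodMk (continuousOn_const.div continuousOn_id fun x hx => ?_)
        exact norm_pos_iff.1 (lt_of_le_of_lt (by positivity) hx.1)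
      · intro x hx
        have hxp : 0 < ‖x‖ := lt_of_le_of_lt (by positivity) hx.1
        refine ⟨hx.2.le, ?_⟩
        show ‖t / x‖ ≤ R
        rw [norm_div, div_le_iff₀ hxp, mul_comm]
        exact ((div_lt_iff₀ hR).1 hx.1).le
    have hfm : AEMeasurable (fun x : ℂ => ENNReal.ofReal (‖F x (t / x)‖ ^ (-(2 * c))))
        (volume.restrict {x : ℂ | ‖t‖ / R < ‖x‖ ∧ ‖x‖ < R}) :=
      ((hc.aemeasurable hDm).norm.pow_const _).ennreal_ofReal
    rw [← lintegral_add_right' _ hfm]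
    refine setLIntegral_congr_fun hDm fun x _ => ?_
    rw [add_mul, one_mul, ENNReal.ofReal_add (by positivity) (by positivity),
      ENNReal.ofReal_mul (by positivity), add_comm]


end

/-- Stability of integrals along the fibers of `π(x,y) = xy` for an `F` whose Newton
polygon is the single segment joining `(k,0)` and `(0,l)`: for every
`0 < c < 1/max(k,l)` there is `R ∈ (0, R₀]` with `K_0(R) < ∞` and
`lim_{t→0} K_t(R) = K_0(R)`. -/
theorem stability_of_fiber_integrals_irreducible
    (R₀ : ℝ) (hR₀ : 0 < R₀) (a : ℕ → ℕ → ℂ) (F : ℂ → ℂ → ℂ)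
    (hconv : ∀ x y : ℂ, ‖x‖ < R₀ → ‖y‖ < R₀ →
      Summable (fun mn : ℕ × ℕ => ‖a mn.1 mn.2‖ * ‖x‖ ^ mn.1 * ‖y‖ ^ mn.2))
    (hF : ∀ x y : ℂ, ‖x‖ < R₀ → ‖y‖ < R₀ →
      F x y = ∑' mn : ℕ × ℕ, a mn.1 mn.2 * x ^ mn.1 * y ^ mn.2)
    (k l : ℕ) (hk : 0 < k) (hl : 0 < l)
    (hak : a k 0 ≠ 0) (hal : a 0 l ≠ 0)
    (hNewton : ∀ m n : ℕ, l * m + k * n < k * l → a m n = 0)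
    (c : ℝ) (hc0 : 0 < c) (hc1 : c < 1 / (max k l : ℕ)) :
    ∃ R : ℝ, 0 < R ∧ R ≤ R₀ ∧ fiberIntegral F c R 0 < ⊤ ∧
      Filter.Tendsto (fun t : ℂ => fiberIntegral F c R t)
        (nhdsWithin 0 {0}ᶜ) (nhds (fiberIntegral F c R 0)) := by
  exact Hyp.main ⟨hR₀, hconv, hF, hk, hl, hak, hal, hNewton⟩ c hc0 hc1
end

section
/- Let R₀ > 0 and let F(x,y) = Σ_{m,n≥0} a_{m,n} x^m y^n be given by a power series converging absolutely on the polydisc {(x,y) ∈ ℂ² : |x| < R₀, |y| < R₀}. Assume F(·,0) and F(0,·) are not identically zero, and let k := min{m : a_{m,0} ≠ 0} and l := min{n : a_{0,n} ≠ 0}. Then for every real c > 0 with c·k < 1 and c·l < 1, there exist R ∈ (0, R₀], δ > 0 and M > 0 such that K_t(R) ≤ M for all t ∈ ℂ with |t| ≤ δ. -/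
open MeasureTheory
open scoped ENNReal

/-- divided difference of `z ^ j` -/
noncomputable def ddT (z : ℕ → ℂ) (p : ℕ) (j : ℤ) : ℂ :=
  ∑ i ∈ Finset.range (p+1), z i ^ j / ∏ i' ∈ (Finset.range (p+1)).erase i, (z i - z i')

lemma ddT_zero (z : ℕ → ℂ) (p : ℕ) (hz : Set.InjOn z (Finset.range (p+1) : Finset ℕ)) :
    ddT z p 0 = (Ring.choose (0:ℤ) p : ℤ) := by
  have h := Lagrange.coeff_eq_sum (s := Finset.range (p+1)) (v := z) hz (P := 1) (by
    rw [Polynomial.degree_one]; simp; exact_mod_cast Nat.succ_pos p)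
  simp only [Polynomial.eval_one, Finset.card_range, Nat.add_sub_cancel, Polynomial.coeff_one] at h
  rw [ddT, Ring.choose_zero_ite]
  simp only [zpow_zero]
  rw [← h]
  split_ifs <;> simp

lemma ddT_succ (z : ℕ → ℂ) (p : ℕ) (hz : Set.InjOn z (Finset.range (p+2) : Finset ℕ))
    (h0 : ∀ i, z i ≠ 0) (j : ℤ) :
    ddT z (p+1) (j+1) = z (p+1) * ddT z (p+1) j + ddT z p j := by
  have key : ddT z (p+1) (j+1) - z (p+1) * ddT z (p+1) j = ddT z p j := by
    unfold ddT
    rw [Finset.mul_sum, ← Finset.sum_sub_distrib, Finset.sum_range_succ]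
    have hl : z (p+1) ^ (j+1) / ∏ i' ∈ (Finset.range (p+1+1)).erase (p+1), (z (p+1) - z i')
      - z (p+1) * (z (p+1) ^ j / ∏ i' ∈ (Finset.range (p+1+1)).erase (p+1), (z (p+1) - z i')) = 0 := by
      rw [zpow_add_one₀ (h0 _)]; ring
    rw [hl, add_zero]
    apply Finset.sum_congr rfl
    intro i hi
    have hi' : i < p + 1 := Finset.mem_range.1 hi
    have e : (Finset.range (p+1+1)).erase i = insert (p+1) ((Finset.range (p+1)).erase i) := by
      ext x; simp; omega
    rw [e, Finset.prod_insert (by simp)]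
    have hne : z i - z (p+1) ≠ 0 := by
      intro h
      have := hz (by simp; omega) (by simp) (sub_eq_zero.1 h)
      omega
    rw [zpow_add_one₀ (h0 _)]
    have hP : ∏ i' ∈ (Finset.range (p+1)).erase i, (z i - z i') ≠ 0 := by
      rw [Finset.prod_ne_zero_iff]
      intro x hx h
      simp at hx
      have := hz (by simp; omega) (by simp; omega) (sub_eq_zero.1 h)
      omega
    field_simp
  rw [← key]; ring

lemma ddT_base (z : ℕ → ℂ) (j : ℤ) : ddT z 0 j = z 0 ^ j := by
  simp [ddT]

lemma choose_bound (p : ℕ) : ∀ j : ℤ, |(Ring.choose j p : ℤ)| ≤ 8 ^ (j.natAbs + p) := by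
  induction p with
  | zero => intro j; rw [Ring.choose_zero_right]; simp; exact one_le_pow₀ (by norm_num)
  | succ p ih =>
    intro j
    induction j using Int.induction_on with
    | zero => rw [Ring.choose_zero_ite]; simp
    | succ i hi =>
      rw [Ring.choose_succ_succ]
      have h1 := ih i
      have e : ((i:ℤ)+1).natAbs = i + 1 := by omega
      rw [e]
      simp only [Int.natAbs_natCast] at h1 hi
      have := abs_add_le (Ring.choose (i:ℤ) p) (Ring.choose (i:ℤ) (p+1))
      have h3 : (8:ℤ) ^ (i + 1 + (p+1)) = 64 * 8 ^ (i+p) := by ring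
      have h4 : (8:ℤ) ^ (i + (p+1)) = 8 * 8 ^ (i+p) := by ring
      have : (0:ℤ) < 8 ^ (i+p) := by positivity
      linarith
    | pred i hi =>
      have h2 := Ring.choose_succ_succ (-(i:ℤ) - 1) p
      rw [sub_add_cancel] at h2
      have h1 := ih (-(i:ℤ) - 1)
      have e : (-(i:ℤ)-1).natAbs = i + 1 := by omega
      rw [e] at h1 ⊢
      have e' : (-(i:ℤ)).natAbs = i := by omega
      rw [e'] at hi
      have h5 : Ring.choose (-(i:ℤ) - 1) (p+1) = Ring.choose (-(i:ℤ)) (p+1) - Ring.choose (-(i:ℤ) - 1) p := by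
        rw [h2]; ring
      rw [h5]
      have := abs_sub (Ring.choose (-(i:ℤ)) (p+1)) (Ring.choose (-(i:ℤ) - 1) p)
      have h3 : (8:ℤ) ^ (i + 1 + (p+1)) = 64 * 8 ^ (i+p) := by ring
      have h4 : (8:ℤ) ^ (i + (p+1)) = 8 * 8 ^ (i+p) := by ring
      have h6 : (8:ℤ) ^ (i + 1 + p) = 8 * 8 ^ (i+p) := by ring
      have : (0:ℤ) < 8 ^ (i+p) := by positivity
      linarith

lemma choose_bound' (p : ℕ) (j : ℤ) : ‖((Ring.choose j p : ℤ) : ℂ)‖ ≤ 8 ^ (j.natAbs + p) := by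
  rw [Complex.norm_intCast]
  exact_mod_cast choose_bound p j

/-- abstract recursion step used both for `p = 0` and `p+1`. -/
lemma ddT_approx (z : ℕ → ℂ) (ρ : ℝ) (hρ : ρ ≤ 1/2) (hzρ : ∀ i, ‖z i - 1‖ ≤ ρ) (p : ℕ) 
    (hz : Set.InjOn z (Finset.range (p+1) : Finset ℕ)) :
    ∀ j : ℤ, ‖ddT z p j - (Ring.choose j p : ℤ)‖ ≤ ρ * 32 ^ (j.natAbs + p) := by
  have hρ0 : 0 ≤ ρ := (norm_nonneg _).trans (hzρ 0)
  have hup : ∀ i, ‖z i‖ ≤ 3/2 := fun i => by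
    have := norm_add_le (z i - 1) 1
    rw [sub_add_cancel, norm_one] at this
    linarith [hzρ i]
  have hlo : ∀ i, 1/2 ≤ ‖z i‖ := fun i => by
    have := norm_sub_norm_le 1 (1 - z i)
    rw [sub_sub_cancel, norm_one, norm_sub_rev] at this
    linarith [hzρ i]
  have h0 : ∀ i, z i ≠ 0 := fun i h => by
    have := hlo i; rw [h, norm_zero] at this; linarith
  -- generic step
  have step : ∀ (i : ℕ) (A A' B : ℂ) (b b' : ℂ) (a : ℂ), A' = z i * A + B → b' = b + a →
      A' - b' = z i * (A - b) + (B - a) + (z i - 1) * b := by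
    intros; subst_vars; ring
  have stepup : ∀ (i : ℕ) (A A' B : ℂ) (b b' : ℂ) (a : ℂ), A' = z i * A + B → b' = b + a →
      ‖A' - b'‖ ≤ 3/2 * ‖A - b‖ + ‖B - a‖ + ρ * ‖b‖ := by
    intro i A A' B b b' a h1 h2
    rw [step i A A' B b b' a h1 h2]
    refine (norm_add₃_le).trans ?_
    rw [norm_mul, norm_mul]
    gcongr
    · exact hup i
    · exact hzρ i
  have stepdn : ∀ (i : ℕ) (A A' B : ℂ) (b b' : ℂ) (a : ℂ), A' = z i * A + B → b' = b + a →
      ‖A - b‖ ≤ 2 * (‖A' - b'‖ + ‖B - a‖ + ρ * ‖b‖) := by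
    intro i A A' B b b' a h1 h2
    have e : z i * (A - b) = (A' - b') - (B - a) - (z i - 1) * b := by
      rw [step i A A' B b b' a h1 h2]; ring
    have : ‖z i * (A - b)‖ ≤ ‖A' - b'‖ + ‖B - a‖ + ρ * ‖b‖ := by
      rw [e]
      refine (norm_sub_le _ _).trans ?_
      gcongr
      · exact norm_sub_le _ _
      · rw [norm_mul]; gcongr; exact hzρ i
    rw [norm_mul] at this
    have h5 := mul_le_mul_of_nonneg_right (hlo i) (norm_nonneg (A - b))
    linarith
  induction p with
  | zero =>
    intro j
    induction j using Int.induction_on with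
    | zero => rw [ddT_zero z 0 hz]; simp; exact hρ0
    | succ i hi =>
      have e : ((i:ℤ)+1).natAbs = i + 1 := by omega
      have := stepup 0 (ddT z 0 i) (ddT z 0 (i+1)) 0 (Ring.choose (i:ℤ) 0 : ℤ) (Ring.choose ((i:ℤ)+1) 0 : ℤ) 0
        (by rw [ddT_base, ddT_base, zpow_add_one₀ (h0 _)]; ring) (by simp)
      refine this.trans ?_
      rw [e]
      simp only [Int.natAbs_natCast] at hi
      simp only [Ring.choose_zero_right] at hi ⊢
      simp only [Int.cast_one, norm_one, sub_zero, norm_zero, add_zero] at hi ⊢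
      have h3 : (32:ℝ) ^ (i + 1) = 32 * 32 ^ i := by ring
      have h4 : (1:ℝ) ≤ 32 ^ i := one_le_pow₀ (by norm_num)
      rw [h3]
      nlinarith
    | pred i hi =>
      have e : (-(i:ℤ)-1).natAbs = i + 1 := by omega
      have e' : (-(i:ℤ)).natAbs = i := by omega
      have := stepdn 0 (ddT z 0 (-(i:ℤ)-1)) (ddT z 0 (-(i:ℤ))) 0 (Ring.choose (-(i:ℤ)-1) 0 : ℤ) (Ring.choose (-(i:ℤ)) 0 : ℤ) 0
        (by rw [ddT_base, ddT_base, zpow_sub_one₀ (h0 _)]; have := h0 0; field_simp; simp) (by simp)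
      refine this.trans ?_
      rw [e]
      rw [e'] at hi
      simp only [Ring.choose_zero_right] at hi ⊢
      simp only [Int.cast_one, norm_one, sub_zero, norm_zero, add_zero] at hi ⊢
      have h3 : (32:ℝ) ^ (i + 1) = 32 * 32 ^ i := by ring
      have h4 : (1:ℝ) ≤ 32 ^ i := one_le_pow₀ (by norm_num)
      rw [h3]
      nlinarith
  | succ p ih =>
    have ih := ih (hz.mono (by intro x; simp; omega))
    intro j
    induction j using Int.induction_on with
    | zero => rw [ddT_zero z (p+1) hz]; simp; positivity
    | succ i hi =>
      have e : ((i:ℤ)+1).natAbs = i + 1 := by omega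
      have := stepup (p+1) _ _ _ (Ring.choose (i:ℤ) (p+1) : ℤ) (Ring.choose ((i:ℤ)+1) (p+1) : ℤ) (Ring.choose (i:ℤ) p : ℤ)
        (ddT_succ z p hz h0 i) (by rw [Ring.choose_succ_succ]; push_cast; ring)
      refine this.trans ?_
      have h1 := ih i
      have h2 := choose_bound' (p+1) (i:ℤ)
      rw [e]
      simp only [Int.natAbs_natCast] at hi h1 h2
      have h8 : (8:ℝ) ^ (i + (p+1)) ≤ 32 ^ (i+(p+1)) := by gcongr; norm_num
      have h3 : (32:ℝ) ^ (i + 1 + (p+1)) = 32 * 32 ^ (i + (p+1)) := by ring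
      have h4 : (32:ℝ) ^ (i + p) ≤ 32 ^ (i+(p+1)) := by gcongr <;> norm_num
      have h5 := mul_le_mul_of_nonneg_left (h2.trans h8) hρ0
      have h6 := mul_le_mul_of_nonneg_left h4 hρ0
      rw [h3]
      have : 0 ≤ ρ * (32:ℝ) ^ (i+(p+1)) := by positivity
      linarith
    | pred i hi =>
      have e : (-(i:ℤ)-1).natAbs = i + 1 := by omega
      have e' : (-(i:ℤ)).natAbs = i := by omega
      have := stepdn (p+1) (ddT z (p+1) (-(i:ℤ)-1)) (ddT z (p+1) (-(i:ℤ))) (ddT z p (-(i:ℤ)-1))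
        (Ring.choose (-(i:ℤ)-1) (p+1) : ℤ) (Ring.choose (-(i:ℤ)) (p+1) : ℤ) (Ring.choose (-(i:ℤ)-1) p : ℤ)
        (by have := ddT_succ z p hz h0 (-(i:ℤ)-1); rwa [sub_add_cancel] at this)
        (by have := Ring.choose_succ_succ (-(i:ℤ)-1) p
            rw [sub_add_cancel] at this; rw [this]; push_cast; ring)
      refine this.trans ?_
      have h1 := ih (-(i:ℤ)-1)
      have h2 := choose_bound' (p+1) (-(i:ℤ)-1)
      rw [e] at h1 h2 ⊢
      rw [e'] at hi
      have h8 : (8:ℝ) ^ (i + 1 + (p+1)) ≤ 64 * 32 ^ (i+p) := by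
        have : (8:ℝ) ^ (i+p) ≤ 32 ^ (i+p) := by gcongr; norm_num
        calc (8:ℝ) ^ (i + 1 + (p+1)) = 64 * 8 ^ (i+p) := by ring
          _ ≤ _ := by linarith
      have h3 : (32:ℝ) ^ (i + 1 + (p+1)) = 1024 * 32 ^ (i + p) := by ring
      have h4 : (32:ℝ) ^ (i + 1 + p) = 32 * 32 ^ (i + p) := by ring
      have h4' : (32:ℝ) ^ (i + (p+1)) = 32 * 32 ^ (i + p) := by ring
      have h5 := mul_le_mul_of_nonneg_left (h2.trans h8) hρ0
      rw [h4] at h1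
      rw [h4'] at hi
      rw [h3]
      have : 0 ≤ ρ * (32:ℝ) ^ (i+p) := by positivity
      linarith

/-- polynomial with prescribed integer roots in the binomial basis -/
lemma exists_binom_coeffs (J : Finset ℤ) : ∃ q : ℕ → ℂ, ∀ j : ℤ,
    ((∏ a ∈ J, (j - a) : ℤ) : ℂ) = ∑ p ∈ Finset.range (J.card + 1), q p * (Ring.choose j p : ℤ) := by
  have hstep : ∀ (j a : ℤ) (p : ℕ), (j - a) * Ring.choose j p =
      (p+1) * Ring.choose j (p+1) + (p - a) * Ring.choose j p := by
    intro j a p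
    have h := Ring.choose_smul_choose j (n := p+1) (k := p) (by omega)
    simp at h
    linear_combination -h
  classical
  induction J using Finset.induction_on with
  | empty => exact ⟨fun _ => 1, fun j => by simp⟩
  | insert a J ha ih =>
    obtain ⟨q, hq⟩ := ih
    refine ⟨fun p => (if p = 0 then 0 else q (p-1) * p) + (if p ≤ J.card then q p * (p - a) else 0), fun j => ?_⟩
    rw [Finset.prod_insert ha, Int.cast_mul, hq, Finset.card_insert_of_notMem ha, Finset.mul_sum]
    simp only [add_mul, Finset.sum_add_distrib]
    rw [Finset.sum_range_succ' (fun p => (if p = 0 then (0:ℂ) else q (p-1) * p) * (Ring.choose j p : ℤ)),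
      Finset.sum_range_succ (fun p => (if p ≤ J.card then q p * ((p:ℂ) - a) else 0) * (Ring.choose j p : ℤ))]
    simp only [Nat.add_eq_zero_iff, one_ne_zero, and_false, if_false, Nat.add_sub_cancel, if_true, zero_mul, add_zero,
      if_neg (show ¬ (J.card + 1 ≤ J.card) by omega)]
    rw [← Finset.sum_add_distrib]
    apply Finset.sum_congr rfl
    intro p hp
    rw [if_pos (by simp at hp; omega)]
    have := congrArg (fun n : ℤ => (n:ℂ)) (hstep j a p)
    push_cast at this ⊢
    linear_combination q p * this

lemma functional_exists (J : Finset ℤ) (N : ℕ) (hJ : J.card ≤ N) : ∃ K : ℝ, 0 < K ∧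
    (∀ j : ℤ, ‖((∏ a ∈ J, (j - a) : ℤ) : ℂ)‖ ≤ K * 32 ^ j.natAbs) ∧
    ∀ (ρ d : ℝ) (z : ℕ → ℂ), ρ ≤ 1/2 → 0 < d → d ≤ 1 → (∀ i, ‖z i - 1‖ ≤ ρ) →
    (∀ i ≤ N, ∀ i' ≤ N, i ≠ i' → d ≤ ‖z i - z i'‖) →
    ∃ w : ℕ → ℂ, (∑ i ∈ Finset.range (N+1), ‖w i‖) ≤ K / d ^ N ∧
      ∀ j : ℤ, ‖(∑ i ∈ Finset.range (N+1), w i * z i ^ j) - ((∏ a ∈ J, (j - a) : ℤ) : ℂ)‖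
        ≤ K * ρ * 32 ^ j.natAbs := by
  obtain ⟨q, hq⟩ := exists_binom_coeffs J
  set S : ℝ := ∑ p ∈ Finset.range (J.card + 1), ‖q p‖ with hS
  have hS0 : 0 ≤ S := Finset.sum_nonneg (fun _ _ => norm_nonneg _)
  refine ⟨(N+1) * S * 32 ^ N + 1, by positivity, ?_, ?_⟩
  · intro j
    rw [hq j]
    have h1 : ‖∑ p ∈ Finset.range (J.card + 1), q p * ((Ring.choose j p : ℤ) : ℂ)‖ ≤
        ∑ p ∈ Finset.range (J.card + 1), ‖q p‖ * (32 ^ N * 32 ^ j.natAbs) := by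
      refine norm_sum_le_of_le _ (fun p hp => ?_)
      rw [norm_mul]
      gcongr
      refine (choose_bound' p j).trans ?_
      have hp' : p ≤ N := by simp at hp; omega
      calc (8:ℝ) ^ (j.natAbs + p) ≤ 32 ^ (j.natAbs + p) := by gcongr; norm_num
        _ ≤ 32 ^ (j.natAbs + N) := by gcongr; norm_num
        _ = _ := by ring
    rw [← Finset.sum_mul, ← hS] at h1
    refine h1.trans ?_
    have h3 : S * (32 ^ N * 32 ^ j.natAbs) ≤ (N+1) * (S * (32 ^ N * 32 ^ j.natAbs)) := by
      apply le_mul_of_one_le_left (by positivity)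
      have : (0:ℝ) ≤ N := by positivity
      linarith
    have : (0:ℝ) ≤ 32 ^ j.natAbs := by positivity
    linarith
  · intro ρ d z hρ hd hd1 hzρ hsep
    have hρ0 : 0 ≤ ρ := (norm_nonneg _).trans (hzρ 0)
    have hinj : ∀ p ≤ N, Set.InjOn z (Finset.range (p+1) : Finset ℕ) := by
      intro p hp i hi i' hi' h
      by_contra hne
      simp at hi hi'
      have := hsep i (by omega) i' (by omega) hne
      rw [h, sub_self, norm_zero] at this
      linarith
    let cf : ℕ → ℕ → ℂ := fun p i => if i < p + 1 then
      q p / ∏ i' ∈ (Finset.range (p+1)).erase i, (z i - z i') else 0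
    refine ⟨fun i => ∑ p ∈ Finset.range (J.card + 1), cf p i, ?_, ?_⟩
    · have hcf : ∀ p ∈ Finset.range (J.card + 1), ∀ i, ‖cf p i‖ ≤ ‖q p‖ / d ^ N := by
        intro p hp i
        have hp' : p ≤ N := by simp at hp; omega
        simp only [cf]
        split_ifs with hi
        · rw [norm_div, norm_prod]
          gcongr
          calc d ^ N ≤ d ^ p := pow_le_pow_of_le_one hd.le hd1 hp'
            _ = ∏ i' ∈ (Finset.range (p+1)).erase i, d := by
              rw [Finset.prod_const, Finset.card_erase_of_mem (by simpa using hi)]; simp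
            _ ≤ _ := by
              apply Finset.prod_le_prod (fun _ _ => hd.le)
              intro i' hi'
              simp at hi'
              exact hsep i (by omega) i' (by omega) (fun h => hi'.1 h.symm)
        · rw [norm_zero]; positivity
      calc _ ≤ ∑ i ∈ Finset.range (N+1), ∑ p ∈ Finset.range (J.card + 1), ‖q p‖ / d ^ N :=
            Finset.sum_le_sum fun i _ => norm_sum_le_of_le _ (fun p hp => hcf p hp i)
        _ = (N+1) * (S / d ^ N) := by
          rw [Finset.sum_const, Finset.card_range, ← Finset.sum_div, ← hS]; simp
        _ ≤ _ := by
          rw [← mul_div_assoc]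
          gcongr
          have : (1:ℝ) ≤ 32 ^ N := one_le_pow₀ (by norm_num)
          have h3 := le_mul_of_one_le_right (show 0 ≤ ((N:ℝ)+1) * S by positivity) this
          linarith
    · intro j
      have e : ∑ i ∈ Finset.range (N+1), (∑ p ∈ Finset.range (J.card + 1), cf p i) * z i ^ j
          = ∑ p ∈ Finset.range (J.card + 1), q p * ddT z p j := by
        simp only [Finset.sum_mul]
        rw [Finset.sum_comm]
        apply Finset.sum_congr rfl
        intro p hp
        have hp' : p ≤ N := by simp at hp; omega
        rw [ddT, Finset.mul_sum]
        symm
        have hsub : Finset.range (p+1) ⊆ Finset.range (N+1) := by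
          intro x; simp; omega
        rw [← Finset.sum_subset hsub]
        · apply Finset.sum_congr rfl
          intro i hi
          simp only [cf]
          rw [if_pos (by simpa using hi)]
          ring
        · intro i _ hi
          simp only [cf]
          rw [if_neg (by simpa using hi), zero_mul]
      rw [e, hq j, ← Finset.sum_sub_distrib]
      have h1 : ‖∑ p ∈ Finset.range (J.card + 1), (q p * ddT z p j - q p * ((Ring.choose j p : ℤ) : ℂ))‖ ≤
          ∑ p ∈ Finset.range (J.card + 1), ‖q p‖ * (ρ * (32 ^ N * 32 ^ j.natAbs)) := by
        refine norm_sum_le_of_le _ (fun p hp => ?_)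
        have hp' : p ≤ N := by simp at hp; omega
        rw [← mul_sub, norm_mul]
        gcongr
        refine (ddT_approx z ρ hρ hzρ p (hinj p hp') j).trans ?_
        gcongr
        calc (32:ℝ) ^ (j.natAbs + p) ≤ 32 ^ (j.natAbs + N) := by gcongr; norm_num
          _ = _ := by ring
      rw [← Finset.sum_mul, ← hS] at h1
      refine h1.trans ?_
      have h3 : S * (ρ * (32 ^ N * 32 ^ j.natAbs)) ≤ (N+1) * (S * (ρ * (32 ^ N * 32 ^ j.natAbs))) := by
        apply le_mul_of_one_le_left (by positivity)
        have : (0:ℝ) ≤ N := by positivity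
        linarith
      have : (0:ℝ) ≤ ρ * 32 ^ j.natAbs := by positivity
      linarith

lemma series_asymp (b : ℕ → ℂ) (τ : ℝ) (hτ : 0 < τ) (hs : Summable fun n => ‖b n‖ * τ ^ n) :
    (∀ n, b n = 0) ∨ ∃ (n0 : ℕ) (c C τ' : ℝ), 0 < c ∧ 0 < C ∧ 0 < τ' ∧ (∀ n < n0, b n = 0) ∧
      ∀ t : ℂ, ‖t‖ ≤ τ' → c * ‖t‖ ^ n0 ≤ ‖∑' n, b n * t ^ n‖ ∧ ‖∑' n, b n * t ^ n‖ ≤ C * ‖t‖ ^ n0 := by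
  classical
  by_cases hb : ∀ n, b n = 0
  · exact Or.inl hb
  right
  push Not at hb
  set n0 := Nat.find hb with hn0
  have hb0 : b n0 ≠ 0 := Nat.find_spec hb
  have hlt : ∀ n < n0, b n = 0 := fun n hn => by
    have := Nat.find_min hb hn; simpa using this
  set A := ∑' n, ‖b n‖ * τ ^ n with hA
  have hA0 : 0 ≤ A := tsum_nonneg (fun n => by positivity)
  have hbp : 0 < ‖b n0‖ := norm_pos_iff.2 hb0
  refine ⟨n0, ‖b n0‖/2, ‖b n0‖ * (3/2), min τ (‖b n0‖/2 * τ ^ (n0+1) / (A+1)), by positivity, by positivity, by positivity, hlt, ?_⟩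
  intro t ht
  have ht1 : ‖t‖ ≤ τ := ht.trans (min_le_left _ _)
  have ht2 : ‖t‖ ≤ ‖b n0‖/2 * τ ^ (n0+1) / (A+1) := ht.trans (min_le_right _ _)
  have hsum : Summable fun n => b n * t ^ n := by
    apply Summable.of_norm_bounded hs
    intro n
    rw [norm_mul, norm_pow]
    gcongr
  have hd := hsum.tsum_eq_add_tsum_ite n0
  have hbd : ‖∑' n, (if n = n0 then 0 else b n * t ^ n)‖ ≤ ‖t‖ ^ (n0+1) / τ ^ (n0+1) * A := by
    apply tsum_of_norm_bounded (hs.hasSum.mul_left _)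
    intro n
    split_ifs with h
    · rw [norm_zero]; positivity
    · rcases lt_or_gt_of_ne h with h | h
      · rw [hlt n h]; simp
      · obtain ⟨m, rfl⟩ : ∃ m, n = n0 + 1 + m := ⟨n - (n0+1), by omega⟩
        rw [norm_mul, norm_pow, pow_add, pow_add τ]
        have : ‖t‖ ^ m ≤ τ ^ m := by gcongr
        calc ‖b (n0 + 1 + m)‖ * (‖t‖ ^ (n0 + 1) * ‖t‖ ^ m) ≤ ‖b (n0 + 1 + m)‖ * (‖t‖ ^ (n0 + 1) * τ ^ m) := by gcongr
          _ = _ := by field_simp; ring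
  have hbd2 : ‖t‖ ^ (n0+1) / τ ^ (n0+1) * A ≤ ‖b n0‖/2 * ‖t‖ ^ n0 := by
    rw [le_div_iff₀ (by positivity)] at ht2
    have h4 : ‖t‖ * A ≤ ‖b n0‖/2 * τ ^ (n0+1) := by nlinarith [norm_nonneg t]
    rw [div_mul_eq_mul_div, div_le_iff₀ (by positivity), pow_succ]
    have h5 := mul_le_mul_of_nonneg_left h4 (show 0 ≤ ‖t‖ ^ n0 by positivity)
    nlinarith
  rw [hd]
  have h6 : ‖b n0 * t ^ n0‖ = ‖b n0‖ * ‖t‖ ^ n0 := by rw [norm_mul, norm_pow]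
  constructor
  · have := norm_sub_le_norm_add (b n0 * t ^ n0) (∑' n, (if n = n0 then 0 else b n * t ^ n))
    linarith
  · have := norm_add_le (b n0 * t ^ n0) (∑' n, (if n = n0 then 0 else b n * t ^ n))
    linarith

lemma series_compare (b b' : ℕ → ℂ) (τ : ℝ) (hτ : 0 < τ) (hs : Summable fun n => ‖b n‖ * τ ^ n)
    (hs' : Summable fun n => ‖b' n‖ * τ ^ n) :
    ∃ C : ℝ, 0 < C ∧ ∃ σ : ℝ, 0 < σ ∧ ∀ x y : ℂ, ‖x‖ ≤ σ → ‖y‖ ≤ σ →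
      ‖∑' n, b n * (x * y) ^ n‖ ≤ C * ‖y‖ * ‖x * ∑' n, b' n * (x * y) ^ n‖ ∨
      ‖x * ∑' n, b' n * (x * y) ^ n‖ ≤ C * ‖x‖ * ‖∑' n, b n * (x * y) ^ n‖ := by
  rcases series_asymp b τ hτ hs with h | ⟨n, c, C, τ1, hc, hC, hτ1, -, h⟩
  · refine ⟨1, one_pos, 1, one_pos, fun x y _ _ => Or.inl ?_⟩
    simp [h]; positivity
  rcases series_asymp b' τ hτ hs' with h' | ⟨n', c', C', τ2, hc', hC', hτ2, -, h'⟩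
  · refine ⟨1, one_pos, 1, one_pos, fun x y _ _ => Or.inr ?_⟩
    simp [h']; positivity
  refine ⟨C / c' + C' / c, by positivity, min 1 (min τ1 τ2), by positivity, ?_⟩
  intro x y hx hy
  have hx1 := hx.trans (min_le_left _ _)
  have hy1 := hy.trans (min_le_left _ _)
  have hy2 := hy.trans (min_le_right _ _)
  have ht : ‖x * y‖ ≤ ‖y‖ := by
    rw [norm_mul]; exact mul_le_of_le_one_left (norm_nonneg _) hx1
  have ht1 := (ht.trans hy1)
  obtain ⟨h1, h2⟩ := h (x * y) (ht.trans (hy2.trans (min_le_left _ _)))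
  obtain ⟨h1', h2'⟩ := h' (x * y) (ht.trans (hy2.trans (min_le_right _ _)))
  set B := ∑' n, b n * (x * y) ^ n
  set B' := ∑' n, b' n * (x * y) ^ n
  rw [norm_mul x B']
  rcases lt_or_ge n' n with hn | hn
  · left
    have e1 : ‖x * y‖ ^ n ≤ ‖x * y‖ ^ (n'+1) := pow_le_pow_of_le_one (norm_nonneg _) ht1 hn
    calc ‖B‖ ≤ C * ‖x * y‖ ^ (n'+1) := h2.trans (by gcongr)
      _ = C / c' * (‖x‖ * ‖y‖) * (c' * ‖x * y‖ ^ n') := by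
        rw [pow_succ, norm_mul x y]; field_simp
      _ ≤ C / c' * (‖x‖ * ‖y‖) * ‖B'‖ := by gcongr
      _ ≤ (C / c' + C' / c) * (‖x‖ * ‖y‖) * ‖B'‖ := by gcongr; linarith [show 0 < C' / c by positivity]
      _ = _ := by ring
  · right
    have e1 : ‖x * y‖ ^ n' ≤ ‖x * y‖ ^ n := pow_le_pow_of_le_one (norm_nonneg _) ht1 hn
    calc ‖x‖ * ‖B'‖ ≤ ‖x‖ * (C' * ‖x * y‖ ^ n) := by gcongr; exact h2'.trans (by gcongr)
      _ = C' / c * ‖x‖ * (c * ‖x * y‖ ^ n) := by field_simp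
      _ ≤ C' / c * ‖x‖ * ‖B‖ := by gcongr
      _ ≤ _ := by gcongr; linarith [show 0 < C / c' by positivity]

/-- diagonal sums -/
noncomputable def diagSum (a : ℕ → ℕ → ℂ) (j : ℤ) (x y : ℂ) : ℂ :=
  x ^ j.toNat * y ^ (-j).toNat * ∑' n : ℕ, a (n + j.toNat) (n + (-j).toNat) * (x * y) ^ n

lemma diag_summable (a : ℕ → ℕ → ℂ) (ρ : ℝ) (hρ : 0 < ρ)
    (hs : Summable (fun mn : ℕ × ℕ => ‖a mn.1 mn.2‖ * ρ ^ mn.1 * ρ ^ mn.2)) (p q : ℕ) :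
    Summable fun n => ‖a (n+p) (n+q)‖ * (ρ^2) ^ n := by
  have hi : Function.Injective (fun n : ℕ => (n+p, n+q)) := by
    intro m n h; simp at h; exact h
  have h1 := (hs.comp_injective hi).mul_left ((ρ ^ p * ρ ^ q)⁻¹)
  refine h1.congr (fun n => ?_)
  simp only [Function.comp]
  rw [pow_add, pow_add, ← pow_mul]
  field_simp
  ring

lemma diag_compare (a : ℕ → ℕ → ℂ) (ρ : ℝ) (hρ : 0 < ρ)
    (hs : Summable (fun mn : ℕ × ℕ => ‖a mn.1 mn.2‖ * ρ ^ mn.1 * ρ ^ mn.2)) (j : ℤ) :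
    ∃ C : ℝ, 0 < C ∧ ∃ σ : ℝ, 0 < σ ∧ ∀ (x y : ℂ) (R : ℝ), R ≤ σ → ‖x‖ ≤ R → ‖y‖ ≤ R →
      ‖diagSum a j x y‖ ≤ C * R * ‖diagSum a (j+1) x y‖ ∨
      ‖diagSum a (j+1) x y‖ ≤ C * R * ‖diagSum a j x y‖ := by
  rcases lt_or_ge j 0 with hj | hj
  · obtain ⟨m, rfl⟩ : ∃ m : ℕ, j = -((m:ℤ)+1) := ⟨(-j-1).toNat, by omega⟩
    have e1 : (-((m:ℤ)+1)).toNat = 0 := by omega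
    have e2 : (-(-((m:ℤ)+1))).toNat = m+1 := by omega
    have e3 : (-((m:ℤ)+1)+1).toNat = 0 := by omega
    have e4 : (-(-((m:ℤ)+1)+1)).toNat = m := by omega
    obtain ⟨C, hC, σ, hσ, h⟩ := series_compare (fun n => a (n+0) (n+m)) (fun n => a (n+0) (n+(m+1)))
      (ρ^2) (by positivity) (diag_summable a ρ hρ hs _ _) (diag_summable a ρ hρ hs _ _)
    refine ⟨C, hC, σ, hσ, fun x y R hR hx hy => ?_⟩
    have h := h y x (hy.trans hR) (hx.trans hR)
    simp only [diagSum, e1, e2, e3, e4]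
    rw [mul_comm y x] at h
    set B := ∑' n, a (n+0) (n+m) * (x * y) ^ n
    set B' := ∑' n, a (n+0) (n+(m+1)) * (x * y) ^ n
    have f1 : ‖x ^ 0 * y ^ (m+1) * B'‖ = ‖y‖ ^ m * ‖y * B'‖ := by
      simp only [norm_mul, norm_pow]; ring
    have f2 : ‖x ^ 0 * y ^ m * B‖ = ‖y‖ ^ m * ‖B‖ := by
      simp only [norm_mul, norm_pow]; ring
    rw [f1, f2]
    rcases h with h | h
    · right
      calc _ ≤ ‖y‖ ^ m * (C * R * ‖y * B'‖) := by gcongr; exact h.trans (by gcongr)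
        _ = _ := by ring
    · left
      calc _ ≤ ‖y‖ ^ m * (C * R * ‖B‖) := by gcongr; exact h.trans (by gcongr)
        _ = _ := by ring
  · obtain ⟨m, rfl⟩ : ∃ m : ℕ, j = (m:ℤ) := ⟨j.toNat, by omega⟩
    have e1 : ((m:ℤ)).toNat = m := by omega
    have e2 : (-(m:ℤ)).toNat = 0 := by omega
    have e3 : ((m:ℤ)+1).toNat = m+1 := by omega
    have e4 : (-((m:ℤ)+1)).toNat = 0 := by omega
    obtain ⟨C, hC, σ, hσ, h⟩ := series_compare (fun n => a (n+m) (n+0)) (fun n => a (n+(m+1)) (n+0))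
      (ρ^2) (by positivity) (diag_summable a ρ hρ hs _ _) (diag_summable a ρ hρ hs _ _)
    refine ⟨C, hC, σ, hσ, fun x y R hR hx hy => ?_⟩
    have h := h x y (hx.trans hR) (hy.trans hR)
    simp only [diagSum, e1, e2, e3, e4]
    set B := ∑' n, a (n+m) (n+0) * (x * y) ^ n
    set B' := ∑' n, a (n+(m+1)) (n+0) * (x * y) ^ n
    have f1 : ‖x ^ (m+1) * y ^ 0 * B'‖ = ‖x‖ ^ m * ‖x * B'‖ := by
      simp only [norm_mul, norm_pow]; ring
    have f2 : ‖x ^ m * y ^ 0 * B‖ = ‖x‖ ^ m * ‖B‖ := by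
      simp only [norm_mul, norm_pow]; ring
    rw [f1, f2]
    rcases h with h | h
    · left
      calc _ ≤ ‖x‖ ^ m * (C * R * ‖x * B'‖) := by gcongr; exact h.trans (by gcongr)
        _ = _ := by ring
    · right
      calc _ ≤ ‖x‖ ^ m * (C * R * ‖B‖) := by gcongr; exact h.trans (by gcongr)
        _ = _ := by ring

/-- lower bound for a diagonal with nonzero first coefficient -/
lemma diag_lower (a : ℕ → ℕ → ℂ) (ρ : ℝ) (hρ : 0 < ρ)
    (hs : Summable (fun mn : ℕ × ℕ => ‖a mn.1 mn.2‖ * ρ ^ mn.1 * ρ ^ mn.2)) (j : ℤ)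
    (hj : a j.toNat (-j).toNat ≠ 0) :
    ∃ c : ℝ, 0 < c ∧ ∃ σ : ℝ, 0 < σ ∧ ∀ (x y : ℂ), ‖x‖ ≤ σ → ‖y‖ ≤ σ →
      c * (‖x‖ ^ j.toNat * ‖y‖ ^ (-j).toNat) ≤ ‖diagSum a j x y‖ := by
  rcases series_asymp _ (ρ^2) (by positivity) (diag_summable a ρ hρ hs j.toNat (-j).toNat)
    with h | ⟨n, c, C, τ1, hc, hC, hτ1, hn, h⟩
  · exact absurd (by simpa using h 0) hj
  have hn0 : n = 0 := by
    by_contra hne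
    exact hj (by simpa using hn 0 (by omega))
  subst hn0
  refine ⟨c, hc, min 1 τ1, by positivity, fun x y hx hy => ?_⟩
  have ht : ‖x * y‖ ≤ τ1 := by
    rw [norm_mul]
    calc ‖x‖ * ‖y‖ ≤ 1 * τ1 := by gcongr; exact hx.trans (min_le_left _ _); exact hy.trans (min_le_right _ _)
      _ = _ := by ring
  have := (h _ ht).1
  rw [diagSum, norm_mul, norm_mul, norm_pow, norm_pow]
  rw [pow_zero, mul_one] at this
  rw [mul_comm]
  gcongr

lemma unif_const {ι : Type*} (P : ι → ℝ → ℝ → Prop)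
    (hmono : ∀ j C C' σ σ', C ≤ C' → σ' ≤ σ → P j C σ → P j C' σ')
    (s : Finset ι) (h : ∀ j ∈ s, ∃ C : ℝ, 0 < C ∧ ∃ σ : ℝ, 0 < σ ∧ P j C σ) :
    ∃ C : ℝ, 0 < C ∧ ∃ σ : ℝ, 0 < σ ∧ ∀ j ∈ s, P j C σ := by
  classical
  induction s using Finset.induction_on with
  | empty => exact ⟨1, one_pos, 1, one_pos, by simp⟩
  | insert a s ha ih =>
    obtain ⟨C, hC, σ, hσ, h1⟩ := ih (fun j hj => h j (Finset.mem_insert_of_mem hj))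
    obtain ⟨C', hC', σ', hσ', h2⟩ := h a (Finset.mem_insert_self _ _)
    refine ⟨max C C', by positivity, min σ σ', by positivity, ?_⟩
    intro j hj
    rcases Finset.mem_insert.1 hj with rfl | hj
    · exact hmono _ _ _ _ _ (le_max_right _ _) (min_le_right _ _) h2
    · exact hmono _ _ _ _ _ (le_max_left _ _) (min_le_left _ _) (h1 j hj)

lemma diagSum_eq (a : ℕ → ℕ → ℂ) (j : ℤ) (x y : ℂ) :
    ∑' mn : ℕ × ℕ, (if (mn.1:ℤ) - mn.2 = j then a mn.1 mn.2 * x ^ mn.1 * y ^ mn.2 else 0)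
      = diagSum a j x y := by
  have hi : Function.Injective (fun n : ℕ => (n+j.toNat, n+(-j).toNat)) := by
    intro m n h; simp at h; exact h
  rw [← hi.tsum_eq]
  · rw [diagSum, ← tsum_mul_left]
    apply tsum_congr
    intro n
    rw [if_pos (by push_cast; omega)]
    rw [mul_pow, pow_add, pow_add]
    ring
  · intro mn h
    simp only [Function.mem_support, ne_eq, ite_eq_right_iff, Classical.not_imp] at h
    refine ⟨min mn.1 mn.2, ?_⟩
    ext <;> simp <;> omega

lemma series_functional (R₀ : ℝ) (a : ℕ → ℕ → ℂ) (F : ℂ → ℂ → ℂ)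
    (hconv : ∀ x y : ℂ, ‖x‖ < R₀ → ‖y‖ < R₀ →
      Summable (fun mn : ℕ × ℕ => ‖a mn.1 mn.2‖ * ‖x‖ ^ mn.1 * ‖y‖ ^ mn.2))
    (hF : ∀ x y : ℂ, ‖x‖ < R₀ → ‖y‖ < R₀ →
      F x y = ∑' mn : ℕ × ℕ, a mn.1 mn.2 * x ^ mn.1 * y ^ mn.2)
    (k l N : ℕ) (R₁ : ℝ) (hR₁ : 0 < R₁) (hR₁₀ : R₁ < R₀)
    (hs : Summable (fun mn : ℕ × ℕ => ‖a mn.1 mn.2‖ * R₁ ^ mn.1 * R₁ ^ mn.2))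
    (x y : ℂ) (hx : 32 * ‖x‖ ≤ R₁) (hy : 32 * ‖y‖ ≤ R₁) (z w : ℕ → ℂ) (hz : ∀ i, ‖z i - 1‖ ≤ 1/2)
    (Φ : ℤ → ℂ) (hΦ : ∀ j, Φ j = ∑ i ∈ Finset.range (N+1), w i * z i ^ j)
    (B : ℝ) (hB : ∀ j, ‖Φ j‖ ≤ B * 32 ^ j.natAbs) :
    ‖(∑ i ∈ Finset.range (N+1), w i * F (x * z i) (y / z i))
      - ∑ j ∈ Finset.Icc (-(l:ℤ)) k, Φ j * diagSum a j x y‖ ≤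
      B * ((32 * ‖x‖ / R₁) ^ (k+1) + (32 * ‖y‖ / R₁) ^ (l+1)) *
        ∑' mn : ℕ × ℕ, ‖a mn.1 mn.2‖ * R₁ ^ mn.1 * R₁ ^ mn.2 := by
  have hB0 : 0 ≤ B := by
    have := (norm_nonneg _).trans (hB 0); simpa using this
  have hup : ∀ i, ‖z i‖ ≤ 3/2 := fun i => by
    have := norm_add_le (z i - 1) 1
    rw [sub_add_cancel, norm_one] at this
    linarith [hz i]
  have hlo : ∀ i, 1/2 ≤ ‖z i‖ := fun i => by
    have := norm_sub_norm_le 1 (1 - z i)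
    rw [sub_sub_cancel, norm_one, norm_sub_rev] at this
    linarith [hz i]
  have h0 : ∀ i, z i ≠ 0 := fun i h => by
    have := hlo i; rw [h, norm_zero] at this; linarith
  set u : ℕ × ℕ → ℂ := fun mn => a mn.1 mn.2 * x ^ mn.1 * y ^ mn.2 with hu
  have hxz : ∀ i, ‖x * z i‖ < R₀ := fun i => by
    rw [norm_mul]; nlinarith [hup i, norm_nonneg x, norm_nonneg (z i)]
  have hyz : ∀ i, ‖y / z i‖ < R₀ := fun i => by
    rw [norm_div, div_lt_iff₀ (by linarith [hlo i])]; nlinarith [hlo i, norm_nonneg y]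
  have hterm : ∀ i mn, a mn.1 mn.2 * (x * z i) ^ mn.1 * (y / z i) ^ mn.2 = u mn * z i ^ ((mn.1:ℤ) - mn.2) := by
    intro i mn
    rw [zpow_sub₀ (h0 i), zpow_natCast, zpow_natCast, mul_pow, div_pow]
    simp only [hu]
    ring
  have hsumi : ∀ i, Summable fun mn : ℕ × ℕ => u mn * z i ^ ((mn.1:ℤ) - mn.2) := by
    intro i
    apply Summable.of_norm
    refine (hconv _ _ (hxz i) (hyz i)).congr (fun mn => ?_)
    rw [← hterm]
    simp only [norm_mul, norm_pow]
  have e1 : (∑ i ∈ Finset.range (N+1), w i * F (x * z i) (y / z i)) =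
      ∑' mn : ℕ × ℕ, u mn * Φ ((mn.1:ℤ) - mn.2) := by
    have : ∀ i ∈ Finset.range (N+1), w i * F (x * z i) (y / z i) =
        ∑' mn : ℕ × ℕ, w i * (u mn * z i ^ ((mn.1:ℤ) - mn.2)) := by
      intro i _
      rw [tsum_mul_left, hF _ _ (hxz i) (hyz i)]
      congr 1
      exact tsum_congr (hterm i)
    rw [Finset.sum_congr rfl this, ← Summable.tsum_finsetSum (fun i _ => (hsumi i).mul_left _)]
    apply tsum_congr
    intro mn
    rw [hΦ, Finset.mul_sum]
    exact Finset.sum_congr rfl (fun i _ => by ring)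
  -- term bound
  have hpow : ∀ (r : ℝ) (m K : ℕ), 0 ≤ r → 32 * r ≤ R₁ → K ≤ m → (32 * r) ^ m ≤ (32 * r / R₁) ^ K * R₁ ^ m := by
    intro r m K hr hr1 hK
    obtain ⟨m', rfl⟩ := Nat.exists_eq_add_of_le hK
    rw [pow_add, pow_add R₁, div_pow]
    calc (32 * r) ^ K * (32 * r) ^ m' ≤ (32 * r) ^ K * R₁ ^ m' := by gcongr
      _ = _ := by field_simp
  have htb : ∀ (mn : ℕ × ℕ) (K L : ℕ), K ≤ mn.1 → L ≤ mn.2 → ‖u mn * Φ ((mn.1:ℤ) - mn.2)‖ ≤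
      B * ((32 * ‖x‖ / R₁) ^ K * (32 * ‖y‖ / R₁) ^ L) * (‖a mn.1 mn.2‖ * R₁ ^ mn.1 * R₁ ^ mn.2) := by
    intro mn K L hK hL
    have h32 : (32:ℝ) ^ ((mn.1:ℤ) - mn.2).natAbs ≤ 32 ^ mn.1 * 32 ^ mn.2 := by
      rw [← pow_add]
      exact pow_le_pow_right₀ (by norm_num) (by omega)
    rw [norm_mul]
    simp only [hu, norm_mul, norm_pow]
    calc ‖a mn.1 mn.2‖ * ‖x‖ ^ mn.1 * ‖y‖ ^ mn.2 * ‖Φ ((mn.1:ℤ) - mn.2)‖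
        ≤ ‖a mn.1 mn.2‖ * ‖x‖ ^ mn.1 * ‖y‖ ^ mn.2 * (B * (32 ^ mn.1 * 32 ^ mn.2)) := by
          gcongr; exact (hB _).trans (by gcongr)
      _ = B * ‖a mn.1 mn.2‖ * ((32 * ‖x‖) ^ mn.1 * (32 * ‖y‖) ^ mn.2) := by
          rw [mul_pow, mul_pow]; ring
      _ ≤ B * ‖a mn.1 mn.2‖ * (((32 * ‖x‖ / R₁) ^ K * R₁ ^ mn.1) * ((32 * ‖y‖ / R₁) ^ L * R₁ ^ mn.2)) := by
          gcongr
          · exact hpow _ _ _ (norm_nonneg _) hx hK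
          · exact hpow _ _ _ (norm_nonneg _) hy hL
      _ = _ := by ring
  have hsu : Summable u := by
    apply Summable.of_norm_bounded (hs)
    intro mn
    simp only [hu, norm_mul, norm_pow]
    gcongr <;> linarith [norm_nonneg x, norm_nonneg y]
  have hsuΦ : Summable fun mn : ℕ × ℕ => u mn * Φ ((mn.1:ℤ) - mn.2) := by
    apply Summable.of_norm_bounded (hs.mul_left (B * 1))
    intro mn
    have := htb mn 0 0 (Nat.zero_le _) (Nat.zero_le _)
    simpa using this
  have hsj : ∀ j : ℤ, Summable fun mn : ℕ × ℕ => (if (mn.1:ℤ) - mn.2 = j then u mn else 0) := by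
    intro j
    exact Summable.of_norm_bounded hsu.norm (fun mn => by split_ifs <;> simp)
  have e2 : ∑ j ∈ Finset.Icc (-(l:ℤ)) k, Φ j * diagSum a j x y =
      ∑' mn : ℕ × ℕ, ∑ j ∈ Finset.Icc (-(l:ℤ)) k, Φ j * (if (mn.1:ℤ) - mn.2 = j then u mn else 0) := by
    rw [Summable.tsum_finsetSum (fun j _ => (hsj j).mul_left _)]
    apply Finset.sum_congr rfl
    intro j _
    rw [tsum_mul_left, ← diagSum_eq]
  have hsum2 : Summable fun mn : ℕ × ℕ => 
      ∑ j ∈ Finset.Icc (-(l:ℤ)) k, Φ j * (if (mn.1:ℤ) - mn.2 = j then u mn else 0) :=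
    summable_sum (fun j _ => (hsj j).mul_left _)
  rw [e1, e2, ← hsuΦ.tsum_sub hsum2]
  apply tsum_of_norm_bounded (hs.hasSum.mul_left _)
  intro mn
  have hxR : 0 ≤ 32 * ‖x‖ / R₁ := by positivity
  have hyR : 0 ≤ 32 * ‖y‖ / R₁ := by positivity
  have e3 : ∑ j ∈ Finset.Icc (-(l:ℤ)) k, Φ j * (if (mn.1:ℤ) - mn.2 = j then u mn else 0) =
      if (mn.1:ℤ) - mn.2 ∈ Finset.Icc (-(l:ℤ)) k then Φ ((mn.1:ℤ) - mn.2) * u mn else 0 := by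
    simp only [mul_ite, mul_zero]
    rw [Finset.sum_ite_eq]
  rw [e3]
  split_ifs with hm
  · rw [mul_comm, sub_self, norm_zero]; positivity
  · rw [sub_zero]
    rw [Finset.mem_Icc, not_and_or] at hm
    rcases hm with hm | hm
    · refine (htb mn 0 (l+1) (Nat.zero_le _) (by omega)).trans ?_
      rw [pow_zero, one_mul]
      gcongr
      exact le_add_of_nonneg_left (by positivity)
    · refine (htb mn (k+1) 0 (by omega) (Nat.zero_le _)).trans ?_
      rw [pow_zero, mul_one]
      gcongr
      exact le_add_of_nonneg_right (by positivity)

set_option maxHeartbeats 2000000 in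
lemma key_sublevel (R₀ : ℝ) (hR₀ : 0 < R₀) (a : ℕ → ℕ → ℂ) (F : ℂ → ℂ → ℂ)
    (hconv : ∀ x y : ℂ, ‖x‖ < R₀ → ‖y‖ < R₀ →
      Summable (fun mn : ℕ × ℕ => ‖a mn.1 mn.2‖ * ‖x‖ ^ mn.1 * ‖y‖ ^ mn.2))
    (hF : ∀ x y : ℂ, ‖x‖ < R₀ → ‖y‖ < R₀ →
      F x y = ∑' mn : ℕ × ℕ, a mn.1 mn.2 * x ^ mn.1 * y ^ mn.2)
    (k l : ℕ) (hak : a k 0 ≠ 0) (hal : a 0 l ≠ 0) :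
    ∃ R : ℝ, 0 < R ∧ R ≤ R₀ ∧ ∃ ρ : ℝ, 0 < ρ ∧ ρ ≤ 1/2 ∧ ∃ C : ℝ, 0 < C ∧
      ∀ (x y : ℂ), ‖x‖ ≤ R → ‖y‖ ≤ R → ∀ (z : ℕ → ℂ) (ε d : ℝ), (∀ i, ‖z i - 1‖ ≤ ρ) → 0 < d → d ≤ 1 →
        (∀ i ≤ (k+l)/2, ∀ i' ≤ (k+l)/2, i ≠ i' → d ≤ ‖z i - z i'‖) →
        (∀ i ≤ (k+l)/2, ‖F (x * z i) (y / z i)‖ ≤ ε) →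
        ‖x‖ ^ k * d ^ ((k+l)/2) ≤ C * ε ∧ ‖y‖ ^ l * d ^ ((k+l)/2) ≤ C * ε := by
  classical
  set N := (k+l)/2 with hN
  set R₁ := R₀ / 2 with hR₁d
  have hR₁ : 0 < R₁ := by positivity
  have hR₁₀ : R₁ < R₀ := by rw [hR₁d]; linarith
  have hs : Summable (fun mn : ℕ × ℕ => ‖a mn.1 mn.2‖ * R₁ ^ mn.1 * R₁ ^ mn.2) := by
    have hn : ‖(R₁:ℂ)‖ = R₁ := by rw [Complex.norm_real, Real.norm_of_nonneg hR₁.le]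
    have := hconv (R₁:ℂ) (R₁:ℂ) (by rwa [hn]) (by rwa [hn])
    rwa [hn] at this
  set A := ∑' mn : ℕ × ℕ, ‖a mn.1 mn.2‖ * R₁ ^ mn.1 * R₁ ^ mn.2 with hA
  have hA0 : 0 ≤ A := tsum_nonneg (fun _ => by positivity)
  set I := Finset.Icc (-(l:ℤ)) k with hI
  -- uniform constants
  obtain ⟨C1, hC1, σ1, hσ1, hcons⟩ := unif_const
    (fun (j : ℤ) C σ => 0 < C ∧ ∀ (x y : ℂ) (R : ℝ), R ≤ σ → ‖x‖ ≤ R → ‖y‖ ≤ R →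
      ‖diagSum a j x y‖ ≤ C * R * ‖diagSum a (j+1) x y‖ ∨
      ‖diagSum a (j+1) x y‖ ≤ C * R * ‖diagSum a j x y‖)
    (by
      intro j C C' σ σ' hC hσ ⟨h0, h⟩
      refine ⟨h0.trans_le hC, fun x y R hR hx hy => ?_⟩
      have hR0 : 0 ≤ R := (norm_nonneg _).trans hx
      rcases h x y R (hR.trans hσ) hx hy with h | h
      · exact Or.inl (h.trans (by gcongr))
      · exact Or.inr (h.trans (by gcongr)))
    I (fun j _ => by
      obtain ⟨C, hC, σ, hσ, h⟩ := diag_compare a R₁ hR₁ hs j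
      exact ⟨C, hC, σ, hσ, hC, h⟩)
  obtain ⟨K, hK, -, -, hfun⟩ := unif_const
    (fun (J : Finset ℤ) K _ => J.card ≤ N → 
    (∀ j : ℤ, ‖((∏ a ∈ J, (j - a) : ℤ) : ℂ)‖ ≤ K * 32 ^ j.natAbs) ∧
    ∀ (ρ d : ℝ) (z : ℕ → ℂ), ρ ≤ 1/2 → 0 < d → d ≤ 1 → (∀ i, ‖z i - 1‖ ≤ ρ) →
    (∀ i ≤ N, ∀ i' ≤ N, i ≠ i' → d ≤ ‖z i - z i'‖) →
    ∃ w : ℕ → ℂ, (∑ i ∈ Finset.range (N+1), ‖w i‖) ≤ K / d ^ N ∧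
      ∀ j : ℤ, ‖(∑ i ∈ Finset.range (N+1), w i * z i ^ j) - ((∏ a ∈ J, (j - a) : ℤ) : ℂ)‖
        ≤ K * ρ * 32 ^ j.natAbs)
    (by
      intro J K K' _ _ hKK _ h hJ
      obtain ⟨h1, h2⟩ := h hJ
      refine ⟨fun j => (h1 j).trans (by gcongr), fun ρ d z hρ hd hd1 hz hsep => ?_⟩
      have hρ0 : 0 ≤ ρ := (norm_nonneg _).trans (hz 0)
      obtain ⟨w, hw1, hw2⟩ := h2 ρ d z hρ hd hd1 hz hsep
      exact ⟨w, hw1.trans (by gcongr), fun j => (hw2 j).trans (by gcongr)⟩)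
    I.powerset (fun J _ => by
      by_cases hJ : J.card ≤ N
      · obtain ⟨K, hK, h⟩ := functional_exists J N hJ
        exact ⟨K, hK, 1, one_pos, fun _ => h⟩
      · exact ⟨1, one_pos, 1, one_pos, fun h => absurd h hJ⟩)
  obtain ⟨c1, hc1, σ2, hσ2, hlow1⟩ := diag_lower a R₁ hR₁ hs (k:ℤ) (by simpa using hak)
  obtain ⟨c2, hc2, σ3, hσ3, hlow2⟩ := diag_lower a R₁ hR₁ hs (-(l:ℤ)) (by simpa using hal)
  set W : ℝ := ∑ j ∈ I, (32:ℝ) ^ j.natAbs with hW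
  have hW0 : 0 ≤ W := Finset.sum_nonneg (fun _ _ => by positivity)
  set D : ℝ := (32 / R₁) ^ (k+1) + (32 / R₁) ^ (l+1) with hD
  have hD0 : 0 ≤ D := by positivity
  set E : ℝ := K * W * C1 + 2 * K * D * A * (1/c1 + 1/c2) + C1 + 1 with hE
  have hE0 : 0 < E := by positivity
  refine ⟨min (R₁/32) (min σ1 (min σ2 (min σ3 (1 / (4 * E))))), by positivity, ?_,
    min (1/2) (1 / (4 * (K * W + 1))), by positivity, min_le_left _ _, 2 * K * (1/c1+1/c2), by positivity, ?_⟩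
  · refine (min_le_left _ _).trans ?_
    rw [hR₁d]; linarith
  set R := min (R₁/32) (min σ1 (min σ2 (min σ3 (1 / (4 * E))))) with hR
  set ρ := min (1/2) (1 / (4 * (K * W + 1))) with hρ
  have hRp : 0 < R := by positivity
  have hρp : 0 < ρ := by positivity
  have hRa : R ≤ R₁/32 := min_le_left _ _
  have hRb : R ≤ σ1 := (min_le_right _ _).trans (min_le_left _ _)
  have hRc : R ≤ σ2 := (min_le_right _ _).trans ((min_le_right _ _).trans (min_le_left _ _))
  have hRd : R ≤ σ3 := (min_le_right _ _).trans ((min_le_right _ _).trans ((min_le_right _ _).trans (min_le_left _ _)))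
  have hRe : R ≤ 1 / (4 * E) := (min_le_right _ _).trans ((min_le_right _ _).trans ((min_le_right _ _).trans (min_le_right _ _)))
  have hRE : E * R ≤ 1/4 := by
    rw [le_div_iff₀ (by positivity)] at hRe; linarith
  have hρ1 : ρ ≤ 1/2 := min_le_left _ _
  have hρW : K * W * ρ ≤ 1/4 := by
    have : ρ ≤ 1 / (4 * (K * W + 1)) := min_le_right _ _
    rw [le_div_iff₀ (by positivity)] at this
    linarith
  clear_value R ρ
  intro x y hx hy z ε d hz hd hd1 hsep hε
  have hε0 : 0 ≤ ε := (norm_nonneg _).trans (hε 0 (Nat.zero_le _))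
  set g : ℤ → ℂ := fun j => diagSum a j x y with hg
  have hIne : I.Nonempty := ⟨0, by simp [hI]⟩
  obtain ⟨j0, hj0, hmax⟩ := Finset.exists_max_image I (fun j => ‖g j‖) hIne
  set Λ := ‖g j0‖ with hΛ
  have hΛ0 : 0 ≤ Λ := norm_nonneg _
  have hl1 : ‖x‖ ^ k ≤ 1/c1 * Λ := by
    have h1 := hlow1 x y (hx.trans hRc) (hy.trans hRc)
    have h2 := hmax k (by simp [hI])
    simp at h1
    rw [one_div, ← div_eq_inv_mul, le_div_iff₀ hc1]
    simp only [hg] at h2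
    linarith
  have hl2 : ‖y‖ ^ l ≤ 1/c2 * Λ := by
    have h1 := hlow2 x y (hx.trans hRd) (hy.trans hRd)
    have h2 := hmax (-(l:ℤ)) (by simp [hI])
    simp at h1
    rw [one_div, ← div_eq_inv_mul, le_div_iff₀ hc2]
    simp only [hg] at h2
    linarith
  suffices hmain : Λ * d ^ N ≤ 2 * K * ε by
    have hdN : 0 ≤ d ^ N := by positivity
    have i1 : 0 < 1 / c1 := by positivity
    have i2 : 0 < 1 / c2 := by positivity
    constructor
    · calc ‖x‖ ^ k * d ^ N ≤ 1/c1 * Λ * d ^ N := by gcongr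
        _ = 1/c1 * (Λ * d ^ N) := by ring
        _ ≤ (1/c1 + 1/c2) * (2 * K * ε) := by gcongr; linarith
        _ = _ := by ring
    · calc ‖y‖ ^ l * d ^ N ≤ 1/c2 * Λ * d ^ N := by gcongr
        _ = 1/c2 * (Λ * d ^ N) := by ring
        _ ≤ (1/c1 + 1/c2) * (2 * K * ε) := by gcongr; linarith
        _ = _ := by ring
  rcases hΛ0.eq_or_lt with h | hΛp
  · rw [← h, zero_mul]; positivity
  -- relevant indices
  have hC1R : C1 * R < 1 := by
    have : C1 * R ≤ E * R := by
      gcongr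
      rw [hE]
      have : 0 ≤ K * W * C1 + 2 * K * D * A * (1/c1 + 1/c2) := by positivity
      linarith
    linarith
  set Jr := I.filter (fun j => C1 * R * Λ < ‖g j‖) with hJr
  have hj0r : j0 ∈ Jr := by
    rw [hJr, Finset.mem_filter]
    exact ⟨hj0, by nlinarith⟩
  have hno : ∀ j ∈ Jr, j + 1 ∉ Jr := by
    intro j hj hj'
    rw [hJr, Finset.mem_filter] at hj hj'
    rcases (hcons j hj.1).2 x y R hRb hx hy with h | h
    · have := hmax (j+1) hj'.1
      have h2 : C1 * R * ‖g (j+1)‖ ≤ C1 * R * Λ := by gcongr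
      exact absurd (h.trans h2) (not_le.2 hj.2)
    · have := hmax j hj.1
      have h2 : C1 * R * ‖g j‖ ≤ C1 * R * Λ := by gcongr
      exact absurd (h.trans h2) (not_le.2 hj'.2)
  have hcard : Jr.card ≤ N + 1 := by
    have := Finset.card_le_card_of_injOn (s := Jr) (t := Finset.range (N+1)) (fun j => ((j + l)/2).toNat)
      (by
        intro j hj
        have hj' : j ∈ I := (Finset.mem_filter.1 hj).1
        rw [hI, Finset.mem_Icc] at hj'
        simp only [Finset.coe_range, Set.mem_Iio]
        omega)
      (by
        intro i hi j hj hij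
        have hi' : i ∈ I := (Finset.mem_filter.1 hi).1
        have hj' : j ∈ I := (Finset.mem_filter.1 hj).1
        rw [hI, Finset.mem_Icc] at hi' hj'
        simp only at hij
        by_contra hne
        have : i + 1 = j ∨ j + 1 = i := by omega
        rcases this with h | h
        · exact hno i hi (h ▸ hj)
        · exact hno j hj (h ▸ hi))
    simpa using this
  set J := Jr.erase j0 with hJ
  have hJc : J.card ≤ N := by
    rw [hJ, Finset.card_erase_of_mem hj0r]; omega
  have hJI : J ∈ I.powerset := by
    rw [Finset.mem_powerset]
    exact (Finset.erase_subset _ _).trans (Finset.filter_subset _ _)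
  obtain ⟨hQb, hQw⟩ := hfun J hJI hJc
  obtain ⟨w, hw1, hw2⟩ := hQw ρ d z hρ1 hd hd1 hz hsep
  set Q : ℤ → ℂ := fun j => ((∏ a ∈ J, (j - a) : ℤ) : ℂ) with hQ
  set Φ : ℤ → ℂ := fun j => ∑ i ∈ Finset.range (N+1), w i * z i ^ j with hΦ
  have hΦB : ∀ j, ‖Φ j‖ ≤ 2 * K * 32 ^ j.natAbs := by
    intro j
    have h1 := hw2 j
    have h2 := hQb j
    have h3 := norm_add_le (Φ j - Q j) (Q j)
    rw [sub_add_cancel] at h3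
    have h4 : K * ρ * 32 ^ j.natAbs ≤ K * 1 * 32 ^ j.natAbs := by gcongr; linarith
    simp only [hΦ, hQ] at h3 ⊢
    linarith
  have hser := series_functional R₀ a F hconv hF k l N R₁ hR₁ hR₁₀ hs x y (by linarith) (by linarith)
    z w (fun i => (hz i).trans hρ1) Φ (fun _ => rfl) (2 * K) hΦB
  rw [← hA, ← hI] at hser
  set S := ∑ i ∈ Finset.range (N+1), w i * F (x * z i) (y / z i) with hS
  -- bounds
  have b1 : ‖S‖ ≤ K / d ^ N * ε := by
    calc ‖S‖ ≤ ∑ i ∈ Finset.range (N+1), ‖w i‖ * ε := by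
          refine norm_sum_le_of_le _ (fun i hi => ?_)
          rw [norm_mul]
          gcongr
          exact hε i (by simp at hi; omega)
      _ = (∑ i ∈ Finset.range (N+1), ‖w i‖) * ε := by rw [Finset.sum_mul]
      _ ≤ _ := by gcongr
  have b2 : ‖∑ j ∈ I, Φ j * g j - Q j0 * g j0‖ ≤ K * ρ * W * Λ + K * C1 * R * W * Λ := by
    have e : ∑ j ∈ I, Φ j * g j - Q j0 * g j0 = ∑ j ∈ I, (Φ j - Q j) * g j + ∑ j ∈ I.erase j0, Q j * g j := by
      rw [← Finset.add_sum_erase I (fun j => Φ j * g j) hj0, ← Finset.add_sum_erase I (fun j => (Φ j - Q j) * g j) hj0]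
      simp only [sub_mul, Finset.sum_sub_distrib]
      ring
    rw [e]
    refine (norm_add_le _ _).trans (add_le_add ?_ ?_)
    · calc _ ≤ ∑ j ∈ I, (K * ρ * 32 ^ j.natAbs) * Λ := by
            refine norm_sum_le_of_le _ (fun j hj => ?_)
            rw [norm_mul]
            gcongr
            · exact hw2 j
            · exact hmax j hj
        _ = _ := by rw [← Finset.sum_mul, ← Finset.mul_sum]
    · calc _ ≤ ∑ j ∈ I.erase j0, (32:ℝ) ^ j.natAbs * (K * C1 * R * Λ) := by
            refine norm_sum_le_of_le _ (fun j hj => ?_)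
            rw [norm_mul]
            by_cases hjJ : j ∈ J
            · have : Q j = 0 := by
                simp only [hQ]
                rw [Finset.prod_eq_zero hjJ (by ring)]; simp
              rw [this, norm_zero, zero_mul]
              positivity
            · have hjI := Finset.mem_of_mem_erase hj
              have hjg : ‖g j‖ ≤ C1 * R * Λ := by
                by_contra hcon
                exact hjJ (Finset.mem_erase.2 ⟨Finset.ne_of_mem_erase hj, Finset.mem_filter.2 ⟨hjI, not_le.1 hcon⟩⟩)
              calc ‖Q j‖ * ‖g j‖ ≤ (K * 32 ^ j.natAbs) * (C1 * R * Λ) := by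
                    gcongr; exact hQb j
                _ = _ := by ring
        _ ≤ ∑ j ∈ I, (32:ℝ) ^ j.natAbs * (K * C1 * R * Λ) := by
            apply Finset.sum_le_sum_of_subset_of_nonneg (Finset.erase_subset _ _)
            intros; positivity
        _ = _ := by rw [← Finset.sum_mul, ← hW]; ring
  have b3 : (32 * ‖x‖ / R₁) ^ (k+1) + (32 * ‖y‖ / R₁) ^ (l+1) ≤ D * R * (1/c1 + 1/c2) * Λ := by
    have i1 : 0 < 1 / c1 := by positivity
    have i2 : 0 < 1 / c2 := by positivity
    have e1 : (32 * ‖x‖ / R₁) ^ (k+1) ≤ (32 / R₁) ^ (k+1) * (R * ((1/c1 + 1/c2) * Λ)) := by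
      rw [mul_div_right_comm, mul_pow, pow_succ ‖x‖, mul_comm (‖x‖ ^ k)]
      gcongr
      refine hl1.trans ?_
      gcongr; linarith
    have e2 : (32 * ‖y‖ / R₁) ^ (l+1) ≤ (32 / R₁) ^ (l+1) * (R * ((1/c1 + 1/c2) * Λ)) := by
      rw [mul_div_right_comm, mul_pow, pow_succ ‖y‖, mul_comm (‖y‖ ^ l)]
      gcongr
      refine hl2.trans ?_
      gcongr; linarith
    rw [hD]
    linarith
  have b4 : Λ ≤ ‖Q j0 * g j0‖ := by
    rw [norm_mul]
    apply le_mul_of_one_le_left hΛ0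
    simp only [hQ]
    rw [Complex.norm_intCast]
    have hne : (∏ a ∈ J, (j0 - a) : ℤ) ≠ 0 := by
      rw [Finset.prod_ne_zero_iff]
      intro b hb h
      exact Finset.ne_of_mem_erase hb (by omega)
    exact_mod_cast Int.one_le_abs hne
  have b5 : 2 * K * ((32 * ‖x‖ / R₁) ^ (k+1) + (32 * ‖y‖ / R₁) ^ (l+1)) * A ≤ 2 * K * (D * R * (1/c1 + 1/c2) * Λ) * A := by
    gcongr
  have b6 : ‖Q j0 * g j0‖ ≤ ‖S‖ + ‖S - ∑ j ∈ I, Φ j * g j‖ + ‖∑ j ∈ I, Φ j * g j - Q j0 * g j0‖ := by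
    have e : Q j0 * g j0 = S - (S - ∑ j ∈ I, Φ j * g j) - (∑ j ∈ I, Φ j * g j - Q j0 * g j0) := by ring
    calc ‖Q j0 * g j0‖ = ‖S - (S - ∑ j ∈ I, Φ j * g j) - (∑ j ∈ I, Φ j * g j - Q j0 * g j0)‖ := by rw [← e]
      _ ≤ _ := (norm_sub_le _ _).trans (by gcongr; exact norm_sub_le _ _)
  have b7 : K * ρ * W * Λ ≤ 1/4 * Λ := by
    have := mul_le_mul_of_nonneg_right hρW hΛ0; linarith
  have b8 : K * C1 * R * W * Λ + 2 * K * (D * R * (1/c1 + 1/c2) * Λ) * A ≤ 1/4 * Λ := by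
    have h1 := mul_le_mul_of_nonneg_right hRE hΛ0
    have h2 : 0 ≤ (C1 + 1) * R * Λ := by positivity
    rw [hE] at h1
    nlinarith
  have b9 : Λ ≤ 2 * (K / d ^ N * ε) := by linarith
  have hdN : 0 < d ^ N := by positivity
  calc Λ * d ^ N ≤ 2 * (K / d ^ N * ε) * d ^ N := by gcongr
    _ = 2 * K * ε := by field_simp

lemma cover_or_sep (S : Set ℂ) (d : ℝ) : ∀ n : ℕ,
    (∃ z : ℕ → ℂ, (∀ i < n, z i ∈ S) ∧ ∀ i < n, ∀ i' < n, i ≠ i' → d ≤ ‖z i - z i'‖) ∨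
    (∃ z : ℕ → ℂ, S ⊆ ⋃ i ∈ Finset.range n, Metric.ball (z i) d) := by
  intro n
  induction n with
  | zero => left; exact ⟨fun _ => 0, by simp, by simp⟩
  | succ n ih =>
    rcases ih with ⟨z, hz, hsep⟩ | ⟨z, hz⟩
    · by_cases h : ∃ x ∈ S, ∀ i < n, d ≤ ‖x - z i‖
      · obtain ⟨x, hx, hxd⟩ := h
        left
        refine ⟨fun i => if i < n then z i else x, ?_, ?_⟩
        · intro i _
          simp only
          split_ifs with h
          · exact hz i h
          · exact hx
        · intro i hi i' hi' hne
          simp only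
          split_ifs with h1 h2 h2
          · exact hsep i h1 i' h2 hne
          · rw [norm_sub_rev]; exact hxd i h1
          · exact hxd i' h2
          · omega
      · right
        push Not at h
        refine ⟨z, fun x hx => ?_⟩
        obtain ⟨i, hi, hd⟩ := h x hx
        simp only [Set.mem_iUnion]
        exact ⟨i, by simp; omega, by rw [mem_ball_iff_norm]; exact hd⟩
    · right
      refine ⟨z, hz.trans ?_⟩
      intro x hx
      simp only [Set.mem_iUnion] at hx ⊢
      obtain ⟨i, hi, h⟩ := hx
      exact ⟨i, by simp at hi ⊢; omega, h⟩

lemma dyadic_exists (κ u : ℝ) (hu : 0 < u) (huκ : u ≤ κ) :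
    ∃ n : ℕ, κ / 2 ^ (n+1) < u ∧ u ≤ κ / 2 ^ n := by
  classical
  have hex : ∃ m : ℕ, κ / 2 ^ m < u := by
    obtain ⟨m, hm⟩ := pow_unbounded_of_one_lt (κ / u) (one_lt_two)
    refine ⟨m, ?_⟩
    rw [div_lt_iff₀ hu] at hm
    rw [div_lt_iff₀ (by positivity)]
    linarith
  have h1 := Nat.find_spec hex
  have h0 : Nat.find hex ≠ 0 := by
    intro h
    rw [h] at h1
    simp at h1
    linarith
  refine ⟨Nat.find hex - 1, ?_, ?_⟩
  · rwa [Nat.sub_add_cancel (Nat.one_le_iff_ne_zero.2 h0)]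
  · have := Nat.find_min hex (m := Nat.find hex - 1) (by omega)
    exact not_lt.1 this

lemma local_int (c q C ρ : ℝ) (hc : 0 < c) (hcq : c < q) (N : ℕ) (hqN : q * N ≤ 1) (hC : 0 < C)
    (hρ : ρ ≤ 1) :
    ∃ K : ℝ, 0 < K ∧ ∀ (h : ℂ → ℝ) (x0 : ℂ) (r Λ : ℝ), (∀ x, 0 ≤ h x) → 0 < r → 0 < Λ →
      (∀ (z : ℕ → ℂ) (ε d : ℝ), (∀ i ≤ N, z i ∈ Metric.ball x0 (ρ * r)) → 0 < d → d ≤ 1 →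
        (∀ i ≤ N, ∀ i' ≤ N, i ≠ i' → r * d ≤ ‖z i - z i'‖) → (∀ i ≤ N, h (z i) ≤ ε) → Λ * d ^ N ≤ C * ε) →
      ∫⁻ x in Metric.ball x0 (ρ * r), ENNReal.ofReal (h x ^ (-(2 * c))) ≤
        ENNReal.ofReal (K * (r ^ 2 * Λ ^ (-(2*c)))) := by
  set θ : ℝ := (2:ℝ) ^ (2 * c - 2 * q) with hθ
  have hθ0 : 0 < θ := by positivity
  have hθ1 : θ < 1 := Real.rpow_lt_one_of_one_lt_of_neg (by norm_num) (by linarith)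
  set G : ℝ := (N+1) * (2:ℝ) ^ (2*c) * (∑' n : ℕ, θ ^ n) with hG
  have hgs : Summable fun n : ℕ => θ ^ n := summable_geometric_of_lt_one hθ0.le hθ1
  have hG0 : 0 ≤ G := by
    have : 0 ≤ ∑' n : ℕ, θ ^ n := tsum_nonneg (fun n => by positivity)
    positivity
  refine ⟨(2 * C) ^ (2*c) * Real.pi * (1 + G), by positivity, ?_⟩
  intro h x0 r Λ hh hr hΛ hyp
  set κ : ℝ := Λ / (2 * C) with hκ
  have hκ0 : 0 < κ := by positivity
  set d : ℕ → ℝ := fun n => (2:ℝ) ^ (-(q * n)) with hd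
  have hd0 : ∀ n, 0 < d n := fun n => by positivity
  have hd1 : ∀ n, d n ≤ 1 := fun n => Real.rpow_le_one_of_one_le_of_nonpos (by norm_num) (by
    have : 0 ≤ q * n := by have : 0 < q := hc.trans hcq
                           positivity
    linarith)
  have hdN : ∀ n : ℕ, 1 / 2 ^ n ≤ d n ^ N := by
    intro n
    rw [hd]
    simp only
    rw [← Real.rpow_natCast _ N, ← Real.rpow_mul (by norm_num), one_div, ← Real.rpow_natCast _ n, ← Real.rpow_neg (by norm_num)]
    apply Real.rpow_le_rpow_of_exponent_le (by norm_num)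
    have : (q * N) * n ≤ 1 * n := by gcongr
    linarith
  have hcov : ∀ n : ℕ, ∃ z : ℕ → ℂ, {x | x ∈ Metric.ball x0 (ρ * r) ∧ h x ≤ κ / 2 ^ n} ⊆
      ⋃ i ∈ Finset.range (N+1), Metric.ball (z i) (r * d n) := by
    intro n
    rcases cover_or_sep {x | x ∈ Metric.ball x0 (ρ * r) ∧ h x ≤ κ / 2 ^ n} (r * d n) (N+1) with ⟨z, hz, hsep⟩ | h
    · exfalso
      have h1 := hyp z (κ / 2 ^ n) (d n) (fun i hi => (hz i (by omega)).1) (hd0 n) (hd1 n)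
        (fun i hi i' hi' hne => hsep i (by omega) i' (by omega) hne) (fun i hi => (hz i (by omega)).2)
      have h2 := mul_le_mul_of_nonneg_left (hdN n) hΛ.le
      have h3 : C * (κ / 2 ^ n) = (Λ * (1 / 2 ^ n)) / 2 := by rw [hκ]; field_simp
      have h4 : 0 < Λ * (1 / 2 ^ n) := by positivity
      linarith
    · exact h
  choose z hz using hcov
  set U : ℕ → Set ℂ := fun n => ⋃ i ∈ Finset.range (N+1), Metric.ball (z n i) (r * d n) with hU
  have hUm : ∀ n, MeasurableSet (U n) := fun n =>
    Finset.measurableSet_biUnion _ (fun i _ => measurableSet_ball)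
  have hvb : ∀ (x : ℂ) (s : ℝ), 0 ≤ s → volume (Metric.ball x s) = ENNReal.ofReal (s ^ 2 * Real.pi) := by
    intro x s hs
    rw [Complex.volume_ball, ENNReal.ofReal_mul (by positivity), ENNReal.ofReal_pow hs]
    congr 1
    rw [← NNReal.coe_real_pi, ENNReal.ofReal_coe_nnreal]
  have hUv : ∀ n, volume (U n) ≤ ENNReal.ofReal ((N+1) * ((r * d n) ^ 2 * Real.pi)) := by
    intro n
    refine (measure_biUnion_finset_le _ _).trans ?_
    rw [Finset.sum_congr rfl (fun i _ => hvb (z n i) (r * d n) (by have := hd0 n; positivity))]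
    rw [Finset.sum_const, Finset.card_range, nsmul_eq_mul, ENNReal.ofReal_mul (p := (N:ℝ)+1) (by positivity)]
    rw [show ((N:ℝ)+1) = ((N+1 : ℕ) : ℝ) by push_cast; ring, ENNReal.ofReal_natCast]
  have hptw : ∀ x ∈ Metric.ball x0 (ρ * r), ENNReal.ofReal (h x ^ (-(2 * c))) ≤
      ENNReal.ofReal (κ ^ (-(2*c))) + ∑' n, (U n).indicator (fun _ => ENNReal.ofReal ((κ / 2 ^ (n+1)) ^ (-(2*c)))) x := by
    intro x hx
    rcases (hh x).eq_or_lt with h0 | hp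
    · rw [← h0, Real.zero_rpow (by linarith)]; simp
    rcases lt_or_ge κ (h x) with hk | hk
    · refine le_trans ?_ le_self_add
      apply ENNReal.ofReal_le_ofReal
      exact Real.rpow_le_rpow_of_nonpos hκ0 hk.le (by linarith)
    · obtain ⟨n, hn1, hn2⟩ := dyadic_exists κ (h x) hp hk
      refine le_trans ?_ le_add_self
      refine le_trans ?_ (ENNReal.le_tsum n)
      rw [Set.indicator_of_mem (hz n ⟨hx, hn2⟩)]
      apply ENNReal.ofReal_le_ofReal
      exact Real.rpow_le_rpow_of_nonpos (by positivity) hn1.le (by linarith)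
  refine (setLIntegral_mono' measurableSet_ball hptw).trans ?_
  rw [lintegral_add_left measurable_const, setLIntegral_const,
    lintegral_tsum (fun n => (measurable_const.indicator (hUm n)).aemeasurable)]
  have hb1 : ENNReal.ofReal (κ ^ (-(2*c))) * volume (Metric.ball x0 (ρ * r)) ≤
      ENNReal.ofReal (κ ^ (-(2*c)) * (r ^ 2 * Real.pi)) := by
    rw [ENNReal.ofReal_mul (by positivity)]
    gcongr
    rw [← hvb x0 r hr.le]
    apply measure_mono
    apply Metric.ball_subset_ball
    nlinarith
  have hb2 : ∀ n : ℕ, ∫⁻ x in Metric.ball x0 (ρ * r), (U n).indicator (fun _ => ENNReal.ofReal ((κ / 2 ^ (n+1)) ^ (-(2*c)))) x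
      ≤ ENNReal.ofReal (κ ^ (-(2*c)) * (r ^ 2 * Real.pi) * ((N+1) * (2:ℝ) ^ (2*c)) * θ ^ n) := by
    intro n
    refine (setLIntegral_le_lintegral _ _).trans ?_
    rw [lintegral_indicator_const (hUm n)]
    refine (mul_le_mul_right (hUv n) _).trans ?_
    rw [← ENNReal.ofReal_mul (by positivity)]
    apply ENNReal.ofReal_le_ofReal
    apply le_of_eq
    have e1 : (κ / 2 ^ (n+1)) ^ (-(2*c)) = κ ^ (-(2*c)) * ((2:ℝ) ^ (2*c) * (2:ℝ) ^ (2 * c * n)) := by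
      rw [Real.div_rpow hκ0.le (by positivity), ← Real.rpow_natCast, ← Real.rpow_mul (by norm_num),
        div_eq_mul_inv, ← Real.rpow_neg (by norm_num), ← Real.rpow_add (by norm_num)]
      congr 2
      push_cast; ring
    have e2 : d n ^ 2 = (2:ℝ) ^ (-(2 * q * n)) := by
      rw [hd]; simp only
      rw [← Real.rpow_natCast, ← Real.rpow_mul (by norm_num)]
      congr 1; push_cast; ring
    have e3 : θ ^ n = (2:ℝ) ^ (2 * c * n) * (2:ℝ) ^ (-(2 * q * n)) := by
      rw [hθ, ← Real.rpow_natCast, ← Real.rpow_mul (by norm_num), ← Real.rpow_add (by norm_num)]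
      congr 1; ring
    rw [e1, e3, mul_pow, e2]
    ring
  refine (add_le_add hb1 (ENNReal.tsum_le_tsum hb2)).trans ?_
  rw [← ENNReal.ofReal_tsum_of_nonneg (fun n => by positivity) (hgs.mul_left _),
    ← ENNReal.ofReal_add (by positivity) (tsum_nonneg fun n => by positivity), tsum_mul_left]
  apply ENNReal.ofReal_le_ofReal
  apply le_of_eq
  have e4 : κ ^ (-(2*c)) = Λ ^ (-(2*c)) * (2 * C) ^ (2*c) := by
    rw [hκ, Real.div_rpow hΛ.le (by positivity), Real.rpow_neg (x := 2 * C) (by positivity), div_inv_eq_mul]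
  rw [e4, hG]
  ring

lemma annulus_int (F : ℂ → ℂ → ℂ) (k l : ℕ) (c R ρ C : ℝ) (hc : 0 < c) (hck : c * k < 1) (hcl : c * l < 1)
    (hρ0 : 0 < ρ) (hρ : ρ ≤ 1/2) (hC : 0 < C)
    (key : ∀ (x y : ℂ), ‖x‖ ≤ R → ‖y‖ ≤ R → ∀ (z : ℕ → ℂ) (ε d : ℝ), (∀ i, ‖z i - 1‖ ≤ ρ) → 0 < d → d ≤ 1 →
        (∀ i ≤ (k+l)/2, ∀ i' ≤ (k+l)/2, i ≠ i' → d ≤ ‖z i - z i'‖) →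
        (∀ i ≤ (k+l)/2, ‖F (x * z i) (y / z i)‖ ≤ ε) →
        ‖x‖ ^ k * d ^ ((k+l)/2) ≤ C * ε ∧ ‖y‖ ^ l * d ^ ((k+l)/2) ≤ C * ε) :
    ∃ M : ℝ, 0 < M ∧ ∀ (t : ℂ) (r Λ : ℝ), 0 < r → r ≤ R → 2 * ‖t‖ / r ≤ R → 0 < Λ →
      (Λ ≤ (r/2)^k ∨ Λ ≤ (‖t‖ / r) ^ l) →
      ∫⁻ x in {x : ℂ | r / 2 ≤ ‖x‖ ∧ ‖x‖ ≤ r}, ENNReal.ofReal (‖F x (t / x)‖ ^ (-(2 * c))) ≤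
        ENNReal.ofReal (M * (r ^ 2 * Λ ^ (-(2*c)))) := by
  obtain ⟨N, hN⟩ : ∃ N, N = (k+l)/2 := ⟨_, rfl⟩
  rw [← hN] at key
  have hcN : c * N < 1 := by
    have h2 : (2 * N : ℝ) ≤ k + l := by exact_mod_cast (show 2 * N ≤ k + l by omega)
    nlinarith
  obtain ⟨q, hcq, hqN⟩ : ∃ q : ℝ, c < q ∧ q * N ≤ 1 := by
    rcases Nat.eq_zero_or_pos N with h | h
    · exact ⟨c+1, by linarith, by simp [h]⟩
    · have h' : (0:ℝ) < N := by exact_mod_cast h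
      exact ⟨1 / N, by rwa [lt_div_iff₀ h'], by field_simp; exact le_rfl⟩
  obtain ⟨K, hK, hloc⟩ := local_int c q C (ρ/2) hc hcq N hqN hC (by linarith)
  have hcomp : IsCompact {ζ : ℂ | 1/2 ≤ ‖ζ‖ ∧ ‖ζ‖ ≤ 1} := by
    apply Metric.isCompact_of_isClosed_isBounded
    · exact (isClosed_le continuous_const continuous_norm).inter (isClosed_le continuous_norm continuous_const)
    · apply (Metric.isBounded_closedBall (x := (0:ℂ)) (r := 1)).subset
      intro x hx
      simpa using hx.2
  obtain ⟨Z, hZs, hZf, hZc⟩ := hcomp.finite_cover_balls (e := ρ/2) (by positivity)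
  have := hZf.fintype
  refine ⟨(Fintype.card Z + 1) * K, by positivity, ?_⟩
  intro t r Λ hr hrR htr hΛ hΛ'
  have hsub : {x : ℂ | r / 2 ≤ ‖x‖ ∧ ‖x‖ ≤ r} ⊆ ⋃ ζ : Z, Metric.ball ((r:ℂ) * ζ) (ρ/2 * r) := by
    intro x hx
    have hrn : ‖(r:ℂ)‖ = r := by rw [Complex.norm_real, Real.norm_of_nonneg hr.le]
    have hr0 : (r:ℂ) ≠ 0 := by exact_mod_cast hr.ne'
    have hx' : x / r ∈ {ζ : ℂ | 1/2 ≤ ‖ζ‖ ∧ ‖ζ‖ ≤ 1} := by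
      simp only [Set.mem_ofPred_eq, norm_div, hrn] at hx ⊢
      rw [le_div_iff₀ hr, div_le_iff₀ hr]
      exact ⟨by linarith [hx.1], by linarith [hx.2]⟩
    have := hZc hx'
    simp only [Set.mem_iUnion] at this
    obtain ⟨ζ, hζ, hb⟩ := this
    refine Set.mem_iUnion.2 ⟨⟨ζ, hζ⟩, ?_⟩
    rw [mem_ball_iff_norm] at hb ⊢
    have e : x - (r:ℂ) * ζ = (x / r - ζ) * r := by field_simp
    simp only
    rw [e, norm_mul, hrn]
    gcongr
  have hone : ∀ ζ : Z, ∫⁻ x in Metric.ball ((r:ℂ) * ζ) (ρ/2 * r), ENNReal.ofReal (‖F x (t / x)‖ ^ (-(2 * c)))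
      ≤ ENNReal.ofReal (K * (r ^ 2 * Λ ^ (-(2*c)))) := by
    rintro ⟨ζ, hζ⟩
    have hζ' := hZs hζ
    apply hloc (fun x => ‖F x (t/x)‖) _ r Λ (fun x => norm_nonneg _) hr hΛ
    intro z ε d hz hd0 hd1 hsep hsm
    simp only at hz
    set x0 : ℂ := (r:ℂ) * ζ with hx0
    have hnx : ‖x0‖ = r * ‖ζ‖ := by rw [hx0, norm_mul, Complex.norm_real, Real.norm_of_nonneg hr.le]
    have hx1 : r / 2 ≤ ‖x0‖ := by rw [hnx]; nlinarith [hζ'.1]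
    have hx2 : ‖x0‖ ≤ r := by rw [hnx]; nlinarith [hζ'.2]
    have hxp : 0 < ‖x0‖ := by linarith
    have hx00 : x0 ≠ 0 := norm_pos_iff.1 hxp
    have hy1 : ‖t / x0‖ ≤ R := by
      refine le_trans ?_ htr
      rw [norm_div, div_le_div_iff₀ hxp hr]
      nlinarith [norm_nonneg t]
    have hy2 : ‖t‖ / r ≤ ‖t / x0‖ := by
      rw [norm_div]; gcongr
    have := key x0 (t / x0) (hx2.trans hrR) hy1 (fun i => if i ≤ N then z i / x0 else 1) ε d ?_ hd0 hd1 ?_ ?_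
    · rcases hΛ' with h | h
      · refine le_trans ?_ this.1
        gcongr
        exact h.trans (by gcongr)
      · refine le_trans ?_ this.2
        gcongr
        exact h.trans (by gcongr)
    · intro i
      split_ifs with hi
      · have h1 := hz i hi
        rw [mem_ball_iff_norm] at h1
        rw [div_sub_one hx00, norm_div, div_le_iff₀ hxp]
        nlinarith
      · simp [hρ0.le]
    · intro i hi i' hi' hne
      simp only [hi, hi', if_true]
      rw [← sub_div, norm_div, le_div_iff₀ hxp]
      have := hsep i hi i' hi' hne
      nlinarith
    · intro i hi
      simp only [hi, if_true]
      rw [mul_div_cancel₀ _ hx00, div_div_div_cancel_right₀ hx00]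
      exact hsm i hi
  refine (lintegral_mono_set hsub).trans ((lintegral_iUnion_le _ _).trans ?_)
  refine (ENNReal.tsum_le_tsum hone).trans ?_
  rw [tsum_fintype, Finset.sum_const, nsmul_eq_mul, ← ENNReal.ofReal_natCast, ← ENNReal.ofReal_mul (by positivity),
    Finset.card_univ]
  apply ENNReal.ofReal_le_ofReal
  have : 0 ≤ K * (r ^ 2 * Λ ^ (-(2*c))) := by positivity
  nlinarith

lemma geom_aux (P c : ℝ) (k : ℕ) (hP : 0 < P) (hck : c * k < 1) :
    Summable fun n : ℕ => (P / 2 ^ (n+1)) ^ 2 * ((P / 2 ^ (n+1)) ^ k) ^ (-(2*c)) := by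
  have h : ∀ n : ℕ, (P / 2 ^ (n+1)) ^ 2 * ((P / 2 ^ (n+1)) ^ k) ^ (-(2*c)) =
      (P/2) ^ (2 - 2 * (c * k)) * ((1/2 : ℝ) ^ (2 - 2 * (c * k))) ^ n := by
    intro n
    have hu : 0 < P / 2 ^ (n+1) := by positivity
    rw [← Real.rpow_natCast _ k, ← Real.rpow_natCast _ 2, ← Real.rpow_mul hu.le, ← Real.rpow_add hu,
      show P / 2 ^ (n+1) = (P/2) * (1/2) ^ n by rw [pow_succ, one_div, inv_pow]; field_simp,
      Real.mul_rpow (by positivity) (by positivity), ← Real.rpow_natCast _ n, ← Real.rpow_natCast _ n,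
      ← Real.rpow_mul (by positivity), ← Real.rpow_mul (by positivity)]
    congr 2
    · push_cast; ring
    · push_cast; ring
  simp_rw [h]
  apply Summable.mul_left
  apply summable_geometric_of_lt_one (by positivity)
  exact Real.rpow_lt_one (by norm_num) (by norm_num) (by linarith)

lemma weight_bound (A B : Set ℂ) (hA : MeasurableSet A) (hAB : A ⊆ B) (w g : ℂ → ℝ) (W b : ℝ)
    (hg : ∀ x, 0 ≤ g x) (hW : 0 ≤ W) (hw : ∀ x ∈ A, w x ≤ W)
    (hb : A.Nonempty → ∫⁻ x in B, ENNReal.ofReal (g x) ≤ ENNReal.ofReal b) :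
    ∫⁻ x in A, ENNReal.ofReal (w x * g x) ≤ ENNReal.ofReal (W * b) := by
  rcases A.eq_empty_or_nonempty with rfl | hne
  · simp
  calc ∫⁻ x in A, ENNReal.ofReal (w x * g x) ≤ ∫⁻ x in A, ENNReal.ofReal W * ENNReal.ofReal (g x) := by
        apply setLIntegral_mono' hA
        intro x hx
        rw [← ENNReal.ofReal_mul hW]
        exact ENNReal.ofReal_le_ofReal (mul_le_mul_of_nonneg_right (hw x hx) (hg x))
    _ = ENNReal.ofReal W * ∫⁻ x in A, ENNReal.ofReal (g x) := lintegral_const_mul' _ _ ENNReal.ofReal_ne_top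
    _ ≤ ENNReal.ofReal W * ENNReal.ofReal b := by
        gcongr
        exact (lintegral_mono_set hAB).trans (hb hne)
    _ = _ := (ENNReal.ofReal_mul hW).symm

lemma main_bound (R₀ : ℝ) (hR₀ : 0 < R₀) (a : ℕ → ℕ → ℂ) (F : ℂ → ℂ → ℂ)
    (hconv : ∀ x y : ℂ, ‖x‖ < R₀ → ‖y‖ < R₀ →
      Summable (fun mn : ℕ × ℕ => ‖a mn.1 mn.2‖ * ‖x‖ ^ mn.1 * ‖y‖ ^ mn.2))
    (hF : ∀ x y : ℂ, ‖x‖ < R₀ → ‖y‖ < R₀ →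
      F x y = ∑' mn : ℕ × ℕ, a mn.1 mn.2 * x ^ mn.1 * y ^ mn.2)
    (k l : ℕ) (hak : a k 0 ≠ 0) (hal : a 0 l ≠ 0)
    (c : ℝ) (hc0 : 0 < c) (hck : c * k < 1) (hcl : c * l < 1) :
    ∃ R₁ : ℝ, 0 < R₁ ∧ R₁ ≤ R₀ ∧ ∀ P : ℝ, 0 < P → P ≤ R₁ → ∃ M : ℝ, 0 ≤ M ∧ ∀ t : ℂ,
      ∫⁻ x in {x : ℂ | ‖t‖ / P < ‖x‖ ∧ ‖x‖ < P},
        ENNReal.ofReal ((1 + ‖t‖ ^ 2 / ‖x‖ ^ 4) * ‖F x (t / x)‖ ^ (-(2 * c))) ≤ ENNReal.ofReal M := by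
  obtain ⟨R, hR, hRR, ρ, hρ0, hρ, C, hC, key⟩ := key_sublevel R₀ hR₀ a F hconv hF k l hak hal
  obtain ⟨M, hM, hann⟩ := annulus_int F k l c R ρ C hc0 hck hcl hρ0 hρ hC key
  refine ⟨R/2, by positivity, by linarith, ?_⟩
  intro P hP hPR
  obtain ⟨u, hu⟩ : ∃ u : ℕ → ℝ, u = fun n => P / 2 ^ (n+1) := ⟨_, rfl⟩
  have hu0 : ∀ n, 0 < u n := fun n => by rw [hu]; positivity
  have h2u : ∀ n, P / 2 ^ n = 2 * u n := fun n => by rw [hu]; simp only; rw [pow_succ]; field_simp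
  have huP : ∀ n, 2 * u n ≤ P := fun n => by
    rw [← h2u]; exact div_le_self hP.le (one_le_pow₀ (by norm_num))
  have hsk := geom_aux P c k hP hck
  have hsl := geom_aux P c l hP hcl
  have hsk' : Summable fun n : ℕ => u n ^ 2 * (u n ^ k) ^ (-(2*c)) := by rw [hu]; exact hsk
  have hsl' : Summable fun n : ℕ => u n ^ 2 * (u n ^ l) ^ (-(2*c)) := by rw [hu]; exact hsl
  have hnn : ∀ (j n : ℕ), 0 ≤ u n ^ 2 * (u n ^ j) ^ (-(2*c)) := fun j n => by
    have := hu0 n; positivity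
  refine ⟨∑' n, (8 * M) * (u n ^ 2 * (u n ^ k) ^ (-(2*c))) + ∑' n, (32 * M) * (u n ^ 2 * (u n ^ l) ^ (-(2*c))), 
    add_nonneg (tsum_nonneg fun n => mul_nonneg (by positivity) (hnn k n)) (tsum_nonneg fun n => mul_nonneg (by positivity) (hnn l n)), ?_⟩
  intro t
  set O : ℕ → Set ℂ := fun n => {x | (2 * u n / 2 ≤ ‖x‖ ∧ ‖x‖ ≤ 2 * u n) ∧ ‖t‖ ≤ ‖x‖ ^ 2} with hO
  set I : ℕ → Set ℂ := fun n => {x | (‖t‖ / u n / 2 ≤ ‖x‖ ∧ ‖x‖ ≤ ‖t‖ / u n) ∧ (‖x‖ ^ 2 < ‖t‖ ∧ 0 < ‖x‖ ∧ ‖x‖ < P)} with hI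
  have hmle1 : ∀ s : ℝ, MeasurableSet {x : ℂ | s ≤ ‖x‖} := fun s => measurableSet_le measurable_const measurable_norm
  have hmle2 : ∀ s : ℝ, MeasurableSet {x : ℂ | ‖x‖ ≤ s} := fun s => measurableSet_le measurable_norm measurable_const
  have hmlt1 : ∀ s : ℝ, MeasurableSet {x : ℂ | s < ‖x‖} := fun s => measurableSet_lt measurable_const measurable_norm
  have hmlt2 : ∀ s : ℝ, MeasurableSet {x : ℂ | ‖x‖ < s} := fun s => measurableSet_lt measurable_norm measurable_const
  have hOm : ∀ n, MeasurableSet (O n) := fun n =>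
    ((hmle1 _).inter (hmle2 _)).inter (measurableSet_le measurable_const (measurable_norm.pow_const 2))
  have hIm : ∀ n, MeasurableSet (I n) := fun n =>
    ((hmle1 _).inter (hmle2 _)).inter ((measurableSet_lt (measurable_norm.pow_const 2) measurable_const).inter
      ((hmlt1 _).inter (hmlt2 _)))
  have hcov : {x : ℂ | ‖t‖ / P < ‖x‖ ∧ ‖x‖ < P} ⊆ (⋃ n, O n) ∪ (⋃ n, I n) := by
    rintro x ⟨hx1, hx2⟩
    have hx0 : 0 < ‖x‖ := lt_of_le_of_lt (by positivity) hx1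
    rcases le_or_gt ‖t‖ (‖x‖^2) with h | h
    · left
      obtain ⟨n, hn1, hn2⟩ := dyadic_exists P ‖x‖ hx0 hx2.le
      refine Set.mem_iUnion.2 ⟨n, ⟨?_, ?_⟩, h⟩
      · have : u n = P / 2 ^ (n+1) := by rw [hu]
        linarith
      · rw [← h2u]; exact hn2
    · right
      have ht : 0 < ‖t‖ := lt_of_le_of_lt (by positivity) h
      have hv : ‖t‖ / ‖x‖ ≤ P := by
        rw [div_lt_iff₀ hP] at hx1
        rw [div_le_iff₀ hx0]; linarith
      obtain ⟨n, hn1, hn2⟩ := dyadic_exists P (‖t‖ / ‖x‖) (by positivity) hv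
      have hun : u n = P / 2 ^ (n+1) := by rw [hu]
      have hup := hu0 n
      rw [← hun, lt_div_iff₀ hx0] at hn1
      rw [h2u, div_le_iff₀ hx0] at hn2
      refine Set.mem_iUnion.2 ⟨n, ⟨?_, ?_⟩, h, hx0, hx2⟩
      · rw [div_div, div_le_iff₀ (by positivity)]; linarith
      · rw [le_div_iff₀ hup]; linarith
  have hOb : ∀ n, ∫⁻ x in O n, ENNReal.ofReal ((1 + ‖t‖ ^ 2 / ‖x‖ ^ 4) * ‖F x (t / x)‖ ^ (-(2 * c))) ≤
      ENNReal.ofReal ((8 * M) * (u n ^ 2 * (u n ^ k) ^ (-(2*c)))) := by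
    intro n
    have hup := hu0 n
    have := weight_bound (O n) {x : ℂ | 2 * u n / 2 ≤ ‖x‖ ∧ ‖x‖ ≤ 2 * u n} (hOm n) (fun x hx => hx.1)
      (fun x => 1 + ‖t‖ ^ 2 / ‖x‖ ^ 4) (fun x => ‖F x (t / x)‖ ^ (-(2 * c))) 2
      (M * ((2 * u n) ^ 2 * (u n ^ k) ^ (-(2*c)))) (fun x => by positivity) (by norm_num) ?_ ?_
    · refine this.trans (le_of_eq ?_)
      congr 1; ring
    · rintro x ⟨⟨hx1, hx2⟩, hx3⟩
      have hx0 : 0 < ‖x‖ := by linarith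
      have : ‖t‖ ^ 2 / ‖x‖ ^ 4 ≤ 1 := by
        rw [div_le_one (by positivity)]
        calc ‖t‖ ^ 2 ≤ (‖x‖ ^ 2) ^ 2 := by gcongr
          _ = _ := by ring
      linarith
    · rintro ⟨x, ⟨hx1, hx2⟩, hx3⟩
      have hPn := huP n
      apply hann t (2 * u n) (u n ^ k) (by positivity) (by linarith) _ (by positivity)
      · left
        apply le_of_eq
        congr 1; ring
      · rw [div_le_iff₀ (by positivity)]
        have : ‖x‖ ^ 2 ≤ (2 * u n) ^ 2 := by gcongr
        nlinarith
  have hIb : ∀ n, ∫⁻ x in I n, ENNReal.ofReal ((1 + ‖t‖ ^ 2 / ‖x‖ ^ 4) * ‖F x (t / x)‖ ^ (-(2 * c))) ≤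
      ENNReal.ofReal ((32 * M) * (u n ^ 2 * (u n ^ l) ^ (-(2*c)))) := by
    intro n
    have hup := hu0 n
    rcases (norm_nonneg t).eq_or_lt with ht | ht
    · have : I n = ∅ := by
        ext x
        simp only [Set.mem_empty_iff_false, iff_false]
        rintro ⟨-, h, -, -⟩
        rw [← ht] at h
        exact absurd h (not_lt.2 (by positivity))
      rw [this]; simp
    set s := ‖t‖ / u n with hs
    have hsp : 0 < s := by positivity
    have hus : ‖t‖ = u n * s := by rw [hs]; field_simp
    have := weight_bound (I n) {x : ℂ | s / 2 ≤ ‖x‖ ∧ ‖x‖ ≤ s} (hIm n) (fun x hx => hx.1)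
      (fun x => 1 + ‖t‖ ^ 2 / ‖x‖ ^ 4) (fun x => ‖F x (t / x)‖ ^ (-(2 * c))) (32 * ‖t‖ ^ 2 / s ^ 4)
      (M * (s ^ 2 * (u n ^ l) ^ (-(2*c)))) (fun x => by positivity) (by positivity) ?_ ?_
    · refine this.trans (le_of_eq ?_)
      congr 1
      rw [hus]
      field_simp
    · rintro x ⟨⟨hx1, hx2⟩, hx3, hx0, hx4⟩
      have h1 : 1 ≤ ‖t‖ ^ 2 / ‖x‖ ^ 4 := by
        rw [one_le_div (by positivity)]
        calc ‖x‖ ^ 4 = (‖x‖ ^ 2) ^ 2 := by ring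
          _ ≤ _ := by gcongr
      have h2 : ‖t‖ ^ 2 / ‖x‖ ^ 4 ≤ ‖t‖ ^ 2 / (s / 2) ^ 4 := by gcongr
      have h3 : ‖t‖ ^ 2 / (s / 2) ^ 4 = 16 * ‖t‖ ^ 2 / s ^ 4 := by field_simp; norm_num
      have h4 : 32 * ‖t‖ ^ 2 / s ^ 4 = 2 * (16 * ‖t‖ ^ 2 / s ^ 4) := by ring
      linarith
    · rintro ⟨x, ⟨hx1, hx2⟩, hx3, hx0, hx4⟩
      have hPn := huP n
      have e : ‖t‖ / s = u n := by rw [hus]; field_simp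
      apply hann t s (u n ^ l) hsp (by linarith) _ (by positivity)
      · right
        rw [e]
      · rw [mul_div_assoc, e]; linarith
  refine (lintegral_mono_set hcov).trans ((lintegral_union_le _ _ _).trans ?_)
  rw [ENNReal.ofReal_add (tsum_nonneg fun n => mul_nonneg (by positivity) (hnn k n)) (tsum_nonneg fun n => mul_nonneg (by positivity) (hnn l n)),
    ENNReal.ofReal_tsum_of_nonneg (fun n => mul_nonneg (by positivity) (hnn k n)) (hsk'.mul_left _),
    ENNReal.ofReal_tsum_of_nonneg (fun n => mul_nonneg (by positivity) (hnn l n)) (hsl'.mul_left _)]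
  exact add_le_add ((lintegral_iUnion_le _ _).trans (ENNReal.tsum_le_tsum hOb))
    ((lintegral_iUnion_le _ _).trans (ENNReal.tsum_le_tsum hIb))

/-- Uniform upper bounds for integrals along the fibers of `π(x,y) = xy`:
if `F(·,0)` and `F(0,·)` vanish to orders exactly `k` and `l` at the origin and
`c·k < 1`, `c·l < 1`, then there exist `R ∈ (0,R₀]`, `δ > 0` and `M > 0` with
`K_t(R) ≤ M` whenever `|t| ≤ δ`. -/
theorem uniform_bound_of_fiber_integrals
    (R₀ : ℝ) (hR₀ : 0 < R₀) (a : ℕ → ℕ → ℂ) (F : ℂ → ℂ → ℂ)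
    (hconv : ∀ x y : ℂ, ‖x‖ < R₀ → ‖y‖ < R₀ →
      Summable (fun mn : ℕ × ℕ => ‖a mn.1 mn.2‖ * ‖x‖ ^ mn.1 * ‖y‖ ^ mn.2))
    (hF : ∀ x y : ℂ, ‖x‖ < R₀ → ‖y‖ < R₀ →
      F x y = ∑' mn : ℕ × ℕ, a mn.1 mn.2 * x ^ mn.1 * y ^ mn.2)
    (k l : ℕ)
    (hak : a k 0 ≠ 0) (hkmin : ∀ m : ℕ, m < k → a m 0 = 0)
    (hal : a 0 l ≠ 0) (hlmin : ∀ n : ℕ, n < l → a 0 n = 0)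
    (c : ℝ) (hc0 : 0 < c) (hck : c * k < 1) (hcl : c * l < 1) :
    ∃ R : ℝ, 0 < R ∧ R ≤ R₀ ∧ ∃ δ : ℝ, 0 < δ ∧ ∃ M : ℝ, 0 < M ∧
      ∀ t : ℂ, ‖t‖ ≤ δ → fiberIntegral F c R t ≤ ENNReal.ofReal M := by
  obtain ⟨R₁, hR₁, hR₁₀, h1⟩ := main_bound R₀ hR₀ a F hconv hF k l hak hal c hc0 hck hcl
  obtain ⟨R₂, hR₂, hR₂₀, h2⟩ := main_bound R₀ hR₀ (fun m n => a n m) (fun x y => F y x)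
    (by
      intro x y hx hy
      have := (Equiv.prodComm ℕ ℕ).summable_iff.2 (hconv y x hy hx)
      refine this.congr (fun mn => ?_)
      simp only [Function.comp_apply, Equiv.prodComm_apply, Prod.fst_swap, Prod.snd_swap]
      ring)
    (by
      intro x y hx hy
      rw [hF y x hy hx, ← (Equiv.prodComm ℕ ℕ).tsum_eq]
      refine tsum_congr (fun mn => ?_)
      simp only [Equiv.prodComm_apply, Prod.fst_swap, Prod.snd_swap]
      ring) l k hal hak c hc0 hcl hck
  obtain ⟨R, hR⟩ : ∃ R, R = min R₁ R₂ := ⟨_, rfl⟩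
  have hR0 : 0 < R := by rw [hR]; exact lt_min hR₁ hR₂
  have hRa : R ≤ R₁ := by rw [hR]; exact min_le_left _ _
  have hRb : R ≤ R₂ := by rw [hR]; exact min_le_right _ _
  obtain ⟨M1, hM1, h1⟩ := h1 R hR0 hRa
  obtain ⟨M2, hM2, h2⟩ := h2 R hR0 hRb
  refine ⟨R, hR0, hRa.trans hR₁₀, 1, one_pos, M1 + M2 + 1, by positivity, ?_⟩
  intro t _
  unfold fiberIntegral
  split_ifs with ht
  · have e1 := h1 0
    have e2 := h2 0
    simp only [norm_zero, zero_div, ne_eq, OfNat.ofNat_ne_zero, not_false_eq_true, zero_pow, add_zero, one_mul] at e1 e2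
    refine (add_le_add e1 e2).trans ?_
    rw [← ENNReal.ofReal_add hM1 hM2]
    exact ENNReal.ofReal_le_ofReal (by linarith)
  · exact (h1 t).trans (ENNReal.ofReal_le_ofReal (by linarith))
end

section
/- Let n ∈ ℕ and let α ∈ ℝ with 0 < α < 1. The function g : ℂ → ℝ given by g(z) = |z|^{n+α} is n times continuously differentiable in the real sense (ContDiff ℝ n), and for every compact set K ⊆ ℂ there is a constant C ≥ 0 such that the n-th iterated derivative of g is α-Hölder continuous on K with constant C. In other words, |z|^{n+α} ∈ C^{n,α}_loc(ℂ). -/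
open Filter Topology

lemma absPow_contDiffAt (s : ℝ) (k : WithTop ℕ∞) {z : ℂ} (hz : z ≠ 0) :
    ContDiffAt ℝ k (fun z : ℂ => ‖z‖ ^ s) z :=
  (contDiffAt_norm ℝ hz).rpow_const_of_ne (norm_ne_zero_iff.2 hz)

lemma absPow_diffAt (s : ℝ) (k : ℕ) {z : ℂ} (hz : z ≠ 0) :
    DifferentiableAt ℝ (iteratedFDeriv ℝ k (fun z : ℂ => ‖z‖ ^ s)) z :=
  (absPow_contDiffAt s (k + 1 : ℕ) hz).differentiableAt_iteratedFDeriv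
    (by exact_mod_cast Nat.lt_succ_self k)

lemma absPow_bound (s : ℝ) (k : ℕ) : ∃ C : ℝ, 0 ≤ C ∧ ∀ z : ℂ, z ≠ 0 →
    ‖iteratedFDeriv ℝ k (fun z : ℂ => ‖z‖ ^ s) z‖ ≤ C * ‖z‖ ^ (s - k) := by
  have hc : ContinuousOn (iteratedFDeriv ℝ k (fun z : ℂ => ‖z‖ ^ s)) (Metric.sphere (0:ℂ) 1) := by
    intro z hz
    have hz0 : z ≠ 0 := by
      rintro rfl
      simp at hz
    exact (absPow_diffAt s k hz0).continuousAt.continuousWithinAt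
  obtain ⟨C, hC⟩ := (isCompact_sphere (0:ℂ) 1).exists_bound_of_continuousOn hc
  refine ⟨C, (norm_nonneg _).trans (hC 1 (by simp)), fun z hz => ?_⟩
  set t : ℝ := ‖z‖ with ht
  have htp : 0 < t := norm_pos_iff.2 hz
  have hti : t⁻¹ ≠ 0 := (inv_pos.2 htp).ne'
  let e : ℂ ≃L[ℝ] ℂ := ContinuousLinearEquiv.smulLeft (Units.mk0 t⁻¹ hti)
  have he : ∀ x, e x = t⁻¹ • x := fun x => rfl
  have hez : ‖e z‖ = 1 := by
    rw [he, norm_smul, norm_inv, Real.norm_of_nonneg htp.le, ← ht, inv_mul_cancel₀ htp.ne']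
  have hez0 : e z ≠ 0 := by
    rw [← norm_ne_zero_iff, hez]; exact one_ne_zero
  have hg : (fun z : ℂ => ‖z‖ ^ s) = (t ^ s) • ((fun z : ℂ => ‖z‖ ^ s) ∘ e) := by
    funext x
    simp only [Pi.smul_apply, Function.comp_apply, smul_eq_mul, he]
    rw [norm_smul, norm_inv, Real.norm_of_nonneg htp.le,
      ← Real.mul_rpow htp.le (by positivity), mul_inv_cancel_left₀ htp.ne']
  have hcomp : ContDiffAt ℝ k ((fun z : ℂ => ‖z‖ ^ s) ∘ e) z :=
    (absPow_contDiffAt s k hez0).comp z e.contDiff.contDiffAt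
  have h2 : iteratedFDeriv ℝ k ((fun z : ℂ => ‖z‖ ^ s) ∘ e) z =
      (iteratedFDeriv ℝ k (fun z : ℂ => ‖z‖ ^ s) (e z)).compContinuousLinearMap
        fun _ => (e : ℂ →L[ℝ] ℂ) := by
    have := e.iteratedFDerivWithin_comp_right (fun z : ℂ => ‖z‖ ^ s)
      (uniqueDiffOn_univ (𝕜 := ℝ) (E := ℂ)) (Set.mem_univ (e z)) k
    simpa only [Set.preimage_univ, iteratedFDerivWithin_univ] using this
  have hen : ‖(e : ℂ →L[ℝ] ℂ)‖ ≤ t⁻¹ := by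
    refine ContinuousLinearMap.opNorm_le_bound _ (inv_pos.2 htp).le fun x => ?_
    rw [ContinuousLinearEquiv.coe_coe, he, norm_smul, norm_inv, Real.norm_of_nonneg htp.le]
  have hC0 : 0 ≤ C := (norm_nonneg _).trans (hC 1 (by simp))
  rw [hg, iteratedFDeriv_const_smul_apply hcomp, h2, norm_smul,
    Real.norm_of_nonneg (Real.rpow_nonneg htp.le s)]
  calc t ^ s * _ ≤ t ^ s * (C * (t⁻¹) ^ k) := by
        gcongr
        refine (ContinuousMultilinearMap.norm_compContinuousLinearMap_le _ _).trans ?_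
        simp only [Finset.prod_const, Finset.card_univ, Fintype.card_fin]
        gcongr
        exact hC _ (by simp [hez])
    _ = C * t ^ (s - k) := by
        rw [Real.rpow_sub htp, Real.rpow_natCast, inv_pow]; ring

lemma hasFDerivAt_zero_of_bound {E : Type*} [NormedAddCommGroup E] [NormedSpace ℝ E]
    {F : ℂ → E} {C r : ℝ} (hr : 1 < r) (h : ∀ z, ‖F z‖ ≤ C * ‖z‖ ^ r) :
    HasFDerivAt F (0 : ℂ →L[ℝ] E) 0 := by
  have h0 : F 0 = 0 := by
    have := h 0
    rw [norm_zero, Real.zero_rpow (by linarith), mul_zero] at this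
    exact norm_le_zero_iff.1 this
  rw [hasFDerivAt_iff_tendsto]
  have ht : Tendsto (fun z : ℂ => C * ‖z‖ ^ (r - 1)) (𝓝 0) (𝓝 0) := by
    have : Continuous (fun z : ℂ => C * ‖z‖ ^ (r - 1)) :=
      continuous_const.mul (continuous_norm.rpow_const fun _ => Or.inr (by linarith))
    have h := this.tendsto 0
    simpa [Real.zero_rpow (sub_pos.2 hr).ne'] using h
  refine squeeze_zero (fun z => by positivity) (fun z => ?_) ht
  simp only [sub_zero, h0, _root_.zero_apply]
  rcases eq_or_ne z 0 with rfl | hz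
  · simp [h0, Real.zero_rpow (sub_pos.2 hr).ne']
  · have hp : 0 < ‖z‖ := norm_pos_iff.2 hz
    calc ‖z‖⁻¹ * ‖F z‖ ≤ ‖z‖⁻¹ * (C * ‖z‖ ^ r) := by gcongr; exact h z
      _ = C * ‖z‖ ^ (r - 1) := by rw [Real.rpow_sub hp, Real.rpow_one]; ring

lemma continuousAt_zero_of_bound {E : Type*} [NormedAddCommGroup E]
    {F : ℂ → E} {C r : ℝ} (hr : 0 < r) (h : ∀ z, ‖F z‖ ≤ C * ‖z‖ ^ r) :
    ContinuousAt F 0 := by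
  have h0 : F 0 = 0 := by
    have := h 0
    rw [norm_zero, Real.zero_rpow hr.ne', mul_zero] at this
    exact norm_le_zero_iff.1 this
  have ht : Tendsto (fun z : ℂ => C * ‖z‖ ^ r) (𝓝 0) (𝓝 0) := by
    have : Continuous (fun z : ℂ => C * ‖z‖ ^ r) :=
      continuous_const.mul (continuous_norm.rpow_const fun _ => Or.inr hr.le)
    have h := this.tendsto 0
    simpa [Real.zero_rpow hr.ne'] using h
  rw [ContinuousAt, h0]
  exact squeeze_zero_norm h ht

lemma bound_all {E : Type*} [NormedAddCommGroup E] {F : ℂ → E} {C r : ℝ} (hr : 0 < r)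
    (h0 : F 0 = 0) (h : ∀ z, z ≠ 0 → ‖F z‖ ≤ C * ‖z‖ ^ r) : ∀ z, ‖F z‖ ≤ C * ‖z‖ ^ r := by
  intro z
  rcases eq_or_ne z 0 with rfl | hz
  · simp [h0, Real.zero_rpow hr.ne']
  · exact h z hz

lemma absPow_zero (s : ℝ) (k : ℕ) (hk : (k : ℝ) < s) :
    iteratedFDeriv ℝ k (fun z : ℂ => ‖z‖ ^ s) 0 = 0 := by
  induction k with
  | zero =>
    ext m
    have : s ≠ 0 := by simpa using hk.ne'
    simp [Real.zero_rpow this]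
  | succ k ih =>
    push_cast at hk
    obtain ⟨C, -, hC⟩ := absPow_bound s k
    have h := hasFDerivAt_zero_of_bound (by linarith)
      (bound_all (by linarith) (ih (by linarith)) hC)
    rw [← norm_eq_zero, ← norm_fderiv_iteratedFDeriv, h.fderiv]
    exact ContinuousLinearMap.opNorm_zero

theorem holder_aux {E : Type*} [NormedAddCommGroup E] [NormedSpace ℝ E]
    {F : ℂ → E} {A B α : ℝ} (hα0 : 0 < α) (hα1 : α < 1) (hA : 0 ≤ A) (hB : 0 ≤ B)
    (h : ∀ z, ‖F z‖ ≤ A * ‖z‖ ^ α)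
    (hd : ∀ z, z ≠ 0 → DifferentiableAt ℝ F z)
    (hb : ∀ z, z ≠ 0 → ‖fderiv ℝ F z‖ ≤ B * ‖z‖ ^ (α - 1)) (p q : ℂ) :
    ‖F p - F q‖ ≤ (2 * A * 3 ^ α + B) * ‖p - q‖ ^ α := by
  have hrn : 0 ≤ ‖p - q‖ ^ α := Real.rpow_nonneg (norm_nonneg _) _
  rcases le_or_gt (‖p‖ / 2) ‖p - q‖ with hpq | hpq
  · have hq : ‖q‖ ≤ ‖p‖ + ‖p - q‖ := by
      have := norm_sub_le p (p - q)
      simpa using this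
    have h1 : ‖p‖ ^ α ≤ 3 ^ α * ‖p - q‖ ^ α := by
      rw [← Real.mul_rpow (by norm_num) (norm_nonneg _)]
      exact Real.rpow_le_rpow (norm_nonneg _) (by linarith [norm_nonneg (p - q)]) hα0.le
    have h2 : ‖q‖ ^ α ≤ 3 ^ α * ‖p - q‖ ^ α := by
      rw [← Real.mul_rpow (by norm_num) (norm_nonneg _)]
      exact Real.rpow_le_rpow (norm_nonneg _) (by linarith [norm_nonneg (p - q)]) hα0.le
    calc ‖F p - F q‖ ≤ ‖F p‖ + ‖F q‖ := norm_sub_le _ _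
      _ ≤ A * (3 ^ α * ‖p - q‖ ^ α) + A * (3 ^ α * ‖p - q‖ ^ α) :=
          add_le_add ((h p).trans (by gcongr)) ((h q).trans (by gcongr))
      _ ≤ _ := by nlinarith [mul_nonneg hB hrn]
  · have hp : 0 < ‖p‖ / 2 := (norm_nonneg _).trans_lt hpq
    have hball : ∀ z ∈ Metric.ball p (‖p‖ / 2), ‖p‖ / 2 ≤ ‖z‖ ∧ z ≠ 0 := by
      intro z hz
      rw [mem_ball_iff_norm'] at hz
      have := norm_sub_norm_le p z
      have h3 : ‖p‖ / 2 ≤ ‖z‖ := by linarith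
      exact ⟨h3, norm_pos_iff.1 (hp.trans_le h3)⟩
    have hmv := (convex_ball p (‖p‖ / 2)).norm_image_sub_le_of_norm_fderiv_le (𝕜 := ℝ) (f := F)
      (C := B * (‖p‖ / 2) ^ (α - 1)) (x := q) (y := p)
      (fun z hz => hd z (hball z hz).2)
      (fun z hz => (hb z (hball z hz).2).trans (by
        gcongr ?_ * ?_
        exact Real.rpow_le_rpow_of_nonpos hp (hball z hz).1 (by linarith)))
      (by rwa [mem_ball_iff_norm']) (Metric.mem_ball_self hp)
    refine hmv.trans ?_
    rcases eq_or_ne p q with rfl | hne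
    · simp [Real.zero_rpow hα0.ne']
    have hpos : 0 < ‖p - q‖ := norm_pos_iff.2 (sub_ne_zero.2 hne)
    have h4 : (‖p‖ / 2) ^ (α - 1) ≤ ‖p - q‖ ^ (α - 1) :=
      Real.rpow_le_rpow_of_nonpos hpos hpq.le (by linarith)
    calc B * (‖p‖ / 2) ^ (α - 1) * ‖p - q‖ ≤ B * ‖p - q‖ ^ (α - 1) * ‖p - q‖ := by gcongr
      _ = B * ‖p - q‖ ^ α := by
          rw [Real.rpow_sub hpos, Real.rpow_one]; field_simp
      _ ≤ _ := by
          gcongr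
          have : 0 ≤ 2 * A * (3:ℝ) ^ α := by positivity
          linarith

/-- For every `n ∈ ℕ` and `0 < α < 1`, the function `z ↦ |z|^{n+α}` on `ℂ` is
`C^n` in the real sense and its `n`-th iterated derivative is `α`-Hölder
continuous on every compact set; i.e. `|z|^{n+α} ∈ C^{n,α}_loc(ℂ)`. -/
theorem absPow_contDiff_and_holder (n : ℕ) (α : ℝ) (hα0 : 0 < α) (hα1 : α < 1) :
    ContDiff ℝ n (fun z : ℂ => ‖z‖ ^ ((n : ℝ) + α)) ∧
    ∀ K : Set ℂ, IsCompact K → ∃ C : ℝ, 0 ≤ C ∧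
      ∀ p ∈ K, ∀ q ∈ K,
        ‖iteratedFDeriv ℝ n (fun z : ℂ => ‖z‖ ^ ((n : ℝ) + α)) p
          - iteratedFDeriv ℝ n (fun z : ℂ => ‖z‖ ^ ((n : ℝ) + α)) q‖
        ≤ C * ‖p - q‖ ^ α := by
  constructor
  · rw [contDiff_nat_iff_continuous_differentiable]
    constructor
    · intro m hm
      have hm' : (m : ℝ) ≤ n := by exact_mod_cast hm
      obtain ⟨C, -, hC⟩ := absPow_bound (n + α) m
      rw [continuous_iff_continuousAt]
      intro z
      rcases eq_or_ne z 0 with rfl | hz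
      · exact continuousAt_zero_of_bound (by linarith)
          (bound_all (by linarith) (absPow_zero _ m (by linarith)) hC)
      · exact (absPow_diffAt _ m hz).continuousAt
    · intro m hm z
      have hm' : (m : ℝ) + 1 ≤ n := by exact_mod_cast hm
      obtain ⟨C, -, hC⟩ := absPow_bound (n + α) m
      rcases eq_or_ne z 0 with rfl | hz
      · exact (hasFDerivAt_zero_of_bound (by linarith)
          (bound_all (by linarith) (absPow_zero _ m (by linarith)) hC)).differentiableAt
      · exact absPow_diffAt _ m hz
  · intro K _
    obtain ⟨A, hA, hA'⟩ := absPow_bound (n + α) n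
    obtain ⟨B, hB, hB'⟩ := absPow_bound (n + α) (n + 1)
    refine ⟨2 * A * 3 ^ α + B, by positivity, fun p _ q _ => ?_⟩
    have e1 : (n : ℝ) + α - n = α := by ring
    have e2 : (n : ℝ) + α - (n + 1 : ℕ) = α - 1 := by push_cast; ring
    rw [e1] at hA'
    rw [e2] at hB'
    refine holder_aux hα0 hα1 hA hB (bound_all hα0 (absPow_zero _ n (by linarith)) hA')
      (fun z hz => absPow_diffAt _ n hz) (fun z hz => ?_) p q
    rw [norm_fderiv_iteratedFDeriv]
    exact hB' z hz
end
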